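/- Let R be a commutative noetherian ring with identity, let a be a proper ideal of R with dim R/a = 2, and let M be a finitely generated R-module. Then the local cohomology module H^i_a(M) is a-cofinite for every i ∈ ℤ if and only if Hom_R(R/a, H^i_a(M)) is a finitely generated R-module for every i ∈ ℤ. -/

import Mathlib

universe u

open CategoryTheory

/-- `Ext^i_R(R/a, M)` as an `R`-module, for `M : ModuleCat R`. -/
noncomputable def extQuot {R : Type u} [CommRing R] (a : Ideal R) (i : ℕ)
    (M : ModuleCat.{u} R) : ModuleCat.{u} R :=
  ((Ext R (ModuleCat.{u} R) i).obj (Opposite.op (ModuleCat.of R (R ⧸ a)))).obj M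

/-- An `R`-module `M` is `a`-cofinite if `Supp M ⊆ V(a)` and `Ext^i_R(R/a, M)` is a
finitely generated `R`-module for every `i ≥ 0`. -/
def IsCofinite {R : Type u} [CommRing R] (a : Ideal R) (M : ModuleCat.{u} R) : Prop :=
  Module.support R M ⊆ PrimeSpectrum.zeroLocus (a : Set R) ∧
    ∀ i : ℕ, Module.Finite R (extQuot a i M)


namespace Bridge
variable {R : Type u} [CommRing R] {X X' Y : ModuleCat.{u} R}

/-- the map of Hom complexes -/
noncomputable def yMap (P : ProjectiveResolution X) (P' : ProjectiveResolution X')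
    (φ : P'.complex ⟶ P.complex) (Y : ModuleCat.{u} R) :
    P.complex.linearYonedaObj R Y ⟶ P'.complex.linearYonedaObj R Y :=
  (HomologicalComplex.unopFunctor _ _).map
    ((((linearYoneda R (ModuleCat.{u} R)).obj Y).rightOp.mapHomologicalComplex _).map φ).op

lemma yMap_f (P : ProjectiveResolution X) (P' : ProjectiveResolution X')
    (φ : P'.complex ⟶ P.complex) (n : ℕ) (f : P.complex.X n ⟶ Y) :
    ((yMap P P' φ Y).f n : _ ⟶ _) f = (φ.f n ≫ f : P'.complex.X n ⟶ Y) := rfl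

lemma iso_nat {V : Type*} [Category V] {A B C D : V} (e : A ≅ B) (e' : C ≅ D) (f : A ⟶ C)
    (g : B ⟶ D) (h : f ≫ e'.hom = e.hom ≫ g) : g ≫ e'.inv = e.inv ≫ f := by
  rw [Iso.comp_inv_eq, Category.assoc, h, Iso.inv_hom_id_assoc]

lemma chain_nat {V : Type*} [Category V] {A B C D E F : V} (f : A ⟶ B) (u : B ⟶ C) (v : C ⟶ D)
    (u' : A ⟶ E) (k : E ⟶ C) (v' : E ⟶ F) (m : F ⟶ D) (h1 : f ≫ u = u' ≫ k)
    (h2 : k ≫ v = v' ≫ m) : f ≫ (u ≫ v) = (u' ≫ v') ≫ m := by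
  rw [← Category.assoc, h1, Category.assoc, h2, Category.assoc]

lemma homologyUnop_naturality {V : Type*} [Category V] [Abelian V] {ι : Type*} {c : ComplexShape ι}
    {K L : HomologicalComplex Vᵒᵖ c} (φ : K ⟶ L) (i : ι) :
    (HomologicalComplex.homologyMap φ i).unop ≫ (HomologicalComplex.homologyUnop K i).inv =
      (HomologicalComplex.homologyUnop L i).inv ≫
        HomologicalComplex.homologyMap ((HomologicalComplex.unopFunctor _ _).map φ.op) i := by
  have h := HomologicalComplex.homologyOp_hom_naturality
    ((HomologicalComplex.unopFunctor _ _).map φ.op) i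
  have h2 := congrArg Quiver.Hom.unop h
  exact iso_nat (HomologicalComplex.homologyUnop L i) (HomologicalComplex.homologyUnop K i) _ _
    h2.symm

lemma isoExt_naturality (P : ProjectiveResolution X) (P' : ProjectiveResolution X') {g : X' ⟶ X}
    (φ : ProjectiveResolution.Hom P' P g) (n : ℕ) :
    ((Ext R (ModuleCat.{u} R) n).map g.op).app Y ≫ (P'.isoExt (R := R) n Y).hom =
      (P.isoExt (R := R) n Y).hom ≫ HomologicalComplex.homologyMap (yMap P P' φ.hom Y) n := by
  have h := ProjectiveResolution.isoLeftDerivedObj_inv_naturality g P' P φ.hom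
    (by simpa using φ.hom_f_zero_comp_π_f_zero) ((linearYoneda R (ModuleCat.{u} R)).obj Y).rightOp n
  have h2 := congrArg Quiver.Hom.unop h
  have h3 := homologyUnop_naturality
    ((((linearYoneda R (ModuleCat.{u} R)).obj Y).rightOp.mapHomologicalComplex _).map φ.hom) n
  exact chain_nat _ _ _ _ _ _ _ h2 h3

lemma extMk_smul (P : ProjectiveResolution X) {n : ℕ} (f : P.complex.X n ⟶ Y) (m : ℕ)
    (hm : n + 1 = m) (hf : P.complex.d m n ≫ f = 0) (r : R) :
    P.extMk (r • f) m hm (by simp [hf]) = r • P.extMk f m hm hf := by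
  rw [Abelian.Ext.smul_eq_comp_mk₀, ProjectiveResolution.extMk_comp_mk₀]
  simp

lemma extMk_zero_eq_zero (P : ProjectiveResolution X) (f : P.complex.X 0 ⟶ Y) 
    (hf : P.complex.d 1 0 ≫ f = 0) (h : P.extMk f 1 rfl hf = 0) : f = 0 := by
  simp only [← P.extEquivCohomologyClass.apply_eq_iff_eq,
    ProjectiveResolution.extEquivCohomologyClass_extMk, 
    ProjectiveResolution.extEquivCohomologyClass_zero,
    CochainComplex.HomComplex.CohomologyClass.mk_eq_zero_iff] at h
  rw [CochainComplex.HomComplex.Cocycle.toSingleMk_mem_coboundaries_iff _ _ _ _ _ 1 (by simp)] at h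
  obtain ⟨g, hg⟩ := h
  have h0 : Limits.IsZero (P.cochainComplex.X 1) :=
    CochainComplex.isZero_of_isStrictlyLE P.cochainComplex 0 1 (by lia)
  rw [h0.eq_of_src g 0, Limits.comp_zero] at hg
  rw [← cancel_epi (P.cochainComplexXIso (-(0:ℕ)) 0 rfl).hom]
  rw [← hg]; simp

noncomputable def cyc (P : ProjectiveResolution X) (Y : ModuleCat.{u} R) (n : ℕ)
    (z : (P.complex.linearYonedaObj R Y).cycles n) : P.complex.X n ⟶ Y :=
  (P.complex.linearYonedaObj R Y).iCycles n z

lemma cyc_d (P : ProjectiveResolution X) (Y : ModuleCat.{u} R) (n : ℕ)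
    (z : (P.complex.linearYonedaObj R Y).cycles n) :
    P.complex.d (n+1) n ≫ cyc P Y n z = 0 := by
  have := (P.complex.linearYonedaObj R Y).iCycles_d n (n+1)
  exact congrArg (fun f => f z) this

noncomputable def cycMap (P : ProjectiveResolution X) (Y : ModuleCat.{u} R) (n : ℕ) :
    (P.complex.linearYonedaObj R Y).cycles n →ₗ[R] Abelian.Ext X Y n where
  toFun z := P.extMk (cyc P Y n z) (n+1) rfl (cyc_d P Y n z)
  map_add' z w := by
    rw [P.add_extMk]
    congr 1
    exact map_add ((P.complex.linearYonedaObj R Y).iCycles n).hom z w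
  map_smul' r z := by
    rw [RingHom.id_apply, ← extMk_smul]
    congr 1
    exact map_smul ((P.complex.linearYonedaObj R Y).iCycles n).hom r z

lemma exists_cyc (P : ProjectiveResolution X) (Y : ModuleCat.{u} R) (n : ℕ)
    (f : P.complex.X n ⟶ Y) (hf : P.complex.d (n+1) n ≫ f = 0) : ∃ z, cyc P Y n z = f := by
  let k : ModuleCat.of R R ⟶ (P.complex.linearYonedaObj R Y).X n :=
    ModuleCat.ofHom (LinearMap.toSpanSingleton R (P.complex.X n ⟶ Y) f)
  have hk : k ≫ (P.complex.linearYonedaObj R Y).d n (n+1) = 0 := by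
    ext
    change P.complex.d (n+1) n ≫ ((1 : R) • f) = 0
    simp [hf]
  refine ⟨(P.complex.linearYonedaObj R Y).liftCycles k (n+1) (by simp) hk (1 : R), ?_⟩
  have := (P.complex.linearYonedaObj R Y).liftCycles_i k (n+1) (by simp) hk
  have h2 := congrArg (fun f => f (1 : R)) this
  refine Eq.trans h2 ?_
  change (1:R) • f = f
  simp

lemma cycMap_surj (P : ProjectiveResolution X) (Y : ModuleCat.{u} R) (n : ℕ) :
    Function.Surjective (cycMap P Y n) := by
  intro α
  obtain ⟨f, hf, rfl⟩ := P.extMk_surjective α (n+1) rfl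
  obtain ⟨z, rfl⟩ := exists_cyc P Y n f hf
  exact ⟨z, rfl⟩

lemma iCycles_inj (P : ProjectiveResolution X) (Y : ModuleCat.{u} R) (n : ℕ) :
    Function.Injective ((P.complex.linearYonedaObj R Y).iCycles n) :=
  (ModuleCat.mono_iff_injective _).1 inferInstance

lemma ker_homologyπ (P : ProjectiveResolution X) (Y : ModuleCat.{u} R) (n : ℕ) (z) :
    (P.complex.linearYonedaObj R Y).homologyπ n z = 0 ↔ cycMap P Y n z = 0 := by
  let K := P.complex.linearYonedaObj R Y
  have hex : ∀ i, (ComplexShape.up ℕ).prev n = i →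
      (K.homologyπ n z = 0 ↔ ∃ w, K.toCycles i n w = z) := by
    intro i hi
    have hcok := K.homologyIsCokernel i n hi
    have hE : (ShortComplex.mk (K.toCycles i n) (K.homologyπ n) (by simp)).Exact :=
      ShortComplex.exact_of_g_is_cokernel _ hcok
    have := (ShortComplex.ShortExact.moduleCat_exact_iff_function_exact _).1 hE z
    exact this
  refine (hex _ rfl).trans ?_
  cases n with
  | zero =>
    have h0 : K.toCycles ((ComplexShape.up ℕ).prev 0) 0 = 0 := by
      apply K.toCycles_eq_zero
      simp
    rw [h0]
    constructor
    · rintro ⟨w, rfl⟩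
      exact map_zero (cycMap P Y 0)
    · intro h
      refine ⟨0, ?_⟩
      apply iCycles_inj
      refine Eq.trans ?_ (extMk_zero_eq_zero P (cyc P Y 0 z) (cyc_d P Y 0 z) h).symm
      exact map_zero (K.iCycles 0).hom
  | succ n =>
    have hp : (ComplexShape.up ℕ).prev (n+1) = n := by simp
    rw [hp]
    refine Iff.trans ?_ (P.extMk_eq_zero_iff _ _ rfl (cyc_d P Y (n+1) z) n rfl).symm
    constructor
    · rintro ⟨w, rfl⟩
      refine ⟨w, ?_⟩
      exact (congrArg (fun f => f w) (K.toCycles_i n (n+1))).symm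
    · rintro ⟨w, hw⟩
      refine ⟨w, ?_⟩
      apply iCycles_inj
      refine Eq.trans ?_ hw
      exact (congrArg (fun f => f w) (K.toCycles_i n (n+1)))

noncomputable def homEquiv (P : ProjectiveResolution X) (Y : ModuleCat.{u} R) (n : ℕ) :
    (P.complex.linearYonedaObj R Y).homology n ≃ₗ[R] Abelian.Ext X Y n :=
  ((((P.complex.linearYonedaObj R Y).homologyπ n).hom.quotKerEquivOfSurjective
    ((ModuleCat.epi_iff_surjective _).1 inferInstance)).symm.trans
    (Submodule.quotEquivOfEq _ _ (by
      ext z; exact ker_homologyπ P Y n z))).trans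
    ((cycMap P Y n).quotKerEquivOfSurjective (cycMap_surj P Y n))

lemma homEquiv_π (P : ProjectiveResolution X) (Y : ModuleCat.{u} R) (n : ℕ) (z) :
    homEquiv P Y n ((P.complex.linearYonedaObj R Y).homologyπ n z) = cycMap P Y n z := by
  dsimp only [homEquiv, LinearEquiv.trans_apply]
  have : (((P.complex.linearYonedaObj R Y).homologyπ n).hom.quotKerEquivOfSurjective
    ((ModuleCat.epi_iff_surjective _).1 inferInstance)).symm
      ((P.complex.linearYonedaObj R Y).homologyπ n z) = Submodule.Quotient.mk z := by
    rw [LinearEquiv.symm_apply_eq]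
    rfl
  erw [this]
  rfl

noncomputable def equiv (X Y : ModuleCat.{u} R) (n : ℕ) :
    ((Ext R (ModuleCat.{u} R) n).obj (Opposite.op X)).obj Y ≃ₗ[R] Abelian.Ext X Y n :=
  (((projectiveResolution X).isoExt (R := R) n Y).toLinearEquiv).trans
    (homEquiv (projectiveResolution X) Y n)

lemma equiv_naturality (g : X' ⟶ X) (Y : ModuleCat.{u} R) (n : ℕ)
    (x : ((Ext R (ModuleCat.{u} R) n).obj (Opposite.op X)).obj Y) :
    equiv X' Y n (((Ext R (ModuleCat.{u} R) n).map g.op).app Y x) =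
      (Abelian.Ext.mk₀ g).comp (equiv X Y n x) (zero_add n) := by
  let P := projectiveResolution X
  let P' := projectiveResolution X'
  let φ : ProjectiveResolution.Hom P' P g := ⟨ProjectiveResolution.lift g P' P,
    ProjectiveResolution.lift_commutes_zero g P' P⟩
  have h := congrArg (fun f => f x) (isoExt_naturality (Y := Y) P P' φ n)
  change homEquiv P' Y n ((((Ext R (ModuleCat.{u} R) n).map g.op).app Y ≫ (P'.isoExt (R := R) n Y).hom) x) = _
  refine (congrArg (homEquiv P' Y n) h).trans ?_
  change homEquiv P' Y n (HomologicalComplex.homologyMap (yMap P P' φ.hom Y) n ((P.isoExt (R := R) n Y).hom x)) =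
    (Abelian.Ext.mk₀ g).comp (homEquiv P Y n ((P.isoExt (R := R) n Y).hom x)) (zero_add n)
  generalize (P.isoExt (R := R) n Y).hom x = w
  obtain ⟨z, rfl⟩ := (ModuleCat.epi_iff_surjective
    ((P.complex.linearYonedaObj R Y).homologyπ n)).1 inferInstance w
  have h1 := congrArg (fun f => f z) (HomologicalComplex.homologyπ_naturality (yMap P P' φ.hom Y) n)
  refine (congrArg (homEquiv P' Y n) h1).trans ?_
  refine (homEquiv_π P' Y n _).trans ?_
  rw [homEquiv_π]
  refine Eq.trans ?_ (ProjectiveResolution.mk₀_comp_extMk (cyc P Y n z) (n+1) rfl (cyc_d P Y n z) φ).symm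
  have hz : cyc P' Y n (HomologicalComplex.cyclesMap (yMap P P' φ.hom Y) n z) =
      φ.hom.f n ≫ cyc P Y n z :=
    congrArg (fun f => f z) (HomologicalComplex.cyclesMap_i (yMap P P' φ.hom Y) n)
  have hgen : ∀ (f f' : P'.complex.X n ⟶ Y) (h1 h2), f = f' →
      P'.extMk f (n+1) rfl h1 = P'.extMk f' (n+1) rfl h2 := by
    rintro f _ _ _ rfl; rfl
  exact hgen _ _ (cyc_d P' Y n _) _ hz

end Bridge


/-- Ext modules, unbundled -/
abbrev EX (R : Type u) [CommRing R] (N X : Type u) [AddCommGroup N] [Module R N]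
    [AddCommGroup X] [Module R X] (i : ℕ) : Type u :=
  Abelian.Ext (ModuleCat.of R N) (ModuleCat.of R X) i

namespace EX
variable {R : Type u} [CommRing R] (N : Type u) [AddCommGroup N] [Module R N]
variable {X Y Z A B C : Type u} [AddCommGroup X] [Module R X] [AddCommGroup Y] [Module R Y]
  [AddCommGroup Z] [Module R Z] [AddCommGroup A] [Module R A] [AddCommGroup B] [Module R B]
  [AddCommGroup C] [Module R C]

noncomputable def map (f : X →ₗ[R] Y) (i : ℕ) : EX R N X i →ₗ[R] EX R N Y i :=
  (Abelian.Ext.mk₀ (ModuleCat.ofHom f)).postcompOfLinear R (ModuleCat.of R N) (add_zero i)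

lemma map_apply (f : X →ₗ[R] Y) (i : ℕ) (x : EX R N X i) :
    map N f i x = x.comp (Abelian.Ext.mk₀ (ModuleCat.ofHom f)) (add_zero i) := rfl

lemma map_comp (f : X →ₗ[R] Y) (g : Y →ₗ[R] Z) (i : ℕ) (x : EX R N X i) :
    map N g i (map N f i x) = map N (g ∘ₗ f) i x := by
  simp [map_apply]

lemma map_smul_id (r : R) (i : ℕ) (x : EX R N X i) :
    map N (r • (LinearMap.id : X →ₗ[R] X)) i x = r • x := by
  rw [map_apply, Abelian.Ext.smul_eq_comp_mk₀]; rfl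

lemma map_id (i : ℕ) (x : EX R N X i) :
    map N (LinearMap.id : X →ₗ[R] X) i x = x := by
  have := map_smul_id N (1 : R) i x
  rwa [one_smul, one_smul] at this

noncomputable def congr (e : X ≃ₗ[R] Y) (i : ℕ) : EX R N X i ≃ₗ[R] EX R N Y i :=
  LinearEquiv.ofLinearMap (map N e.toLinearMap i) (map N e.symm.toLinearMap i)
    (by ext x; simp [map_comp, map_id])
    (by ext x; simp [map_comp, map_id])

/-- elements killing N kill the Ext -/
lemma smul_eq_zero {r : R} (h : ∀ n : N, r • n = 0) (i : ℕ) (x : EX R N X i) : r • x = 0 := by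
  have : r • (𝟙 (ModuleCat.of R N)) = 0 := by ext n; exact h n
  rw [← Abelian.Ext.mk₀_id_comp (r • x), Abelian.Ext.comp_smul, ← Abelian.Ext.smul_comp,
    ← Abelian.Ext.mk₀_smul, this]
  simp

lemma shortExact {f : A →ₗ[R] X} {g : X →ₗ[R] B} (hf : Function.Injective f)
    (hg : Function.Surjective g) (hfg : Function.Exact f g) :
    (ShortComplex.mk (ModuleCat.ofHom f) (ModuleCat.ofHom g)
      (by ext x; exact hfg.apply_apply_eq_zero x)).ShortExact := by
  have h1 : Mono (ModuleCat.ofHom f) := (ModuleCat.mono_iff_injective _).2 hf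
  have h2 : Epi (ModuleCat.ofHom g) := (ModuleCat.epi_iff_surjective _).2 hg
  refine ⟨?_⟩
  exact (ShortComplex.ShortExact.moduleCat_exact_iff_function_exact _).2 hfg

noncomputable def δ {f : A →ₗ[R] X} {g : X →ₗ[R] B} (hf : Function.Injective f)
    (hg : Function.Surjective g) (hfg : Function.Exact f g) (i : ℕ) :
    EX R N B i →ₗ[R] EX R N A (i+1) :=
  (shortExact hf hg hfg).extClass.postcompOfLinear R (ModuleCat.of R N) rfl

section

lemma exact₂ {f : A →ₗ[R] X} {g : X →ₗ[R] B} (hf : Function.Injective f)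
    (hg : Function.Surjective g) (hfg : Function.Exact f g) (i : ℕ) : Function.Exact (map N f i) (map N g i) := by
  intro x
  constructor
  · intro hx
    exact Abelian.Ext.covariant_sequence_exact₂ _ (shortExact hf hg hfg) x hx
  · rintro ⟨y, rfl⟩
    rw [map_comp, hfg.linearMap_comp_eq_zero, map_apply]
    have : ModuleCat.ofHom (0 : A →ₗ[R] B) = 0 := rfl
    rw [this]; simp

lemma exact₃ {f : A →ₗ[R] X} {g : X →ₗ[R] B} (hf : Function.Injective f)
    (hg : Function.Surjective g) (hfg : Function.Exact f g) (i : ℕ) : Function.Exact (map N g i) (δ N hf hg hfg i) := by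
  intro x
  constructor
  · intro hx
    exact Abelian.Ext.covariant_sequence_exact₃ _ (shortExact hf hg hfg) x rfl hx
  · rintro ⟨y, rfl⟩
    change (y.comp _ (add_zero i)).comp _ rfl = 0
    rw [Abelian.Ext.comp_assoc_of_second_deg_zero]
    have := (shortExact hf hg hfg).comp_extClass
    dsimp at this
    rw [this]; simp

lemma exact₁ {f : A →ₗ[R] X} {g : X →ₗ[R] B} (hf : Function.Injective f)
    (hg : Function.Surjective g) (hfg : Function.Exact f g) (i : ℕ) : Function.Exact (δ N hf hg hfg i) (map N f (i+1)) := by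
  intro x
  constructor
  · intro hx
    exact Abelian.Ext.covariant_sequence_exact₁ _ (shortExact hf hg hfg) x hx rfl
  · rintro ⟨y, rfl⟩
    change (y.comp _ rfl).comp _ (add_zero (i+1)) = 0
    rw [Abelian.Ext.comp_assoc_of_third_deg_zero]
    have := (shortExact hf hg hfg).extClass_comp
    dsimp at this
    rw [this]; simp

lemma map_zero_injective {f : A →ₗ[R] X} (hf : Function.Injective f) : Function.Injective (map N f 0) := by
  have : Mono (ModuleCat.ofHom f) := (ModuleCat.mono_iff_injective _).2 hf
  exact Abelian.Ext.postcomp_mk₀_injective_of_mono (ModuleCat.of R N) (ModuleCat.ofHom f)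
end

noncomputable def zeroEquiv : EX R N X 0 ≃ₗ[R] (N →ₗ[R] X) :=
  (Abelian.Ext.linearEquiv₀ (R := R)).trans ModuleCat.homLinearEquiv

/-- contravariant connecting -/
noncomputable def δ' (X : Type u) [AddCommGroup X] [Module R X]
    {K P N : Type u} [AddCommGroup N] [Module R N] [AddCommGroup K] [Module R K] [AddCommGroup P]
    [Module R P] {f : K →ₗ[R] P} {g : P →ₗ[R] N} (hf : Function.Injective f)
    (hg : Function.Surjective g) (hfg : Function.Exact f g) (i : ℕ) :
    EX R K X i →ₗ[R] EX R N X (i+1) :=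
  (shortExact hf hg hfg).extClass.precompOfLinear R (ModuleCat.of R X) (add_comm 1 i)

lemma δ'_surjective (X : Type u) [AddCommGroup X] [Module R X]
    {K P N : Type u} [AddCommGroup N] [Module R N] [AddCommGroup K] [Module R K] [AddCommGroup P]
    [Module R P] [Module.Projective R P] {f : K →ₗ[R] P} {g : P →ₗ[R] N} (hf : Function.Injective f)
    (hg : Function.Surjective g) (hfg : Function.Exact f g) (i : ℕ) :
    Function.Surjective (δ' X hf hg hfg i) := by
  have : Projective (ModuleCat.of R P) := inferInstance
  intro x
  exact Abelian.Ext.contravariant_sequence_exact₃ (shortExact hf hg hfg) _ x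
    (Abelian.Ext.eq_zero_of_projective _) (add_comm 1 i)

lemma δ'_injective (X : Type u) [AddCommGroup X] [Module R X]
    {K P N : Type u} [AddCommGroup N] [Module R N] [AddCommGroup K] [Module R K] [AddCommGroup P]
    [Module R P] [Module.Projective R P] {f : K →ₗ[R] P} {g : P →ₗ[R] N} (hf : Function.Injective f)
    (hg : Function.Surjective g) (hfg : Function.Exact f g) (i : ℕ) :
    Function.Injective (δ' X hf hg hfg (i+1)) := by
  have : Projective (ModuleCat.of R P) := inferInstance
  rw [← LinearMap.ker_eq_bot, LinearMap.ker_eq_bot']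
  intro x hx
  obtain ⟨y, rfl⟩ := Abelian.Ext.contravariant_sequence_exact₁ (shortExact hf hg hfg) _ x
    (add_comm 1 _) hx
  rw [Abelian.Ext.eq_zero_of_projective y]; simp

lemma δ'_zero_ker (X : Type u) [AddCommGroup X] [Module R X]
    {K P N : Type u} [AddCommGroup N] [Module R N] [AddCommGroup K] [Module R K] [AddCommGroup P]
    [Module R P] {f : K →ₗ[R] P} {g : P →ₗ[R] N} (hf : Function.Injective f)
    (hg : Function.Surjective g) (hfg : Function.Exact f g) (h : K →ₗ[R] X) :
    δ' X hf hg hfg 0 ((zeroEquiv K).symm h) = 0 ↔ ∃ k : P →ₗ[R] X, k ∘ₗ f = h := by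
  constructor
  · intro hx
    obtain ⟨y, hy⟩ := Abelian.Ext.contravariant_sequence_exact₁ (shortExact hf hg hfg) _ _
      (add_comm 1 0) hx
    refine ⟨zeroEquiv P y, ?_⟩
    apply (zeroEquiv K).symm.injective
    rw [← hy]
    obtain ⟨y', rfl⟩ := (zeroEquiv P).symm.surjective y
    rw [LinearEquiv.apply_symm_apply]
    change Abelian.Ext.mk₀ _ = (Abelian.Ext.mk₀ _).comp (Abelian.Ext.mk₀ _) _
    rw [Abelian.Ext.mk₀_comp_mk₀]
    rfl
  · rintro ⟨k, rfl⟩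
    have : (zeroEquiv K).symm (k ∘ₗ f) = (Abelian.Ext.mk₀ (ModuleCat.ofHom f)).comp
        (Abelian.Ext.mk₀ (ModuleCat.ofHom k)) (zero_add 0) := by
      rw [Abelian.Ext.mk₀_comp_mk₀]; rfl
    rw [this]
    change (shortExact hf hg hfg).extClass.comp _ (add_comm 1 0) = 0
    have h2 := (shortExact hf hg hfg).extClass_comp
    dsimp at h2
    rw [← Abelian.Ext.comp_assoc (a₁₂ := 1) (a₂₃ := 0) (a₃ := 0) (h₁₂ := rfl) (h₂₃ := rfl) (h := rfl) , h2]
    simp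

instance finite [IsNoetherianRing R] [Module.Finite R N] [Module.Finite R X] (i : ℕ) :
    Module.Finite R (EX R N X i) := ModuleCat.finite_ext R _ _ i

end EX


section FFsec
variable {R : Type u} [CommRing R]

/-- finitely generated up to `f`-torsion -/
def FF (f : R) (E : Type u) [AddCommGroup E] [Module R E] : Prop :=
  ∃ L : Submodule R E, L.FG ∧ ∀ e : E, ∃ n : ℕ, f ^ n • e ∈ L

variable {A B C : Type u} [AddCommGroup A] [Module R A] [AddCommGroup B] [Module R B]
  [AddCommGroup C] [Module R C]

lemma FF.mid [IsNoetherianRing R] {f : R} {φ : A →ₗ[R] B} {ψ : B →ₗ[R] C}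
    (h : Function.Exact φ ψ) (hA : FF f A) (hC : FF f C) : FF f B := by
  obtain ⟨LA, hLA, hA⟩ := hA
  obtain ⟨LC, hLC, hC⟩ := hC
  have h1 : (LC ⊓ LinearMap.range ψ).FG :=
    haveI : IsNoetherian R LC := isNoetherian_of_fg_of_noetherian _ hLC
    Submodule.FG.of_le hLC inf_le_left
  obtain ⟨L', hL', hL'2⟩ : ∃ L' : Submodule R B, L'.FG ∧ L'.map ψ = LC ⊓ LinearMap.range ψ := by
    obtain ⟨s, hs⟩ := h1
    have : ∀ c ∈ s, ∃ b, ψ b = c := fun c hc => by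
      have : c ∈ LC ⊓ LinearMap.range ψ := hs ▸ Submodule.subset_span hc
      exact this.2
    choose! g hg using this
    classical
    refine ⟨Submodule.span R (s.image g : Finset B), ⟨_, rfl⟩, ?_⟩
    rw [Submodule.map_span, ← hs]
    congr 1
    ext c
    simp only [Finset.coe_image, Set.mem_image, Finset.mem_coe, exists_exists_and_eq_and]
    constructor
    · rintro ⟨c', hc', rfl⟩; rwa [hg c' hc']
    · intro hc; exact ⟨c, hc, hg c hc⟩
  refine ⟨LA.map φ ⊔ L', (hLA.map φ).sup hL', fun b => ?_⟩
  obtain ⟨n, hn⟩ := hC (ψ b)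
  have h2 : ψ (f ^ n • b) ∈ L'.map ψ := by
    rw [hL'2]; exact ⟨by simpa using hn, ⟨_, rfl⟩⟩
  obtain ⟨l, hl, hl2⟩ := h2
  obtain ⟨a, ha⟩ := (h (f ^ n • b - l)).1 (by rw [map_sub, hl2, sub_self])
  obtain ⟨m, hm⟩ := hA a
  refine ⟨m + n, ?_⟩
  have : f ^ (m+n) • b = φ (f ^ m • a) + f ^ m • l := by
    rw [map_smul, ha, ← smul_add, sub_add_cancel, pow_add, mul_smul]
  rw [this]
  exact Submodule.add_mem_sup ⟨_, hm, rfl⟩ (Submodule.smul_mem _ _ hl)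

lemma FF.of_finite (f : R) [h : Module.Finite R A] : FF f A :=
  ⟨⊤, h.1, fun _ => ⟨0, trivial⟩⟩

lemma FF.finite (h : FF (1 : R) A) : Module.Finite R A := by
  obtain ⟨L, hL, h⟩ := h
  have : L = ⊤ := by
    rw [eq_top_iff]; intro x _
    obtain ⟨n, hn⟩ := h x
    simpa using hn
  exact ⟨this ▸ hL⟩

lemma FF.of_surj {f : R} (h : FF f A) {φ : A →ₗ[R] B} (hφ : Function.Surjective φ) : FF f B := by
  obtain ⟨L, hL, h⟩ := h
  refine ⟨L.map φ, hL.map φ, fun b => ?_⟩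
  obtain ⟨a, rfl⟩ := hφ b
  obtain ⟨n, hn⟩ := h a
  exact ⟨n, _, hn, by simp⟩

lemma FF.of_inj [IsNoetherianRing R] {f : R} (h : FF f B) {φ : A →ₗ[R] B}
    (hφ : Function.Injective φ) : FF f A := by
  have h0 : FF f PUnit.{u+1} := FF.of_finite f
  refine FF.mid (φ := (0 : PUnit.{u+1} →ₗ[R] A)) (ψ := φ) ?_ h0 h
  intro x
  constructor
  · intro hx; exact ⟨0, by rw [map_zero]; exact (hφ (by rw [hx, map_zero])).symm⟩
  · rintro ⟨y, rfl⟩; simp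

lemma FF.mul {f : R} (g : R) (h : FF f A) : FF (g * f) A := by
  obtain ⟨L, hL, h⟩ := h
  refine ⟨L, hL, fun e => ?_⟩
  obtain ⟨n, hn⟩ := h e
  exact ⟨n, by rw [mul_pow, mul_smul]; exact L.smul_mem _ hn⟩

lemma FF.of_tors {f : R} (h : ∀ x : A, ∃ n : ℕ, f ^ n • x = 0) : FF f A :=
  ⟨⊥, Submodule.fg_bot, fun e => by simpa using h e⟩

/-- `mid` for finite modules -/
lemma finite_mid [IsNoetherianRing R] {φ : A →ₗ[R] B} {ψ : B →ₗ[R] C}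
    (h : Function.Exact φ ψ) (hA : Module.Finite R A) (hC : Module.Finite R C) :
    Module.Finite R B :=
  (FF.mid h (FF.of_finite 1) (FF.of_finite 1)).finite

lemma finite_inj [IsNoetherianRing R] (h : Module.Finite R B) {φ : A →ₗ[R] B}
    (hφ : Function.Injective φ) : Module.Finite R A :=
  ((FF.of_finite 1).of_inj hφ).finite

end FFsec

section torsion
variable {R : Type u} [CommRing R]

/-- elementwise torsion with respect to every element of `a` -/
def Tors (a : Ideal R) (X : Type u) [AddCommGroup X] [Module R X] : Prop :=
  ∀ f ∈ a, ∀ x : X, ∃ n : ℕ, f ^ n • x = 0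

variable {X Y : Type u} [AddCommGroup X] [Module R X] [AddCommGroup Y] [Module R Y] {a : Ideal R}

lemma Tors.inj (h : Tors a Y) {φ : X →ₗ[R] Y} (hφ : Function.Injective φ) : Tors a X := by
  intro f hf x
  obtain ⟨n, hn⟩ := h f hf (φ x)
  exact ⟨n, hφ (by simp [hn])⟩

lemma Tors.surj (h : Tors a X) {φ : X →ₗ[R] Y} (hφ : Function.Surjective φ) : Tors a Y := by
  intro f hf y
  obtain ⟨x, rfl⟩ := hφ y
  obtain ⟨n, hn⟩ := h f hf x
  exact ⟨n, by rw [← map_smul, hn, map_zero]⟩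

lemma Tors.pi (h : Tors a X) (m : ℕ) : Tors a (Fin m → X) := by
  intro f hf x
  choose n hn using fun i => h f hf (x i)
  refine ⟨∑ i, n i, ?_⟩
  ext i
  have : n i ≤ ∑ i, n i := Finset.single_le_sum (f := n) (fun _ _ => Nat.zero_le _) (Finset.mem_univ i)
  rw [Pi.smul_apply, ← Nat.sub_add_cancel this, pow_add, mul_smul, hn]; simp

lemma Tors.mono {b : Ideal R} (h : Tors a X) (hb : b ≤ a) : Tors b X := fun f hf => h f (hb hf)

/-- pointwise power -/
lemma Tors.exists_pow [IsNoetherianRing R] (h : Tors a X) (x : X) :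
    ∃ n : ℕ, ∀ r ∈ a ^ n, r • x = 0 := by
  have : a ≤ Ideal.radical (LinearMap.ker (LinearMap.toSpanSingleton R X x) : Ideal R) := by
    intro f hf
    obtain ⟨n, hn⟩ := h f hf x
    exact ⟨n, hn⟩
  obtain ⟨n, hn⟩ := Ideal.exists_pow_le_of_le_radical_of_fg this (IsNoetherian.noetherian a)
  exact ⟨n, fun r hr => hn hr⟩

lemma Tors.of_exists_pow (h : ∀ x : X, ∃ n : ℕ, ∀ r ∈ a ^ n, r • x = 0) : Tors a X := by
  intro f hf x
  obtain ⟨n, hn⟩ := h x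
  exact ⟨n, hn _ (Ideal.pow_mem_pow hf n)⟩

/-- a uniform power for finite modules -/
lemma Tors.exists_pow_finite [IsNoetherianRing R] [hX : Module.Finite R X] (h : Tors a X) :
    ∃ n : ℕ, ∀ r ∈ a ^ n, ∀ x : X, r • x = 0 := by
  have : a ≤ (Module.annihilator R X).radical := by
    intro f hf
    obtain ⟨s, hs⟩ := hX.1
    choose n hn using fun x : X => h f hf x
    refine ⟨∑ i ∈ s, n i, ?_⟩
    rw [Module.mem_annihilator]
    intro x
    have hx : x ∈ Submodule.span R (s : Set X) := hs ▸ trivial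
    induction hx using Submodule.span_induction with
    | mem x hx =>
      have : n x ≤ ∑ i ∈ s, n i := Finset.single_le_sum (f := n) (fun _ _ => Nat.zero_le _) hx
      rw [← Nat.sub_add_cancel this, pow_add, mul_smul, hn]; simp
    | zero => simp
    | add x y _ _ hx hy => rw [smul_add, hx, hy, add_zero]
    | smul r x _ hx => rw [smul_comm, hx, smul_zero]
  obtain ⟨n, hn⟩ := Ideal.exists_pow_le_of_le_radical_of_fg this (IsNoetherian.noetherian a)
  exact ⟨n, fun r hr x => Module.mem_annihilator.1 (hn hr) x⟩

/-- `(0 :_X a)` -/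
abbrev K0 (a : Ideal R) (X : Type u) [AddCommGroup X] [Module R X] : Submodule R X :=
  Submodule.torsionBySet R X (a : Set R)

lemma mem_K0 {x : X} : x ∈ K0 a X ↔ ∀ r ∈ a, r • x = 0 := by
  simp [K0, Submodule.mem_torsionBySet_iff]

noncomputable def homQuot (a : Ideal R) (X : Type u) [AddCommGroup X] [Module R X] :
    ((R ⧸ a) →ₗ[R] X) ≃ₗ[R] K0 a X where
  toFun φ := ⟨φ 1, mem_K0.2 fun r hr => by
    rw [← map_smul]
    have : r • (1 : R ⧸ a) = 0 := by
      rw [Algebra.smul_def, mul_one]; exact Ideal.Quotient.eq_zero_iff_mem.2 hr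
    rw [this, map_zero]⟩
  map_add' _ _ := rfl
  map_smul' _ _ := rfl
  invFun x := Submodule.liftQ a (LinearMap.toSpanSingleton R X x) (fun r hr => by
    have := mem_K0.1 x.2 r hr
    simpa using this)
  left_inv φ := by
    ext
    simp
  right_inv x := by
    ext
    change Submodule.liftQ a _ _ (Submodule.Quotient.mk 1) = _
    rw [Submodule.liftQ_apply]; simp

noncomputable def ex0 (a : Ideal R) (X : Type u) [AddCommGroup X] [Module R X] :
    EX R (R ⧸ a) X 0 ≃ₗ[R] K0 a X := (EX.zeroEquiv _).trans (homQuot a X)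

/-- if `(0:_X a)` is `f`-torsion, so is the torsion module `X` -/
lemma tors_of_K0 [IsNoetherianRing R] (hX : Tors a X) {f : R}
    (h : ∀ x ∈ K0 a X, ∃ n : ℕ, f ^ n • x = 0) (x : X) : ∃ n : ℕ, f ^ n • x = 0 := by
  obtain ⟨n, hn⟩ := hX.exists_pow x
  induction n generalizing x with
  | zero => exact ⟨0, by simpa using hn 1 (by simp)⟩
  | succ n ih =>
    obtain ⟨s, hs⟩ := IsNoetherian.noetherian (a ^ n)
    have h1 : ∀ r ∈ a ^ n, ∃ m : ℕ, f ^ m • (r • x) = 0 := fun r hr => by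
      apply h
      rw [mem_K0]
      intro t ht
      rw [← mul_smul]
      exact hn _ (by rw [pow_succ']; exact Ideal.mul_mem_mul ht hr)
    choose! m hm using h1
    obtain ⟨k, hk⟩ := ih (f ^ (∑ r ∈ s, m r) • x) (by
      intro r hr
      rw [← hs] at hr
      induction hr using Submodule.span_induction with
      | mem r hr =>
        have h2 : m r ≤ ∑ i ∈ s, m i := Finset.single_le_sum (f := m) (fun _ _ => Nat.zero_le _) hr
        rw [smul_comm, ← Nat.sub_add_cancel h2, pow_add, mul_smul, hm, smul_zero]
        rw [← hs]; exact Submodule.subset_span hr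
      | zero => simp
      | add x y _ _ hx hy => rw [add_smul, hx, hy, add_zero]
      | smul t x _ hx => rw [smul_assoc, hx, smul_zero])
    exact ⟨k + ∑ r ∈ s, m r, by rw [pow_add, mul_smul, hk]⟩

/-- `a^k X = 0` and `(0:_X a)` fg imply `X` fg. -/
lemma finite_of_pow [IsNoetherianRing R] (k : ℕ) (hX : ∀ r ∈ a ^ k, ∀ x : X, r • x = 0)
    (h : Module.Finite R (K0 a X)) : Module.Finite R X := by
  have key : ∀ k : ℕ, Module.Finite R (K0 (a ^ k) X) := by
    intro k
    induction k with
    | zero =>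
      have : K0 (a ^ 0) X = ⊥ := by
        rw [eq_bot_iff]; intro x hx
        rw [mem_K0] at hx
        simpa using hx 1 (by simp)
      rw [this]; infer_instance
    | succ k ih =>
      obtain ⟨s, hs⟩ := IsNoetherian.noetherian (a ^ k)
      let ψ : K0 (a ^ (k+1)) X →ₗ[R] (s → K0 a X) := LinearMap.pi fun r =>
        ((r : R) • (K0 (a ^ (k+1)) X).subtype).codRestrict _ (fun x => by
          rw [mem_K0]
          intro t ht
          have := mem_K0.1 x.2 (t * r) (by
            rw [pow_succ']; exact Ideal.mul_mem_mul ht (hs ▸ Submodule.subset_span r.2))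
          rw [mul_smul] at this
          exact this)
      have hle : K0 (a ^ k) X ≤ K0 (a ^ (k+1)) X := by
        intro x hx
        rw [mem_K0] at hx ⊢
        intro r hr
        exact hx r (Ideal.pow_le_pow_right (Nat.le_succ k) hr)
      refine finite_mid (φ := Submodule.inclusion hle) (ψ := ψ) ?_ ih inferInstance
      intro x
      constructor
      · intro hx
        refine ⟨⟨x.1, mem_K0.2 fun r hr => ?_⟩, rfl⟩
        rw [← hs] at hr
        induction hr using Submodule.span_induction with
        | mem r hr =>
          exact congrArg (fun z => ((z ⟨r, hr⟩ : K0 a X) : X)) hx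
        | zero => simp
        | add y z _ _ hx hy => rw [add_smul, hx, hy, add_zero]
        | smul t y _ hx => rw [smul_assoc, hx, smul_zero]
      · rintro ⟨y, rfl⟩
        ext r
        exact mem_K0.1 y.2 r (hs ▸ Submodule.subset_span r.2)
  have h2 := key k
  have : K0 (a ^ k) X = ⊤ := by
    rw [eq_top_iff]; intro x _; rw [mem_K0]; exact fun r hr => hX r hr x
  rw [this] at h2
  exact Module.Finite.equiv Submodule.topEquiv

end torsion

section extQuotient
variable {R : Type u} [CommRing R] [IsNoetherianRing R]
variable (X : Type u) [AddCommGroup X] [Module R X]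

/-- Ext^i(N,X) is a subquotient of a finite power of X -/
lemma EX.exists_surj (i : ℕ) : ∀ (N : Type u) [AddCommGroup N] [Module R N] [Module.Finite R N],
    ∃ (m : ℕ) (Z : Submodule R (Fin m → X)) (φ : Z →ₗ[R] EX R N X i), Function.Surjective φ := by
  induction i with
  | zero =>
    intro N _ _ _
    obtain ⟨m, g, hg⟩ := Module.Finite.exists_fin' R N
    let j : (N →ₗ[R] X) →ₗ[R] (Fin m → X) :=
      LinearMap.pi fun k => LinearMap.applyₗ (g (Pi.single k 1))
    have hj : Function.Injective j := by
      intro φ ψ h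
      have : φ ∘ₗ g = ψ ∘ₗ g := by
        apply LinearMap.pi_ext'
        intro k
        ext
        exact congrFun h k
      ext x
      obtain ⟨y, rfl⟩ := hg x
      exact LinearMap.congr_fun this y
    let e := LinearEquiv.ofInjective j hj
    exact ⟨m, LinearMap.range j, (e.symm.trans (EX.zeroEquiv N).symm).toLinearMap,
      (e.symm.trans (EX.zeroEquiv N).symm).surjective⟩
  | succ i ih =>
    intro N _ _ _
    obtain ⟨m, g, hg⟩ := Module.Finite.exists_fin' R N
    have : Module.Finite R (LinearMap.ker g) := inferInstance
    obtain ⟨k, Z, φ, hφ⟩ := ih (LinearMap.ker g)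
    refine ⟨k, Z, EX.δ' X (Submodule.subtype_injective _) hg (LinearMap.exact_subtype_ker_map g) i ∘ₗ φ, ?_⟩
    rw [LinearMap.coe_comp]
    exact Function.Surjective.comp (EX.δ'_surjective X (Submodule.subtype_injective _) hg
      (LinearMap.exact_subtype_ker_map g) i) hφ

lemma EX.tors {X : Type u} [AddCommGroup X] [Module R X] (N : Type u) [AddCommGroup N] [Module R N] [Module.Finite R N]
    {a : Ideal R} (h : Tors a X) (i : ℕ) : Tors a (EX R N X i) := by
  obtain ⟨m, Z, φ, hφ⟩ := EX.exists_surj (R := R) X i N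
  exact ((h.pi m).inj (Submodule.subtype_injective Z)).surj hφ

end extQuotient


section artin
variable {R : Type u} [CommRing R]

/-- principal Melkersson -/
lemma artinian_of_ker {F : Type u} [AddCommGroup F] [Module R F] {f : R}
    (hF : ∀ x : F, ∃ n : ℕ, f ^ n • x = 0)
    (h : IsArtinian R (LinearMap.ker (LinearMap.lsmul R F f))) : IsArtinian R F := by
  set V := LinearMap.ker (LinearMap.lsmul R F f) with hV
  have memV : ∀ x, x ∈ V ↔ f • x = 0 := fun x => Iff.rfl
  -- the filtration
  let W : ℕ → Submodule R F → Submodule R V := fun j N =>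
    { carrier := {v | ∃ y ∈ N, f ^ j • y = v.1}
      add_mem' := by
        rintro a b ⟨y, hy, h1⟩ ⟨z, hz, h2⟩
        exact ⟨y + z, N.add_mem hy hz, by rw [smul_add, h1, h2]; rfl⟩
      zero_mem' := ⟨0, N.zero_mem, by simp⟩
      smul_mem' := by
        rintro c x ⟨y, hy, h1⟩
        exact ⟨c • y, N.smul_mem _ hy, by rw [smul_comm, h1]; rfl⟩ }
  have Wmono : ∀ j N N', N ≤ N' → W j N ≤ W j N' := by
    rintro j N N' h v ⟨y, hy, h1⟩; exact ⟨y, h hy, h1⟩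
  have Wanti : ∀ j j' N, j ≤ j' → W j' N ≤ W j N := by
    rintro j j' N h v ⟨y, hy, h1⟩
    exact ⟨f ^ (j' - j) • y, N.smul_mem _ hy, by rw [← mul_smul, ← pow_add, ← h1]; congr 2; omega⟩
  have key : ∀ N N' : Submodule R F, N ≤ N' → (∀ j, W j N' ≤ W j N) → N' ≤ N := by
    intro N N' hle hW
    have : ∀ m : ℕ, ∀ x ∈ N', f ^ m • x = 0 → x ∈ N := by
      intro m
      induction m with
      | zero => intro x _ h0; simp at h0; rw [h0]; exact N.zero_mem
      | succ m ih =>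
        intro x hx h0
        have hv : f ^ m • x ∈ V := by rw [memV, ← mul_smul, ← pow_succ', h0]
        obtain ⟨y, hy, h1⟩ := hW m (show (⟨_, hv⟩ : V) ∈ W m N' from ⟨x, hx, rfl⟩)
        have := ih (x - y) (N'.sub_mem hx (hle hy)) (by rw [smul_sub, h1]; simp)
        have := N.add_mem this hy
        simpa using this
    intro x hx
    obtain ⟨n, hn⟩ := hF x
    exact this n x hx hn
  rw [← monotone_stabilizes_iff_artinian]
  intro N
  have hN : ∀ {k l : ℕ}, k ≤ l → (OrderDual.ofDual (N l)) ≤ OrderDual.ofDual (N k) :=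
    fun h => N.monotone h
  have stab := fun g : ℕ →o (Submodule R V)ᵒᵈ => (monotone_stabilizes_iff_artinian.2 h) g
  obtain ⟨K, hK⟩ := stab ⟨fun k => OrderDual.toDual (W k (OrderDual.ofDual (N k))), fun k l hkl =>
    ((Wmono _ _ _ (hN hkl)).trans (Wanti _ _ _ hkl) : W l _ ≤ W k _)⟩
  have hj : ∀ j, ∃ n, ∀ m, n ≤ m → W j (OrderDual.ofDual (N n)) = W j (OrderDual.ofDual (N m)) := by
    intro j
    obtain ⟨n, hn⟩ := stab ⟨fun k => OrderDual.toDual (W j (OrderDual.ofDual (N k))), fun k l hkl =>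
      (Wmono _ _ _ (hN hkl) : W j _ ≤ W j _)⟩
    exact ⟨n, fun m hm => hn m hm⟩
  choose n hn using hj
  set K' := K + ∑ j ∈ Finset.range K, n j with hK'
  refine ⟨K', fun m hm => ?_⟩
  have h1 : ∀ j, W j (OrderDual.ofDual (N K')) ≤ W j (OrderDual.ofDual (N m)) := by
    intro j
    by_cases hjK : j < K
    · have h2 : n j ≤ K' := by
        have := Finset.single_le_sum (f := n) (fun _ _ => Nat.zero_le _) (Finset.mem_range.2 hjK)
        omega
      rw [← hn j K' h2, ← hn j m (h2.trans hm)]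
    · have e1 : W K (OrderDual.ofDual (N K)) = W (m + j) (OrderDual.ofDual (N (m+j))) :=
        hK (m + j) (by omega)
      calc W j (OrderDual.ofDual (N K')) ≤ W K (OrderDual.ofDual (N K')) := Wanti _ _ _ (by omega)
        _ ≤ W K (OrderDual.ofDual (N K)) := Wmono _ _ _ (hN (by omega))
        _ = W (m+j) (OrderDual.ofDual (N (m+j))) := e1
        _ ≤ W j (OrderDual.ofDual (N (m+j))) := Wanti _ _ _ (by omega)
        _ ≤ W j (OrderDual.ofDual (N m)) := Wmono _ _ _ (hN (by omega))
  exact le_antisymm (hN hm : OrderDual.ofDual (N m) ≤ OrderDual.ofDual (N K')) (key _ _ (hN hm) h1) |>.symm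

lemma artinian_of_torsionBySet (s : Finset R) : ∀ (X : Type u) [AddCommGroup X] [Module R X],
    (∀ f ∈ s, ∀ x : X, ∃ n : ℕ, f ^ n • x = 0) →
    IsArtinian R (Submodule.torsionBySet R X (s : Set R)) → IsArtinian R X := by
  classical
  induction s using Finset.induction_on with
  | empty =>
    intro X _ _ _ h
    refine isArtinian_of_injective
      ((LinearMap.id : X →ₗ[R] X).codRestrict (Submodule.torsionBySet R X ((∅ : Finset R) : Set R))
        (fun x => by simp [Submodule.mem_torsionBySet_iff])) ?_
    intro x y hxy
    exact congrArg Subtype.val hxy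
  | insert f s _ ih =>
    intro X _ _ hX h
    apply artinian_of_ker (f := f) (hX f (by simp))
    apply ih
    · rintro g hg ⟨x, hx⟩
      obtain ⟨n, hn⟩ := hX g (by simp [hg]) x
      exact ⟨n, Subtype.ext hn⟩
    · refine isArtinian_of_injective
        (((LinearMap.ker (LinearMap.lsmul R X f)).subtype ∘ₗ (Submodule.subtype _)).codRestrict
          (Submodule.torsionBySet R X ((insert f s : Finset R) : Set R)) ?_) ?_
      · rintro ⟨⟨x, hx⟩, hx2⟩
        rw [Submodule.mem_torsionBySet_iff] at hx2 ⊢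
        rintro ⟨r, hr⟩
        rcases Finset.mem_insert.1 hr with rfl | hr
        · exact hx
        · exact congrArg Subtype.val (hx2 ⟨r, hr⟩)
      · intro x y hxy
        have h9 := congrArg Subtype.val hxy
        exact Subtype.ext (Subtype.ext h9)

lemma artinian_of_K0 [IsNoetherianRing R] {a : Ideal R} {X : Type u} [AddCommGroup X] [Module R X]
    (hX : Tors a X) (h : IsArtinian R (K0 a X)) : IsArtinian R X := by
  obtain ⟨s, hs⟩ := IsNoetherian.noetherian a
  apply artinian_of_torsionBySet s X
  · intro f hf; exact hX f (hs ▸ Submodule.subset_span hf)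
  · refine isArtinian_of_injective (Submodule.inclusion (?_ : _ ≤ K0 a X)) (Submodule.inclusion_injective _)
    intro x hx
    rw [Submodule.mem_torsionBySet_iff] at hx
    rw [mem_K0]
    intro r hr
    rw [← hs] at hr
    induction hr using Submodule.span_induction with
    | mem r hr => exact hx ⟨r, hr⟩
    | zero => simp
    | add y z _ _ hx hy => rw [add_smul, hx, hy, add_zero]
    | smul t y _ hx => rw [smul_assoc, hx, smul_zero]

variable {Y : Type u} [AddCommGroup Y] [Module R Y]

lemma supIrred_dich [IsArtinian R Y] {N : Submodule R Y} (hN : SupIrred N) (r : R) :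
    (∃ n : ℕ, ∀ x ∈ N, r ^ n • x = 0) ∨ (∀ x ∈ N, ∃ y ∈ N, r • y = x) := by
  let φ : N →ₗ[R] N := LinearMap.lsmul R N r
  have hφ : ∀ (k : ℕ) (x : N), (φ ^ k) x = r ^ k • x := by
    intro k
    induction k with
    | zero => intro x; simp
    | succ k ih =>
      intro x; rw [pow_succ', Module.End.mul_apply, ih, pow_succ', mul_smul]; rfl
  obtain ⟨n, hn⟩ := Filter.eventually_atTop.1 (LinearMap.eventually_codisjoint_ker_pow_range_pow φ)
  have h1 := hn (n+1) (by omega)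
  rw [codisjoint_iff] at h1
  have h2 : (LinearMap.ker (φ ^ (n+1))).map N.subtype ⊔ (LinearMap.range (φ ^ (n+1))).map N.subtype = N := by
    rw [← Submodule.map_sup, h1, Submodule.map_top, Submodule.range_subtype]
  rcases hN.2 h2 with h | h
  · left
    refine ⟨n+1, fun x hx => ?_⟩
    rw [← h] at hx
    obtain ⟨y, hy, rfl⟩ := hx
    have : (φ ^ (n+1)) y = 0 := hy
    rw [hφ] at this
    exact congrArg Subtype.val this
  · right
    intro x hx
    rw [← h] at hx
    obtain ⟨y, ⟨z, rfl⟩, rfl⟩ := hx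
    refine ⟨_, (r ^ n • z).2, ?_⟩
    rw [hφ, pow_succ', mul_smul]; rfl

/-- the attached prime of a sup-irreducible submodule -/
lemma supIrred_prime [IsArtinian R Y] {N : Submodule R Y} (hN : SupIrred N) :
    ∃ p : Ideal R, p.IsPrime ∧ (∀ r ∈ p, ∃ n : ℕ, ∀ x ∈ N, r ^ n • x = 0) ∧
      ∀ r ∉ p, ∀ x ∈ N, ∃ y ∈ N, r • y = x := by
  refine ⟨N.annihilator.radical, ?_, ?_, ?_⟩
  · refine ⟨?_, ?_⟩
    · intro h
      rw [Ideal.eq_top_iff_one] at h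
      obtain ⟨n, hn⟩ := h
      rw [one_pow, Submodule.mem_annihilator] at hn
      apply hN.1
      have : N = ⊥ := by
        rw [eq_bot_iff]; intro x hx; simpa using hn x hx
      rw [this]; exact isMin_bot
    · intro r s hrs
      by_contra! hc
      have h1 : ∀ r, r ∉ N.annihilator.radical → ∀ x ∈ N, ∃ y ∈ N, r • y = x := by
        intro r hr
        rcases supIrred_dich hN r with ⟨n, hn⟩ | h
        · exact absurd ⟨n, Submodule.mem_annihilator.2 hn⟩ hr
        · exact h
      have h2 : ∀ x ∈ N, ∃ y ∈ N, (r * s) • y = x := by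
        intro x hx
        obtain ⟨y, hy, rfl⟩ := h1 r hc.1 x hx
        obtain ⟨z, hz, rfl⟩ := h1 s hc.2 y hy
        exact ⟨z, hz, mul_smul _ _ _⟩
      obtain ⟨n, hn⟩ := hrs
      have h3 : ∀ n : ℕ, ∀ x ∈ N, ∃ y ∈ N, (r * s) ^ n • y = x := by
        intro n
        induction n with
        | zero => intro x hx; exact ⟨x, hx, by simp⟩
        | succ n ih =>
          intro x hx
          obtain ⟨y, hy, rfl⟩ := h2 x hx
          obtain ⟨z, hz, rfl⟩ := ih y hy
          exact ⟨z, hz, by rw [pow_succ', mul_smul]⟩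
      apply hN.1
      have : N = ⊥ := by
        rw [eq_bot_iff]; intro x hx
        obtain ⟨y, hy, rfl⟩ := h3 n x hx
        exact Submodule.mem_annihilator.1 hn y hy
      rw [this]; exact isMin_bot
  · rintro r ⟨n, hn⟩
    exact ⟨n, Submodule.mem_annihilator.1 hn⟩
  · intro r hr
    rcases supIrred_dich hN r with ⟨n, hn⟩ | h
    · exact absurd ⟨n, Submodule.mem_annihilator.2 hn⟩ hr
    · exact h

/-- for sup-irreducible `N` either finitely generated, or `a` not in its prime -/
lemma fg_of_le_prime [IsNoetherianRing R] {a : Ideal R} (h : Module.Finite R (K0 a Y))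
    {N : Submodule R Y} (hN : ∀ r ∈ a, ∃ n : ℕ, ∀ x ∈ N, r ^ n • x = 0) : N.FG := by
  have h1 : a ≤ N.annihilator.radical := by
    intro r hr
    obtain ⟨n, hn⟩ := hN r hr
    exact ⟨n, Submodule.mem_annihilator.2 hn⟩
  obtain ⟨k, hk⟩ := Ideal.exists_pow_le_of_le_radical_of_fg h1 (IsNoetherian.noetherian a)
  have h2 : Module.Finite R (K0 a N) := by
    refine finite_inj h (φ := (N.subtype ∘ₗ (K0 a N).subtype).codRestrict (K0 a Y) ?_) ?_
    · rintro ⟨x, hx⟩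
      rw [mem_K0] at hx ⊢
      intro r hr
      exact congrArg Subtype.val (hx r hr)
    · intro x y hxy
      have h9 := congrArg Subtype.val hxy
      exact Subtype.ext (Subtype.ext h9)
  have := finite_of_pow (a := a) (X := N) k (fun r hr x =>
    Subtype.ext (Submodule.mem_annihilator.1 (hk hr) x x.2)) h2
  exact Module.Finite.iff_fg.1 this

end artin

section C0
variable {R : Type u} [CommRing R] [IsNoetherianRing R] {a : Ideal R}

lemma exists_fg_sup {Z : Type u} [AddCommGroup Z] [Module R Z] [IsArtinian R Z]
    (h : Module.Finite R (K0 a Z)) : ∃ L : Submodule R Z, L.FG ∧ a • (⊤ : Submodule R Z) ⊔ L = ⊤ := by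
  classical
  obtain ⟨s, hs, hirr⟩ := exists_supIrred_decomposition (⊤ : Submodule R Z)
  have hN : ∀ N ∈ s, ∃ L : Submodule R Z, L.FG ∧ N ≤ a • (⊤ : Submodule R Z) ⊔ L := by
    intro N hN
    obtain ⟨p, hp, h1, h2⟩ := supIrred_prime (hirr hN)
    by_cases hap : a ≤ p
    · exact ⟨N, fg_of_le_prime h (fun r hr => h1 r (hap hr)), le_sup_right⟩
    · obtain ⟨r, hr, hrp⟩ := SetLike.not_le_iff_exists.1 hap
      refine ⟨⊥, Submodule.fg_bot, ?_⟩
      intro x hx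
      obtain ⟨y, _, rfl⟩ := h2 r hrp x hx
      exact Submodule.mem_sup_left (Submodule.smul_mem_smul hr trivial)
  choose! L hL hL2 using hN
  refine ⟨s.sup L, ?_, ?_⟩
  · rw [Finset.sup_eq_iSup]
    exact Submodule.fg_biSup s L hL
  · rw [eq_top_iff]
    refine hs.symm.le.trans ?_
    apply Finset.sup_le
    intro N hN
    have h3 : L N ≤ s.sup L := Finset.le_sup hN
    exact (hL2 N hN).trans (sup_le_sup_left h3 _)

/-- C_0 -/
theorem C0_thm {X : Type u} [AddCommGroup X] [Module R X] (hX : Tors a X)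
    (h1 : Module.Finite R (K0 a X)) (h2 : IsArtinian R (K0 a X)) (i : ℕ) :
    Module.Finite R (EX R (R ⧸ a) X i) := by
  have := artinian_of_K0 hX h2
  obtain ⟨m, Z, φ, hφ⟩ := EX.exists_surj (R := R) X i (R ⧸ a)
  have hZ : Module.Finite R (K0 a Z) := by
    let ψ : K0 a Z →ₗ[R] (Fin m → K0 a X) := LinearMap.pi fun k =>
      (LinearMap.proj k ∘ₗ Z.subtype ∘ₗ (K0 a Z).subtype).codRestrict (K0 a X) (by
        rintro ⟨x, hx⟩
        rw [mem_K0] at hx ⊢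
        intro r hr
        exact congrFun (congrArg Subtype.val (hx r hr)) k)
    have hfin : Module.Finite R (Fin m → K0 a X) := inferInstance
    refine finite_inj (A := K0 a Z) hfin (φ := ψ) ?_
    intro x y hxy
    apply Subtype.ext; apply Subtype.ext
    funext k
    exact congrArg Subtype.val (congrFun hxy k)
  obtain ⟨L, hL, hL2⟩ := exists_fg_sup (a := a) hZ
  have h3 : L.map φ = ⊤ := by
    have h4 : (a • (⊤ : Submodule R Z) ⊔ L).map φ = ⊤ := by
      rw [hL2, Submodule.map_top, LinearMap.range_eq_top.2 hφ]
    rw [Submodule.map_sup, Submodule.map_smul''] at h4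
    have h5 : a • (⊤ : Submodule R Z).map φ = ⊥ := by
      rw [eq_bot_iff, Submodule.smul_le]
      intro r hr x _
      rw [Submodule.mem_bot]
      apply EX.smul_eq_zero
      intro n
      obtain ⟨n, rfl⟩ := Ideal.Quotient.mk_surjective n
      rw [Algebra.smul_def]
      exact Ideal.Quotient.eq_zero_iff_mem.2 (Ideal.mul_mem_right _ _ hr)
    rwa [h5, bot_sup_eq] at h4
  exact ⟨h3 ▸ hL.map φ⟩

end C0


section dims
variable {R : Type u} [CommRing R]

/-- no chains of length one above `I` -/
def D0 (I : Ideal R) : Prop :=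
  ∀ p q : Ideal R, p.IsPrime → q.IsPrime → I ≤ p → p < q → False
/-- no chains of length two above `I` -/
def D1 (I : Ideal R) : Prop :=
  ∀ p q r : Ideal R, p.IsPrime → q.IsPrime → r.IsPrime → I ≤ p → p < q → q < r → False
/-- no chains of length three above `I` -/
def D2 (I : Ideal R) : Prop :=
  ∀ p q r s : Ideal R, p.IsPrime → q.IsPrime → r.IsPrime → s.IsPrime → I ≤ p → p < q → q < r →
    r < s → False

lemma D0.of_radical {I J : Ideal R} (h : D0 I) (hJ : I ≤ J.radical) : D0 J :=
  fun p q hp hq hle hlt => h p q hp hq (hJ.trans (hp.radical_le_iff.2 hle)) hlt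

lemma D1.of_radical {I J : Ideal R} (h : D1 I) (hJ : I ≤ J.radical) : D1 J :=
  fun p q r hp hq hr hle => h p q r hp hq hr (hJ.trans (hp.radical_le_iff.2 hle))

lemma D0.mono {I J : Ideal R} (h : D0 I) (hJ : I ≤ J) : D0 J := h.of_radical (hJ.trans Ideal.le_radical)
lemma D1.mono {I J : Ideal R} (h : D1 I) (hJ : I ≤ J) : D1 J := h.of_radical (hJ.trans Ideal.le_radical)

lemma D1.sup_span {J : Ideal R} (h : D1 J) {s : R} (hs : ∀ p ∈ J.minimalPrimes, s ∉ p) :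
    D0 (J ⊔ Ideal.span {s}) := by
  intro p q hp hq hle hlt
  obtain ⟨t, ht, htp⟩ := Ideal.exists_minimalPrimes_le (le_sup_left.trans hle)
  have hsp : s ∈ p := hle (Ideal.mem_sup_right (Ideal.mem_span_singleton_self s))
  exact h t p q ht.1.1 hp hq ht.1.2 (lt_of_le_of_ne htp (fun e => hs t ht (e ▸ hsp))) hlt

lemma D2.sup_span {J : Ideal R} (h : D2 J) {s : R} (hs : ∀ p ∈ J.minimalPrimes, s ∉ p) :
    D1 (J ⊔ Ideal.span {s}) := by
  intro p q r hp hq hr hle hlt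
  obtain ⟨t, ht, htp⟩ := Ideal.exists_minimalPrimes_le (le_sup_left.trans hle)
  have hsp : s ∈ p := hle (Ideal.mem_sup_right (Ideal.mem_span_singleton_self s))
  exact h t p q r ht.1.1 hp hq hr ht.1.2 (lt_of_le_of_ne htp (fun e => hs t ht (e ▸ hsp))) hlt

lemma D2.sup_span' {J I : Ideal R} (h : D2 J) (hI : D1 I) {z : R}
    (hs : ∀ p ∈ J.minimalPrimes, ¬ I ≤ p → z ∉ p) :
    D1 (J ⊔ Ideal.span {z}) := by
  intro p q r hp hq hr hle hlt hlt2
  obtain ⟨t, ht, htp⟩ := Ideal.exists_minimalPrimes_le (le_sup_left.trans hle)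
  have hsp : z ∈ p := hle (Ideal.mem_sup_right (Ideal.mem_span_singleton_self z))
  by_cases hIt : I ≤ t
  · exact hI p q r hp hq hr (hIt.trans htp) hlt hlt2
  · exact h t p q r ht.1.1 hp hq hr ht.1.2
      (lt_of_le_of_ne htp (fun e => hs t ht hIt (e ▸ hsp))) hlt hlt2

lemma moving [IsNoetherianRing R] {p q r : Ideal R} (hp : p.IsPrime) (hq : q.IsPrime)
    (hr : r.IsPrime) (h1 : p < q) (h2 : q < r) {f : R} (hf : f ∈ r) :
    ∃ q' : Ideal R, q'.IsPrime ∧ f ∈ q' ∧ p < q' ∧ q' < r := by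
  obtain ⟨q', h⟩ := PrimeSpectrum.exist_mem_one_of_mem_two (p₀ := ⟨p, hp⟩) (p₁ := ⟨q, hq⟩)
    (p₂ := ⟨r, hr⟩) h1 h2 hf
  exact ⟨q'.1, q'.2, h.1, h.2.1, h.2.2⟩

lemma D1_of_jac [IsNoetherianRing R] {I : Ideal R} {f : R} (hf : f ∈ (⊥ : Ideal R).jacobson)
    (h : D0 (I ⊔ Ideal.span {f})) : D1 I := by
  intro p q r hp hq hr hle h1 h2
  obtain ⟨m, hm, hrm⟩ := Ideal.exists_le_maximal r hr.ne_top
  have hfm : f ∈ m := (Ideal.mem_sInf.1 hf) ⟨bot_le, hm⟩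
  obtain ⟨q', hq', hfq, h3, h4⟩ := moving hp hq hm.isPrime h1 (h2.trans_le hrm) hfm
  exact h q' m hq' hm.isPrime (sup_le (hle.trans h3.le) ((Ideal.span_singleton_le_iff_mem _).2 hfq)) h4

lemma D2_of_jac [IsNoetherianRing R] {I : Ideal R} {f : R} (hf : f ∈ (⊥ : Ideal R).jacobson)
    (h : D1 (I ⊔ Ideal.span {f})) : D2 I := by
  intro p q r s hp hq hr hs hle h1 h2 h3
  obtain ⟨m, hm, hrm⟩ := Ideal.exists_le_maximal s hs.ne_top
  have hfm : f ∈ m := (Ideal.mem_sInf.1 hf) ⟨bot_le, hm⟩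
  obtain ⟨r', hr', hfr, h4, h5⟩ := moving hq hr hm.isPrime h2 (h3.trans_le hrm) hfm
  obtain ⟨q', hq', hfq, h6, h7⟩ := moving hp hq hr' h1 h4 hfr
  exact h q' r' m hq' hr' hm.isPrime
    (sup_le (hle.trans h6.le) ((Ideal.span_singleton_le_iff_mem _).2 hfq)) h7 h5

/-- the complement of the union of the minimal primes -/
def Sc (J : Ideal R) : Submonoid R where
  carrier := {s | ∀ p ∈ J.minimalPrimes, s ∉ p}
  mul_mem' := by
    intro x y hx hy p hp h
    rcases hp.1.1.mem_or_mem h with h | h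
    · exact hx p hp h
    · exact hy p hp h
  one_mem' := fun p hp h => hp.1.1.ne_top ((Ideal.eq_top_iff_one _).2 h)

lemma exists_le_of_disjoint_Sc [IsNoetherianRing R] {J p : Ideal R}
    (h : Disjoint (Sc J : Set R) (p : Set R)) : ∃ t ∈ J.minimalPrimes, p ≤ t := by
  have hfin := Ideal.finite_minimalPrimes_of_isNoetherianRing R J
  have := (Ideal.subset_union_prime (s := hfin.toFinset) (f := id) ⊤ ⊤ (I := p) (by
    intro i hi _ _; exact (hfin.mem_toFinset.1 hi).1.1)).1 (by
      intro x hx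
      by_contra hc
      refine (Set.disjoint_left.1 h : ∀ ⦃y⦄, _ → y ∉ (p : Set R)) (?_ : x ∈ (Sc J : Set R)) hx
      intro q hq hxq
      exact hc (by simp only [Set.mem_iUnion]; exact ⟨q, by simpa using hq, hxq⟩))
  obtain ⟨t, ht, hle⟩ := this
  exact ⟨t, hfin.mem_toFinset.1 ht, hle⟩

lemma comap_loc_lt (S : Submonoid R) {P Q : Ideal (Localization S)} (h : P < Q) :
    P.comap (algebraMap R (Localization S)) < Q.comap (algebraMap R (Localization S)) := by
  refine lt_of_le_of_ne (Ideal.comap_mono h.le) (fun e => h.ne ?_)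
  rw [← IsLocalization.map_under S (Localization S) P, ← IsLocalization.map_under S (Localization S) Q]
  exact congrArg (Ideal.map (algebraMap R (Localization S))) e

lemma disj_loc (S : Submonoid R) {P : Ideal (Localization S)} (hP : P.IsPrime) :
    Disjoint (S : Set R) (P.comap (algebraMap R (Localization S)) : Set R) := by
  rw [Set.disjoint_left]
  intro s hs hsP
  exact hP.ne_top (Ideal.eq_top_of_isUnit_mem _ hsP (IsLocalization.map_units _ ⟨s, hs⟩))

lemma D0_loc [IsNoetherianRing R] (J : Ideal R) :
    D0 (J.map (algebraMap R (Localization (Sc J)))) := by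
  intro P Q hP hQ hle hlt
  have h1 := comap_loc_lt _ hlt
  obtain ⟨t, ht, h2⟩ := exists_le_of_disjoint_Sc (disj_loc _ hQ)
  have h3 := h1.trans_le h2
  exact absurd (ht.2 ⟨hP.comap _, Ideal.map_le_iff_le_comap.1 hle⟩ h3.le) (not_le_of_gt h3)

lemma D1_loc [IsNoetherianRing R] (a : Ideal R) (f : R) :
    D1 (a.map (algebraMap R (Localization (Sc (a ⊔ Ideal.span {f}))))) := by
  intro P Q T hP hQ hT hle hlt hlt2
  have h1 := comap_loc_lt _ hlt
  have h2 := comap_loc_lt _ hlt2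
  obtain ⟨t, ht, h3⟩ := exists_le_of_disjoint_Sc (disj_loc _ hT)
  obtain ⟨q', hq', hfq, h4, h5⟩ := moving (hP.comap _) (hQ.comap _) ht.1.1 h1 (h2.trans_le h3)
    (f := f) (ht.1.2 (Ideal.mem_sup_right (Ideal.mem_span_singleton_self f)))
  exact absurd (ht.2 ⟨hq', sup_le ((Ideal.map_le_iff_le_comap.1 hle).trans h4.le)
    ((Ideal.span_singleton_le_iff_mem _).2 hfq)⟩ h5.le) (not_le_of_gt h5)

lemma artinian_of_D0 [IsNoetherianRing R] {J : Ideal R} (hJ : D0 J) {E : Type u} [AddCommGroup E]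
    [Module R E] [Module.Finite R E] (h : ∀ r ∈ J, ∀ x : E, r • x = 0) : IsArtinian R E := by
  have h1 : Ring.KrullDimLE 0 (R ⧸ J) := by
    rw [Ring.krullDimLE_zero_iff]
    intro I hI
    obtain ⟨m, hm, hIm⟩ := Ideal.exists_le_maximal I hI.ne_top
    have h2 := Ideal.comap_mono (f := Ideal.Quotient.mk J) hIm
    have h3 : J ≤ I.comap (Ideal.Quotient.mk J) := by
      intro x hx
      rw [Ideal.mem_comap, Ideal.Quotient.eq_zero_iff_mem.2 hx]; exact I.zero_mem
    have h4 : I.comap (Ideal.Quotient.mk J) = m.comap (Ideal.Quotient.mk J) := by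
      by_contra hne
      exact hJ _ _ (hI.comap _) (hm.isPrime.comap _) h3 (lt_of_le_of_ne h2 hne)
    have : I = m := Ideal.comap_injective_of_surjective _ Ideal.Quotient.mk_surjective h4
    rwa [this]
  have h5 : IsArtinianRing (R ⧸ J) := IsNoetherianRing.isArtinianRing_of_krullDimLE_zero
  have h6 : IsArtinian R (R ⧸ J) := isArtinian_of_surjective_algebraMap (R := R ⧸ J) (M := R ⧸ J) (S := R)
    Ideal.Quotient.mk_surjective
  obtain ⟨n, g, hg⟩ := Module.Finite.exists_fin' R E
  let φ : (Fin n → (R ⧸ J)) →ₗ[R] E := LinearMap.lsum R (fun _ => R ⧸ J) R (fun k =>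
    Submodule.liftQ J (LinearMap.toSpanSingleton R E (g (Pi.single k 1))) (fun r hr => h r hr _))
  refine isArtinian_of_surjective _ φ ?_
  intro x
  obtain ⟨y, rfl⟩ := hg x
  refine ⟨fun k => Ideal.Quotient.mk J (y k), ?_⟩
  have : y = ∑ k, y k • (Pi.single k (1 : R) : Fin n → R) := by
    ext j; simp [Finset.sum_apply, Pi.single_apply]
  conv_rhs => rw [this]
  rw [map_sum]
  simp only [φ, LinearMap.lsum_apply, LinearMap.sum_apply, LinearMap.comp_apply, LinearMap.proj_apply, map_smul]
  rfl

lemma D2_of_krullDim {a : Ideal R} (h : ringKrullDim (R ⧸ a) = 2) : D2 a := by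
  intro p q r s hp hq hr hs hle h1 h2 h3
  rw [ringKrullDim_quotient] at h
  let x : Fin 4 → PrimeSpectrum.zeroLocus (a : Set R) :=
    ![⟨⟨p, hp⟩, hle⟩, ⟨⟨q, hq⟩, hle.trans h1.le⟩, ⟨⟨r, hr⟩, hle.trans (h1.trans h2).le⟩,
      ⟨⟨s, hs⟩, hle.trans (h1.trans (h2.trans h3)).le⟩]
  have : StrictMono x := by
    rw [Fin.strictMono_iff_lt_succ]
    intro i
    fin_cases i
    · exact h1
    · exact h2
    · exact h3
  have h4 := Order.LTSeries.length_le_krullDim (LTSeries.mk 3 x this)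
  rw [h] at h4
  have : ((3 : ℕ) : WithBot ℕ∞) ≤ 2 := h4
  revert this
  decide

end dims


section mlem
variable {R : Type u} [CommRing R] 
variable {X : Type u} [AddCommGroup X] [Module R X]

abbrev kerM (X : Type u) [AddCommGroup X] [Module R X] (y : R) : Submodule R X :=
  LinearMap.ker (LinearMap.lsmul R X y)
abbrev ranM (X : Type u) [AddCommGroup X] [Module R X] (y : R) : Submodule R X :=
  LinearMap.range (LinearMap.lsmul R X y)

lemma mem_kerM {y : R} {x : X} : x ∈ kerM X y ↔ y • x = 0 := Iff.rfl

abbrev piM (X : Type u) [AddCommGroup X] [Module R X] (y : R) : X →ₗ[R] ranM X y :=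
  (LinearMap.lsmul R X y).rangeRestrict

lemma seqA_inj (y : R) : Function.Injective (kerM X y).subtype := Submodule.subtype_injective _
lemma seqA_surj (y : R) : Function.Surjective (piM X y) := LinearMap.surjective_rangeRestrict _
lemma seqA_exact (y : R) : Function.Exact (kerM X y).subtype (piM X y) := by
  intro x
  constructor
  · intro h
    exact ⟨⟨x, congrArg Subtype.val h⟩, rfl⟩
  · rintro ⟨z, rfl⟩
    exact Subtype.ext z.2

lemma sub_exact (B : Submodule R X) : Function.Exact B.subtype B.mkQ := by
  rw [LinearMap.exact_iff, Submodule.ker_mkQ, Submodule.range_subtype]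

lemma ker_smul_FF [IsNoetherianRing R] {f : R} (N : Type u) [AddCommGroup N] [Module R N] (y : R) (i : ℕ)
    (hA : FF f (EX R N (kerM X y) i))
    (hC : ∀ j, i = j + 1 → FF f (EX R N (X ⧸ ranM X y) j)) :
    FF f (kerM (EX R N X i) y) := by
  let ι := (ranM X y).subtype
  have hcomp : ∀ x : EX R N X i, EX.map N ι i (EX.map N (piM X y) i x) = y • x := by
    intro x
    rw [EX.map_comp]
    have h1 : ι ∘ₗ piM X y = y • (LinearMap.id : X →ₗ[R] X) := by ext x; rfl
    rw [h1, EX.map_smul_id]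
  have hker : FF f (LinearMap.ker (EX.map N ι i)) := by
    cases i with
    | zero =>
      have h1 := EX.map_zero_injective (R := R) N (seqA_inj (X := X) y)
      have : LinearMap.ker (EX.map N ι 0) = ⊥ := LinearMap.ker_eq_bot.2
        (EX.map_zero_injective (R := R) N (f := ι) (Submodule.subtype_injective _))
      rw [this]; exact FF.of_finite f
    | succ j =>
      have ex := EX.exact₁ (R := R) N (f := ι) (g := (ranM X y).mkQ) (Submodule.subtype_injective _)
        (Submodule.mkQ_surjective _) (sub_exact _) j
      refine (hC j rfl).of_surj (φ := (EX.δ (R := R) N (f := ι) (g := (ranM X y).mkQ)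
        (Submodule.subtype_injective _)
        (Submodule.mkQ_surjective _) (sub_exact _) j).codRestrict _ (fun x => ex.apply_apply_eq_zero x)) ?_
      rintro ⟨x, hx⟩
      obtain ⟨z, rfl⟩ := (ex x).1 hx
      exact ⟨z, rfl⟩
  have ex2 := EX.exact₂ (R := R) N (seqA_inj (X := X) y) (seqA_surj y) (seqA_exact y) i
  refine FF.mid (φ := (EX.map N (kerM X y).subtype i).codRestrict (kerM (EX R N X i) y) (fun z => by
      rw [mem_kerM, ← hcomp, ex2.apply_apply_eq_zero, map_zero]))
    (ψ := ((EX.map N (piM X y) i) ∘ₗ (kerM (EX R N X i) y).subtype).codRestrict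
      (LinearMap.ker (EX.map N ι i)) (fun x => by
        rw [LinearMap.mem_ker]; exact (hcomp x.1).trans x.2)) ?_ hA hker
  rintro ⟨x, hx⟩
  constructor
  · intro h
    obtain ⟨z, hz⟩ := (ex2 x).1 (congrArg Subtype.val h)
    exact ⟨z, Subtype.ext hz⟩
  · rintro ⟨z, hz⟩
    apply Subtype.ext
    have : x = EX.map N (kerM X y).subtype i z := (congrArg Subtype.val hz).symm
    change EX.map N (piM X y) i x = 0
    rw [this]
    exact ex2.apply_apply_eq_zero z

lemma quot_smul {a : Ideal R} {r : R} (hr : r ∈ a) (n : R ⧸ a) : r • n = 0 := by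
  obtain ⟨n, rfl⟩ := Ideal.Quotient.mk_surjective n
  rw [Algebra.smul_def]
  exact Ideal.Quotient.eq_zero_iff_mem.2 (Ideal.mul_mem_right _ _ hr)

lemma FF_of_ker [IsNoetherianRing R] {f : R} {a : Ideal R} {y : R} (hy : y ∈ a) {i : ℕ}
    (h : FF f (kerM (EX R (R ⧸ a) X i) y)) : FF f (EX R (R ⧸ a) X i) := by
  refine h.of_surj (φ := (kerM (EX R (R ⧸ a) X i) y).subtype) ?_
  intro x
  exact ⟨⟨x, EX.smul_eq_zero _ (quot_smul hy) i x⟩, rfl⟩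

variable {a : Ideal R}

lemma K0_iso_kerM {x : R} (hx : x ∈ a) : Nonempty (K0 a (kerM X x) ≃ₗ[R] K0 a X) := by
  refine ⟨LinearEquiv.ofBijective (((kerM X x).subtype ∘ₗ (K0 a (kerM X x)).subtype).codRestrict
    (K0 a X) ?_) ⟨?_, ?_⟩⟩
  · rintro ⟨z, hz⟩
    rw [mem_K0] at hz ⊢
    intro r hr
    exact congrArg Subtype.val (hz r hr)
  · intro z w h
    have h9 := congrArg Subtype.val h
    exact Subtype.ext (Subtype.ext h9)
  · rintro ⟨z, hz⟩
    rw [mem_K0] at hz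
    refine ⟨⟨⟨z, hz x hx⟩, ?_⟩, rfl⟩
    rw [mem_K0]
    intro r hr
    exact Subtype.ext (hz r hr)

variable [IsNoetherianRing R]

lemma E1_ker {f : R} (N : Type u) [AddCommGroup N] [Module R N] (x : R) (h0 : FF f (EX R N X 0))
    (h1 : FF f (EX R N X 1)) : FF f (EX R N (kerM X x) 1) := by
  have h2 : FF f (EX R N (ranM X x) 0) := h0.of_inj
    (EX.map_zero_injective (R := R) N (f := (ranM X x).subtype) (Submodule.subtype_injective _))
  exact FF.mid (EX.exact₁ (R := R) N (seqA_inj (X := X) x) (seqA_surj x) (seqA_exact x) 0) h2 h1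

/-- the module `Z` -/
abbrev ZZ (x : R) (L : Submodule R X) : Type u := (X ⧸ ranM X x) ⧸ L.map (ranM X x).mkQ

lemma stepU1 {f : R} (N : Type u) [AddCommGroup N] [Module R N] [Module.Finite R N] (x : R)
    {L : Submodule R X} (hL : L.FG) (h0 : FF f (EX R N X 0))
    (h1 : FF f (EX R N X 1)) (h2 : FF f (EX R N (kerM X x) 2)) : FF f (EX R N (ZZ x L) 0) := by
  have hB : FF f (EX R N (ranM X x) 1) :=
    FF.mid (EX.exact₃ (R := R) N (seqA_inj (X := X) x) (seqA_surj x) (seqA_exact x) 1) h1 h2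
  have hC : FF f (EX R N (X ⧸ ranM X x) 0) :=
    FF.mid (EX.exact₃ (R := R) N (Submodule.subtype_injective (ranM X x))
      (Submodule.mkQ_surjective _) (sub_exact _) 0) h0 hB
  have : Module.Finite R (L.map (ranM X x).mkQ) := Module.Finite.iff_fg.2 (hL.map _)
  exact FF.mid (EX.exact₃ (R := R) N (Submodule.subtype_injective (L.map (ranM X x).mkQ))
      (Submodule.mkQ_surjective _) (sub_exact _) 0) hC (FF.of_finite f)

lemma stepU2 {f : R} {x : R} (hx : x ∈ a)
    {L : Submodule R X} (hL : L.FG) (hA : ∀ i, FF f (EX R (R ⧸ a) (kerM X x) i))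
    (hZ : ∀ i, FF f (EX R (R ⧸ a) (ZZ x L) i)) (i : ℕ) : FF f (EX R (R ⧸ a) X i) := by
  have : Module.Finite R (L.map (ranM X x).mkQ) := Module.Finite.iff_fg.2 (hL.map _)
  have hC : ∀ i, FF f (EX R (R ⧸ a) (X ⧸ ranM X x) i) := fun i =>
    FF.mid (EX.exact₂ (R := R) (R ⧸ a) (Submodule.subtype_injective (L.map (ranM X x).mkQ))
      (Submodule.mkQ_surjective _) (sub_exact _) i) (FF.of_finite f) (hZ i)
  exact FF_of_ker hx (ker_smul_FF (R ⧸ a) x i (hA i) (fun j _ => hC j))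

lemma ZZ_tors {x : R} {L : Submodule R X} (h : Tors a X) : Tors a (ZZ x L) :=
  (h.surj (Submodule.mkQ_surjective (ranM X x))).surj (Submodule.mkQ_surjective _)

lemma ZZ_S {x : R} {L : Submodule R X} {S : Submonoid R}
    (h : ∀ c : X, ∃ u ∈ S, u • c ∈ ranM X x ⊔ L) (z : ZZ x L) : ∃ u ∈ S, u • z = 0 := by
  obtain ⟨c, rfl⟩ := Submodule.mkQ_surjective _ z
  obtain ⟨c, rfl⟩ := Submodule.mkQ_surjective _ c
  obtain ⟨u, hu, h⟩ := h c
  refine ⟨u, hu, ?_⟩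
  rw [← map_smul, ← map_smul]
  obtain ⟨y, hy, l, hl, h⟩ := Submodule.mem_sup.1 h
  rw [← h, map_add]
  have h1 : (ranM X x).mkQ y = 0 := by simpa using hy
  rw [h1, zero_add]
  have : (ranM X x).mkQ l ∈ L.map (ranM X x).mkQ := ⟨l, hl, rfl⟩
  exact (Submodule.Quotient.mk_eq_zero _).2 this

/-- a common annihilator for a finite `S`-torsion module -/
lemma exists_common {E : Type u} [AddCommGroup E] [Module R E] {S : Submonoid R} (L : Submodule R E)
    (hL : L.FG) (h : ∀ e : E, ∃ u ∈ S, u • e = 0) : ∃ u ∈ S, ∀ e ∈ L, u • e = 0 := by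
  classical
  obtain ⟨s, rfl⟩ := hL
  choose u hu hu2 using h
  refine ⟨∏ e ∈ s, u e, Submonoid.prod_mem _ (fun e _ => hu e), ?_⟩
  intro e he
  induction he using Submodule.span_induction with
  | mem x hx =>
    rw [← Finset.prod_erase_mul _ _ hx, mul_smul, hu2, smul_zero]
  | zero => simp
  | add x y _ _ hx hy => rw [smul_add, hx, hy, add_zero]
  | smul r x _ hx => rw [smul_comm, hx, smul_zero]
end mlem

section avoid
variable {R : Type u} [CommRing R]
lemma exists_mem_avoid (a : Ideal R) (T : Finset (Ideal R)) (h1 : ∀ t ∈ T, t.IsPrime)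
    (h2 : ∀ t ∈ T, ¬ a ≤ t) : ∃ x ∈ a, ∀ t ∈ T, x ∉ t := by
  by_contra! hc
  obtain ⟨t, ht, hle⟩ := (Ideal.subset_union_prime (s := T) (f := id) ⊤ ⊤ (I := a)
    (fun i hi _ _ => h1 i hi)).1 (by
      intro x hx
      obtain ⟨t, ht, hxt⟩ := hc x hx
      simp only [Set.mem_iUnion]
      exact ⟨t, ht, hxt⟩)
  exact h2 t ht hle

lemma tors_of_span {X : Type u} [AddCommGroup X] [Module R X] (s : Set R)
    (h : ∀ f ∈ s, ∀ x : X, ∃ n : ℕ, f ^ n • x = 0) : Tors (Ideal.span s) X := by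
  intro f hf x
  have : Ideal.span s ≤ Ideal.radical (LinearMap.ker (LinearMap.toSpanSingleton R X x) : Ideal R) := by
    rw [Ideal.span_le]
    intro f hf
    obtain ⟨n, hn⟩ := h f hf x
    exact ⟨n, hn⟩
  obtain ⟨n, hn⟩ := this hf
  exact ⟨n, hn⟩
end avoid


section lemX
variable {R : Type u} [CommRing R] [IsNoetherianRing R]
variable {X : Type u} [AddCommGroup X] [Module R X] {a : Ideal R}

lemma lemX (hX : Tors a X) (hfin : Module.Finite R (K0 a X)) (J : Ideal R)
    (hJ : ∀ r ∈ J, ∀ x ∈ K0 a X, r • x = 0) (b : Ideal R) (hb : ¬ a ≤ b.radical) :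
    ∃ x ∈ a, x ∉ b ∧ ∃ L : Submodule R X, L.FG ∧ ∀ c : X, ∃ u ∈ Sc J, u • c ∈ ranM X x ⊔ L := by
  classical
  let S := Sc J
  let R' := Localization S
  let X' := LocalizedModule S X
  let a' : Ideal R' := a.map (algebraMap R R')
  let j : X →ₗ[R] X' := LocalizedModule.mkLinearMap S X
  have hrep : ∀ ξ : X', ∃ (x : X) (s : S), (s : R) • ξ = j x := by
    intro ξ
    obtain ⟨⟨x, s⟩, h⟩ := IsLocalizedModule.surj S j ξ
    exact ⟨x, s, h⟩
  have hunit : ∀ (s : S) (ξ : X'), (s : R) • ξ = 0 → ξ = 0 := by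
    intro s ξ h
    have := (Module.End.isUnit_iff _).1 (IsLocalizedModule.map_units j s)
    exact this.1 (h.trans (map_zero _).symm)
  have hzero : ∀ x : X, j x = 0 → ∃ s : S, (s : R) • x = 0 := by
    intro x h
    obtain ⟨s, hs⟩ := (IsLocalizedModule.eq_zero_iff S j).1 h
    exact ⟨s, hs⟩
  have hsm : ∀ (r : R) (ξ : X'), algebraMap R R' r • ξ = r • ξ := fun r ξ => algebraMap_smul R' r ξ
  have hX' : Tors a' X' := by
    apply tors_of_span
    rintro _ ⟨f, hf, rfl⟩ ξ
    obtain ⟨x, s, h⟩ := hrep ξ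
    obtain ⟨n, hn⟩ := hX f hf x
    refine ⟨n, hunit s _ ?_⟩
    rw [← map_pow]
    erw [hsm]
    rw [smul_comm, h, ← map_smul, hn, map_zero]
  have hK : ∀ ξ ∈ K0 a' X', ∃ x ∈ K0 a X, ∃ s : S, (s : R) • ξ = j x := by
    intro ξ hξ
    rw [mem_K0] at hξ
    obtain ⟨x, s, h⟩ := hrep ξ
    have h1 : ∀ r ∈ a, ∃ u : S, (u : R) • (r • x) = 0 := by
      intro r hr
      apply hzero
      rw [map_smul, ← h, smul_comm, ← hsm r, hξ _ (Ideal.mem_map_of_mem _ hr), smul_zero]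
    obtain ⟨t, ht⟩ := IsNoetherian.noetherian a
    choose! u hu using h1
    refine ⟨(∏ r ∈ t, (u r : R)) • x, ?_, ⟨(∏ r ∈ t, u r) * s, ?_⟩⟩
    · rw [mem_K0]
      intro r hr
      rw [← ht] at hr
      induction hr using Submodule.span_induction with
      | mem r hr =>
        rw [← Finset.prod_erase_mul _ _ hr, smul_comm, mul_smul, hu r (ht ▸ Submodule.subset_span hr), smul_zero]
      | zero => simp
      | add x y _ _ hx hy => rw [add_smul, hx, hy, add_zero]
      | smul r x _ hx => rw [smul_assoc, hx, smul_zero]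
    · rw [map_smul, ← h, ← mul_smul]
      simp
  have hKfin : Module.Finite R' (K0 a' X') := by
    obtain ⟨t, ht⟩ := hfin.1
    have hmem : ∀ x : K0 a X, j x ∈ K0 a' X' := by
      intro x
      rw [mem_K0]
      intro r hr
      have : a' ≤ (LinearMap.ker (LinearMap.toSpanSingleton R' X' (j x)) : Ideal R') := by
        refine Ideal.map_le_iff_le_comap.2 ?_
        intro r hr
        change algebraMap R R' r • (j x) = 0
        rw [hsm, ← map_smul, mem_K0.1 x.2 r hr, map_zero]
      exact this hr
    refine Module.Finite.iff_fg.2 ⟨t.image (fun x : K0 a X => j x), ?_⟩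
    apply le_antisymm
    · rw [Submodule.span_le]
      intro ξ hξ
      simp only [Finset.coe_image, Set.mem_image, Finset.mem_coe] at hξ
      obtain ⟨x, hx, rfl⟩ := hξ
      exact hmem x
    · intro ξ hξ
      obtain ⟨x, hx, s, h⟩ := hK ξ hξ
      have h1 : ∀ y : K0 a X, j y ∈ Submodule.span R' ((t.image (fun x : K0 a X => j x) : Finset X') : Set X') := by
        intro y
        have hy : y ∈ Submodule.span R (t : Set (K0 a X)) := ht ▸ trivial
        induction hy using Submodule.span_induction with
        | mem y hy => exact Submodule.subset_span (Finset.mem_coe.2 (Finset.mem_image_of_mem _ hy))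
        | zero => simp
        | add y z _ _ hy hz =>
          rw [Submodule.coe_add, map_add]; exact Submodule.add_mem _ hy hz
        | smul r y _ hy =>
          rw [Submodule.coe_smul, map_smul, ← hsm]; exact Submodule.smul_mem _ _ hy
      have h2 : ξ = (IsLocalization.mk' R' 1 s : R') • j x := by
        rw [← h, ← hsm, ← mul_smul, IsLocalization.mk'_spec, map_one, one_smul]
      rw [h2]
      exact Submodule.smul_mem _ _ (h1 ⟨x, hx⟩)
  have hKart : IsArtinian R' (K0 a' X') := by
    refine artinian_of_D0 (D0_loc J) ?_
    rintro r hr ⟨ξ, hξ⟩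
    obtain ⟨x, hx, s, h⟩ := hK ξ hξ
    have : J.map (algebraMap R R') ≤ (LinearMap.ker (LinearMap.toSpanSingleton R' X' ξ) : Ideal R') := by
      refine Ideal.map_le_iff_le_comap.2 ?_
      intro r hr
      change algebraMap R R' r • ξ = 0
      apply hunit s
      rw [hsm, smul_comm, h, ← map_smul, hJ r hr x hx, map_zero]
    exact Subtype.ext (this hr)
  have hart : IsArtinian R' X' := artinian_of_K0 hX' hKart
  obtain ⟨T, hT, hirr⟩ := exists_supIrred_decomposition (⊤ : Submodule R' X')
  have hprime : ∀ N : Submodule R' X', ∃ p : Ideal R', N ∈ T → (p.IsPrime ∧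
      (∀ r ∈ p, ∃ n : ℕ, ∀ x ∈ N, r ^ n • x = 0) ∧ ∀ r ∉ p, ∀ x ∈ N, ∃ y ∈ N, r • y = x) := by
    intro N
    by_cases hN : N ∈ T
    · obtain ⟨p, hp⟩ := supIrred_prime (hirr hN)
      exact ⟨p, fun _ => hp⟩
    · exact ⟨⊥, fun h => absurd h hN⟩
  choose p hp using hprime
  obtain ⟨q, hq, hbq, haq⟩ : ∃ q : Ideal R, q.IsPrime ∧ b ≤ q ∧ ¬ a ≤ q := by
    by_contra! hc
    apply hb
    rw [Ideal.radical_eq_sInf]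
    refine le_sInf ?_
    rintro q ⟨h1, h2⟩
    exact hc q h2 h1
  let pc : Submodule R' X' → Ideal R := fun N => (p N).comap (algebraMap R R')
  obtain ⟨x, hxa, hx⟩ := exists_mem_avoid a
    (insert q ((T.filter (fun N => ¬ a ≤ pc N)).image pc)) (by
      intro t ht
      rcases Finset.mem_insert.1 ht with rfl | ht
      · exact hq
      · obtain ⟨N, hN, rfl⟩ := Finset.mem_image.1 ht
        exact (hp N (Finset.mem_filter.1 hN).1).1.comap _) (by
      intro t ht
      rcases Finset.mem_insert.1 ht with rfl | ht
      · exact haq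
      · obtain ⟨N, hN, rfl⟩ := Finset.mem_image.1 ht
        exact (Finset.mem_filter.1 hN).2)
  refine ⟨x, hxa, fun h => hx q (by simp) (hbq h), ?_⟩
  have hN : ∀ N ∈ T, ∃ G : Finset X', ∀ ξ ∈ N, ξ ∈ LinearMap.range (LinearMap.lsmul R' X' (algebraMap R R' x)) ⊔
      Submodule.span R' (G : Set X') := by
    intro N hN
    obtain ⟨_, h1, h2⟩ := hp N hN
    by_cases hap : a ≤ pc N
    · have : N.FG := by
        refine fg_of_le_prime (a := a') hKfin ?_
        intro r hr
        exact h1 r ((Ideal.map_le_iff_le_comap.2 hap) hr)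
      obtain ⟨G, hG⟩ := this
      exact ⟨G, fun ξ hξ => Submodule.mem_sup_right (hG ▸ hξ)⟩
    · refine ⟨∅, fun ξ hξ => Submodule.mem_sup_left ?_⟩
      have hxN : x ∉ pc N := hx _ (Finset.mem_insert_of_mem
        (Finset.mem_image_of_mem _ (Finset.mem_filter.2 ⟨hN, hap⟩)))
      obtain ⟨y, _, hy⟩ := h2 (algebraMap R R' x) hxN ξ hξ
      exact ⟨y, hy⟩
  choose! G hG using hN
  choose m s hms using hrep
  let G' : Finset X' := T.biUnion G
  refine ⟨Submodule.span R ((G'.image m : Finset X) : Set X), ⟨_, rfl⟩, ?_⟩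
  set L := Submodule.span R ((G'.image m : Finset X) : Set X) with hL
  -- saturation
  let W : Submodule R' X' :=
    { carrier := {ξ | ∃ u : S, ∃ w ∈ ranM X x ⊔ L, (u : R) • ξ = j w}
      zero_mem' := ⟨1, 0, Submodule.zero_mem _, by simp⟩
      add_mem' := by
        rintro ξ η ⟨u, w, hw, h⟩ ⟨u', w', hw', h'⟩
        refine ⟨u * u', (u' : R) • w + (u : R) • w', Submodule.add_mem _ (Submodule.smul_mem _ _ hw)
          (Submodule.smul_mem _ _ hw'), ?_⟩
        rw [map_add, map_smul, map_smul, ← h, ← h', smul_add, Submonoid.coe_mul, mul_smul, mul_smul,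
          smul_comm (u' : R) (u : R) ξ]
      smul_mem' := by
        rintro c ξ ⟨u, w, hw, h⟩
        obtain ⟨⟨r, v⟩, hr⟩ := IsLocalization.surj S c
        refine ⟨v * u, r • w, Submodule.smul_mem _ _ hw, ?_⟩
        rw [map_smul, ← h, Submonoid.coe_mul, mul_smul, smul_comm (u : R) c ξ, ← hsm (v : R),
          ← mul_smul, mul_comm, hr, hsm] }
  have hW : W = ⊤ := by
    rw [eq_top_iff]
    refine hT.symm.le.trans ?_
    apply Finset.sup_le
    intro N hN ξ hξ
    have h1 := hG N hN ξ hξ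
    refine (sup_le ?_ ?_ : _ ≤ W) h1
    · rintro _ ⟨η, rfl⟩
      refine ⟨s η, x • m η, Submodule.mem_sup_left ⟨m η, rfl⟩, ?_⟩
      rw [map_smul, ← hms]
      change ((s η : S) : R) • (algebraMap R R' x • η) = _
      rw [hsm, smul_comm]
    · rw [Submodule.span_le]
      intro η hη
      refine ⟨s η, m η, Submodule.mem_sup_right (Submodule.subset_span ?_), hms η⟩
      rw [Finset.mem_coe]
      exact Finset.mem_image_of_mem _ (Finset.mem_biUnion.2 ⟨N, hN, hη⟩)
  intro c
  have hc : j c ∈ W := hW ▸ trivial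
  obtain ⟨u, w, hw, h⟩ := hc
  obtain ⟨v, hv⟩ := hzero ((u : R) • c - w) (by rw [map_sub, map_smul, h, sub_self])
  refine ⟨v * u, S.mul_mem v.2 u.2, ?_⟩
  rw [smul_sub, sub_eq_zero, ← mul_smul] at hv
  rw [hv]
  exact Submodule.smul_mem _ _ hw

lemma pow_of_rad {b : Ideal R} (hb : ∀ r ∈ b, ∀ x : X, r • x = 0) (hab : a ≤ b.radical)
    (h : Module.Finite R (K0 a X)) : Module.Finite R X := by
  obtain ⟨k, hk⟩ := Ideal.exists_pow_le_of_le_radical_of_fg hab (IsNoetherian.noetherian a)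
  exact finite_of_pow k (fun r hr x => hb r (hk hr) x) h

end lemX

section C1
variable {R : Type u} [CommRing R] [IsNoetherianRing R] {a : Ideal R}

lemma K0_fin_of {X : Type u} [AddCommGroup X] [Module R X]
    (h : Module.Finite R (EX R (R ⧸ a) X 0)) : Module.Finite R (K0 a X) :=
  Module.Finite.equiv (ex0 a X)

lemma C1_aux {J : Ideal R} (hJ1 : D1 J) (b : Ideal R) : ∀ (X : Type u) [AddCommGroup X] [Module R X],
    (∀ r ∈ b, ∀ x : X, r • x = 0) → Tors a X → (∀ r ∈ J, ∀ x ∈ K0 a X, r • x = 0) →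
    Module.Finite R (EX R (R ⧸ a) X 0) → Module.Finite R (EX R (R ⧸ a) X 1) → 
    ∀ i, Module.Finite R (EX R (R ⧸ a) X i) := by
  induction b using WellFoundedGT.induction with
  | _ b ih =>
  intro X _ _ hb hX hJ h0 h1 i
  have hK := K0_fin_of h0
  by_cases hab : a ≤ b.radical
  · have := pow_of_rad hb hab hK
    infer_instance
  obtain ⟨x, hxa, hxb, L, hL, hLS⟩ := lemX hX hK J hJ b hab
  obtain ⟨e⟩ := K0_iso_kerM (X := X) hxa
  have hA : ∀ i, Module.Finite R (EX R (R ⧸ a) (kerM X x) i) := by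
    refine ih (b ⊔ Ideal.span {x}) ?_ (kerM X x) ?_ (hX.inj (Submodule.subtype_injective _)) ?_ ?_ ?_
    · refine lt_of_le_of_ne le_sup_left (fun e => hxb ?_)
      rw [e]; exact Ideal.mem_sup_right (Ideal.mem_span_singleton_self x)
    · intro r hr y
      obtain ⟨r1, h1, r2, h2, rfl⟩ := Submodule.mem_sup.1 hr
      obtain ⟨t, rfl⟩ := Ideal.mem_span_singleton'.1 h2
      rw [add_smul, mul_smul]
      have e1 : r1 • y = 0 := Subtype.ext (hb r1 h1 y)
      have e2 : x • y = 0 := Subtype.ext y.2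
      rw [e1, e2, smul_zero, add_zero]
    · intro r hr y hy
      have : r • (⟨y, hy⟩ : K0 a (kerM X x)) = 0 := by
        apply e.injective
        rw [map_smul, map_zero]
        exact Subtype.ext (hJ r hr _ (e ⟨y, hy⟩).2)
      exact congrArg Subtype.val this
    · exact Module.Finite.equiv (e.symm.trans (ex0 a (kerM X x)).symm)
    · exact (E1_ker (R ⧸ a) x (FF.of_finite 1) (FF.of_finite 1)).finite
  have hZ0 : Module.Finite R (K0 a (ZZ x L)) :=
    K0_fin_of (stepU1 (f := 1) (R ⧸ a) x hL (FF.of_finite 1) (FF.of_finite 1) (FF.of_finite 1)).finite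
  have hXJ : Tors J X := fun f hf y => tors_of_K0 hX (f := f) (fun z hz => ⟨1, by
    rw [pow_one]; exact hJ f hf z hz⟩) y
  have hZJ : Tors J (K0 a (ZZ x L)) := (ZZ_tors hXJ).inj (Submodule.subtype_injective _)
  obtain ⟨k, hk⟩ := hZJ.exists_pow_finite
  obtain ⟨s, hs, hs2⟩ := exists_common (R := R) (S := Sc J) (K0 a (ZZ x L)) (Module.Finite.iff_fg.1 hZ0)
    (ZZ_S hLS)
  have hart : IsArtinian R (K0 a (ZZ x L)) := by
    refine artinian_of_D0 (J := J ^ k ⊔ Ideal.span {s}) ?_ ?_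
    · refine (hJ1.sup_span hs).of_radical ?_
      refine sup_le ?_ (le_sup_right.trans Ideal.le_radical)
      intro r hr
      exact ⟨k, Ideal.mem_sup_left (Ideal.pow_mem_pow hr k)⟩
    · intro r hr y
      obtain ⟨r1, h1, r2, h2, rfl⟩ := Submodule.mem_sup.1 hr
      obtain ⟨t, rfl⟩ := Ideal.mem_span_singleton'.1 h2
      have e2 : s • y = 0 := Subtype.ext (hs2 y y.2)
      rw [add_smul, mul_smul, hk r1 h1, e2, smul_zero, add_zero]
  have hZ := fun i => C0_thm (ZZ_tors (x := x) (L := L) hX) hZ0 hart i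
  exact (stepU2 (f := 1) hxa hL (fun i => FF.of_finite 1) (fun i => FF.of_finite 1) i).finite

/-- C_1 -/
theorem C1_thm {J : Ideal R} (hJ1 : D1 J) {X : Type u} [AddCommGroup X] [Module R X]
    (hX : Tors a X) (hJ : ∀ r ∈ J, ∀ x ∈ K0 a X, r • x = 0)
    (h0 : Module.Finite R (EX R (R ⧸ a) X 0)) (h1 : Module.Finite R (EX R (R ⧸ a) X 1)) (i : ℕ) :
    Module.Finite R (EX R (R ⧸ a) X i) :=
  C1_aux hJ1 ⊥ X (fun r hr x => by rw [Submodule.mem_bot] at hr; rw [hr, zero_smul]) hX hJ h0 h1 i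

lemma O_aux (b : Ideal R) : ∀ (X : Type u) [AddCommGroup X] [Module R X],
    (∀ r ∈ b, ∀ x : X, r • x = 0) → Tors a X → 
    Module.Finite R (EX R (R ⧸ a) X 0) → Module.Finite R (EX R (R ⧸ a) X 1) → 
    ∃ f ∈ Sc a, ∀ i, FF f (EX R (R ⧸ a) X i) := by
  induction b using WellFoundedGT.induction with
  | _ b ih =>
  intro X _ _ hb hX h0 h1
  have hK := K0_fin_of h0
  by_cases hab : a ≤ b.radical
  · have := pow_of_rad hb hab hK
    exact ⟨1, (Sc a).one_mem, fun i => FF.of_finite 1⟩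
  obtain ⟨x, hxa, hxb, L, hL, hLS⟩ := lemX hX hK a (fun r hr x hx => mem_K0.1 hx r hr) b hab
  obtain ⟨e⟩ := K0_iso_kerM (X := X) hxa
  obtain ⟨f, hf, hA⟩ : ∃ f ∈ Sc a, ∀ i, FF f (EX R (R ⧸ a) (kerM X x) i) := by
    refine ih (b ⊔ Ideal.span {x}) ?_ (kerM X x) ?_ (hX.inj (Submodule.subtype_injective _)) ?_ ?_
    · refine lt_of_le_of_ne le_sup_left (fun e => hxb ?_)
      rw [e]; exact Ideal.mem_sup_right (Ideal.mem_span_singleton_self x)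
    · intro r hr y
      obtain ⟨r1, h1, r2, h2, rfl⟩ := Submodule.mem_sup.1 hr
      obtain ⟨t, rfl⟩ := Ideal.mem_span_singleton'.1 h2
      rw [add_smul, mul_smul]
      have e1 : r1 • y = 0 := Subtype.ext (hb r1 h1 y)
      have e2 : x • y = 0 := Subtype.ext y.2
      rw [e1, e2, smul_zero, add_zero]
    · exact Module.Finite.equiv (e.symm.trans (ex0 a (kerM X x)).symm)
    · exact (E1_ker (R ⧸ a) x (FF.of_finite 1) (FF.of_finite 1)).finite
  have hZ0 : FF f (K0 a (ZZ x L)) :=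
    (stepU1 (f := f) (R ⧸ a) x hL (FF.of_finite f) (FF.of_finite f) (hA 2)).of_surj
      (φ := (ex0 a (ZZ x L)).toLinearMap) (ex0 a (ZZ x L)).surjective
  obtain ⟨L', hL', hL'2⟩ := hZ0
  obtain ⟨s, hs, hs2⟩ := exists_common (R := R) (S := Sc a) L' hL' (fun e => by
    obtain ⟨u, hu, h⟩ := ZZ_S hLS e.1
    exact ⟨u, hu, Subtype.ext h⟩)
  have hZt : Tors (Ideal.span {s * f}) (ZZ x L) := by
    apply tors_of_span
    rintro g hg z
    rw [Set.mem_singleton_iff] at hg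
    subst hg
    refine tors_of_K0 (ZZ_tors hX) ?_ z
    intro z hz
    obtain ⟨n, hn⟩ := hL'2 ⟨z, hz⟩
    refine ⟨n + 1, ?_⟩
    have := hs2 _ hn
    have h3 : s • (f ^ n • z) = 0 := congrArg Subtype.val this
    rw [mul_pow, pow_succ, pow_succ]
    calc (s ^ n * s * (f ^ n * f)) • z = (s ^ n * f) • (s • (f ^ n • z)) := by
          rw [← mul_smul, ← mul_smul]; congr 1; ring
      _ = 0 := by rw [h3, smul_zero]
  refine ⟨s * f, (Sc a).mul_mem hs hf, ?_⟩
  refine stepU2 hxa hL (fun i => (hA i).mul s) (fun i => FF.of_tors ?_)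
  exact fun z => EX.tors (R ⧸ a) hZt i (s * f) (Ideal.mem_span_singleton_self _) z

theorem O_thm {X : Type u} [AddCommGroup X] [Module R X]
    (hX : Tors a X) (h0 : Module.Finite R (EX R (R ⧸ a) X 0))
    (h1 : Module.Finite R (EX R (R ⧸ a) X 1)) : ∃ f ∈ Sc a, ∀ i, FF f (EX R (R ⧸ a) X i) :=
  O_aux ⊥ X (fun r hr x => by rw [Submodule.mem_bot] at hr; rw [hr, zero_smul]) hX h0 h1

end C1


section A8
open TensorProduct

lemma coker_iso {S : Type u} [CommRing S] {A B C A' B' C' : Type u} [AddCommGroup A] [Module S A]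
    [AddCommGroup B] [Module S B] [AddCommGroup C] [Module S C] [AddCommGroup A'] [Module S A']
    [AddCommGroup B'] [Module S B'] [AddCommGroup C'] [Module S C']
    (f : A →ₗ[S] B) (g : B →ₗ[S] C) (f' : A' →ₗ[S] B') (g' : B' →ₗ[S] C')
    (hg : Function.Surjective g) (hg' : Function.Surjective g') (h : Function.Exact f g)
    (h' : Function.Exact f' g') (α : A ≃ₗ[S] A') (β : B ≃ₗ[S] B')
    (hc : ∀ x, β (f x) = f' (α x)) : Nonempty (C ≃ₗ[S] C') := by
  have e1 := g.quotKerEquivOfSurjective hg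
  have e2 := g'.quotKerEquivOfSurjective hg'
  refine ⟨e1.symm.trans ((Submodule.Quotient.equiv _ _ β ?_).trans e2)⟩
  rw [h.linearMap_ker_eq, h'.linearMap_ker_eq]
  ext y
  constructor
  · rintro ⟨_, ⟨x, rfl⟩, rfl⟩
    exact ⟨α x, (hc x).symm⟩
  · rintro ⟨x, rfl⟩
    refine ⟨f (α.symm x), ⟨_, rfl⟩, ?_⟩
    change β (f _) = _
    rw [hc]; simp

/-- Ext iso in the first variable -/
noncomputable def EX.congrL {R : Type u} [CommRing R] {N N' X : Type u} [AddCommGroup N] [Module R N] [AddCommGroup N'] [Module R N']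
    [AddCommGroup X] [Module R X] (e : N ≃ₗ[R] N') (i : ℕ) : EX R N X i ≃ₗ[R] EX R N' X i :=
  LinearEquiv.ofLinearMap
    ((Abelian.Ext.mk₀ (ModuleCat.ofHom e.symm.toLinearMap)).precompOfLinear R (ModuleCat.of R X) (zero_add i))
    ((Abelian.Ext.mk₀ (ModuleCat.ofHom e.toLinearMap)).precompOfLinear R (ModuleCat.of R X) (zero_add i))
    (by
      ext x
      change (Abelian.Ext.mk₀ _).comp ((Abelian.Ext.mk₀ _).comp x (zero_add i)) (zero_add i) = x
      rw [Abelian.Ext.mk₀_comp_mk₀_assoc, ← ModuleCat.ofHom_comp]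
      simp)
    (by
      ext x
      change (Abelian.Ext.mk₀ _).comp ((Abelian.Ext.mk₀ _).comp x (zero_add i)) (zero_add i) = x
      rw [Abelian.Ext.mk₀_comp_mk₀_assoc, ← ModuleCat.ofHom_comp]
      simp)

variable {R : Type u} [CommRing R] [IsNoetherianRing R] (R' : Type u) [CommRing R'] [Algebra R R']
  [Module.Flat R R'] 

noncomputable def homBC (N X : Type u) [AddCommGroup N] [Module R N] [AddCommGroup X] [Module R X]
   [Module.Finite R N] :
   R' ⊗[R] (N →ₗ[R] X) ≃ₗ[R'] (R' ⊗[R] N →ₗ[R'] R' ⊗[R] X) :=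
  have : Module.FinitePresentation R N := Module.finitePresentation_of_finite R N
  (Module.FinitePresentation.isBaseChange_map R N X R').equiv

lemma homBC_tmul (N X : Type u) [AddCommGroup N] [Module R N] [AddCommGroup X] [Module R X]
   [Module.Finite R N] (r : R') (h : N →ₗ[R] X) : homBC R' N X (r ⊗ₜ h) = r • h.baseChange R' := by
  unfold homBC
  rw [IsBaseChange.equiv_tmul]; rfl

lemma coker_bc {A B C A' B' C' : Type u} [AddCommGroup A] [Module R A]
    [AddCommGroup B] [Module R B] [AddCommGroup C] [Module R C] [AddCommGroup A'] [Module R' A']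
    [AddCommGroup B'] [Module R' B'] [AddCommGroup C'] [Module R' C']
    (f : A →ₗ[R] B) (g : B →ₗ[R] C) (f' : A' →ₗ[R'] B') (g' : B' →ₗ[R'] C')
    (hg : Function.Surjective g) (hg' : Function.Surjective g') (h : Function.Exact f g)
    (h' : Function.Exact f' g') (α : R' ⊗[R] A ≃ₗ[R'] A') (β : R' ⊗[R] B ≃ₗ[R'] B')
    (hc : ∀ (r : R') x, β (r ⊗ₜ f x) = f' (α (r ⊗ₜ x))) : Nonempty (R' ⊗[R] C ≃ₗ[R'] C') := by
  refine coker_iso (f.baseChange R') (g.baseChange R') f' g'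
    (LinearMap.lTensor_surjective R' hg) hg' (lTensor_exact R' h hg) h' α β ?_
  intro x
  induction x using TensorProduct.induction_on with
  | zero => simp
  | add x y hx hy => simp only [map_add, hx, hy]
  | tmul r h => rw [LinearMap.baseChange_tmul, hc]

theorem bc_one (X : Type u) [AddCommGroup X] [Module R X] {K P N : Type u} [AddCommGroup N] [Module R N]
    [AddCommGroup K] [Module R K] [AddCommGroup P] [Module R P] [Module.Projective R P] [Module.Finite R P]
    [Module.Finite R K] {f : K →ₗ[R] P} {g : P →ₗ[R] N} (hf : Function.Injective f)
    (hg : Function.Surjective g) (hfg : Function.Exact f g) :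
    Nonempty (R' ⊗[R] EX R N X 1 ≃ₗ[R'] EX R' (R' ⊗[R] N) (R' ⊗[R] X) 1) := by
  have hf' : Function.Injective (f.baseChange R') :=
    Module.Flat.lTensor_preserves_injective_linearMap f hf
  have hg' : Function.Surjective (g.baseChange R') := LinearMap.lTensor_surjective R' hg
  have hex' : Function.Exact (f.baseChange R') (g.baseChange R') := lTensor_exact R' hfg hg
  have : Module.Projective R' (R' ⊗[R] P) := inferInstance
  let q : (K →ₗ[R] X) →ₗ[R] EX R N X 1 := EX.δ' X hf hg hfg 0 ∘ₗ (EX.zeroEquiv K).symm.toLinearMap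
  let q' : (R' ⊗[R] K →ₗ[R'] R' ⊗[R] X) →ₗ[R'] EX R' (R' ⊗[R] N) (R' ⊗[R] X) 1 :=
    EX.δ' (R' ⊗[R] X) hf' hg' hex' 0 ∘ₗ (EX.zeroEquiv (R' ⊗[R] K)).symm.toLinearMap
  have ex1 : Function.Exact (LinearMap.lcomp R X f) q := by
    intro h
    exact EX.δ'_zero_ker X hf hg hfg h
  have ex2 : Function.Exact (LinearMap.lcomp R' (R' ⊗[R] X) (f.baseChange R')) q' := by
    intro h
    exact EX.δ'_zero_ker (R' ⊗[R] X) hf' hg' hex' h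
  have s1 : Function.Surjective q :=
    (EX.δ'_surjective X hf hg hfg 0).comp (EX.zeroEquiv K).symm.surjective
  have s2 : Function.Surjective q' :=
    (EX.δ'_surjective (R' ⊗[R] X) hf' hg' hex' 0).comp (EX.zeroEquiv _).symm.surjective
  clear_value q q'
  refine coker_bc (R := R) (A' := R' ⊗[R] P →ₗ[R'] R' ⊗[R] X) (B' := R' ⊗[R] K →ₗ[R'] R' ⊗[R] X) R' (LinearMap.lcomp R X f) q
    (LinearMap.lcomp R' (R' ⊗[R] X) (f.baseChange R')) q'
    s1 s2 ex1 ex2 (homBC (R := R) R' P X) (homBC (R := R) R' K X) ?_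
  intro r h
  rw [homBC_tmul, homBC_tmul, map_smul]
  congr 1
  ext k
  simp

theorem bc (X : Type u) [AddCommGroup X] [Module R X] (i : ℕ) :
    ∀ (N : Type u) [AddCommGroup N] [Module R N] [Module.Finite R N],
    Nonempty (R' ⊗[R] EX R N X i ≃ₗ[R'] EX R' (R' ⊗[R] N) (R' ⊗[R] X) i) := by
  induction i with
  | zero =>
    intro N _ _ _
    exact ⟨((EX.zeroEquiv N).baseChange R R').trans ((homBC R' N X).trans (EX.zeroEquiv _).symm)⟩
  | succ i ih =>
    intro N _ _ _
    obtain ⟨m, g, hg⟩ := Module.Finite.exists_fin' R N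
    let K := LinearMap.ker g
    have hKf : Function.Injective K.subtype := Submodule.subtype_injective _
    have hex : Function.Exact K.subtype g := LinearMap.exact_subtype_ker_map g
    have hf' : Function.Injective (K.subtype.baseChange R') :=
      Module.Flat.lTensor_preserves_injective_linearMap K.subtype hKf
    have hg' : Function.Surjective (g.baseChange R') := LinearMap.lTensor_surjective R' hg
    have hex' : Function.Exact (K.subtype.baseChange R') (g.baseChange R') := lTensor_exact R' hex hg
    have : Module.Projective R' (R' ⊗[R] (Fin m → R)) := inferInstance
    cases i with
    | zero =>
      exact bc_one R' X hKf hg hex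
    | succ i =>
      obtain ⟨e⟩ := ih K
      have e1 : EX R K X (i+1) ≃ₗ[R] EX R N X (i+1+1) :=
        LinearEquiv.ofBijective (EX.δ' X hKf hg hex (i+1))
          ⟨EX.δ'_injective X hKf hg hex i, EX.δ'_surjective X hKf hg hex (i+1)⟩
      have e2 : EX R' (R' ⊗[R] K) (R' ⊗[R] X) (i+1) ≃ₗ[R'] EX R' (R' ⊗[R] N) (R' ⊗[R] X) (i+1+1) :=
        LinearEquiv.ofBijective (EX.δ' (R' ⊗[R] X) hf' hg' hex' (i+1))
          ⟨EX.δ'_injective _ hf' hg' hex' i, EX.δ'_surjective _ hf' hg' hex' (i+1)⟩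
      exact ⟨(e1.baseChange R R').symm.trans (e.trans e2)⟩

noncomputable def quotBC (a : Ideal R) : R' ⊗[R] (R ⧸ a) ≃ₗ[R'] R' ⧸ (a.map (algebraMap R R')) :=
  (Algebra.TensorProduct.quotIdealMapEquivTensorQuot R' a).symm.toLinearEquiv

theorem bcE (X : Type u) [AddCommGroup X] [Module R X] (a : Ideal R) (i : ℕ) :
    Nonempty (R' ⊗[R] EX R (R ⧸ a) X i ≃ₗ[R']
      EX R' (R' ⧸ a.map (algebraMap R R')) (R' ⊗[R] X) i) := by
  obtain ⟨e⟩ := bc (R := R) R' X i (R ⧸ a)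
  exact ⟨e.trans (EX.congrL (quotBC R' a) i)⟩

lemma tors_bc {X : Type u} [AddCommGroup X] [Module R X] {a : Ideal R} (h : Tors a X) :
    Tors (a.map (algebraMap R R')) (R' ⊗[R] X) := by
  refine tors_of_span _ ?_
  rintro _ ⟨r, hr, rfl⟩ x
  induction x using TensorProduct.induction_on with
  | zero => exact ⟨0, by simp⟩
  | tmul s x =>
    obtain ⟨n, hn⟩ := h r hr x
    refine ⟨n, ?_⟩
    rw [← map_pow, algebraMap_smul, ← TensorProduct.tmul_smul, hn, TensorProduct.tmul_zero]
  | add x y hx hy =>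
    obtain ⟨n, hn⟩ := hx
    obtain ⟨m, hm⟩ := hy
    refine ⟨n + m, ?_⟩
    rw [smul_add, pow_add, mul_smul, mul_smul, hm, smul_comm, hn]; simp
end A8


section CN
variable {S : Type u} [CommRing S]

/-- complete Nakayama -/
lemma complete_nakayama {f : S} (hS : IsPrecomplete (Ideal.span {f}) S) {M : Type u} [AddCommGroup M]
    [Module S M] (hM : ∀ m : M, (∀ n : ℕ, ∃ m', m = f ^ n • m') → m = 0) {k : ℕ} (v : Fin k → M)
    (hv : ∀ m : M, ∃ c : Fin k → S, ∃ m' : M, m = ∑ j, c j • v j + f • m') : Module.Finite S M := by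
  choose c nx hc using hv
  refine Module.Finite.of_surjective (Fintype.linearCombination S v) ?_
  intro m
  let sq : ℕ → M := fun n => nx^[n] m
  have hsq : ∀ n, sq (n+1) = nx (sq n) := fun n => Function.iterate_succ_apply' _ _ _
  let s : Fin k → ℕ → S := fun j n => ∑ i ∈ Finset.range n, f ^ i * c (sq i) j
  have hm : ∀ n, m = ∑ j, s j n • v j + f ^ n • sq n := by
    intro n
    induction n with
    | zero => simp [s, sq]
    | succ n ih =>
      have h1 := hc (sq n)
      rw [← hsq] at h1
      have : ∑ j, s j (n+1) • v j = ∑ j, s j n • v j + f ^ n • ∑ j, c (sq n) j • v j := by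
        simp only [s, Finset.sum_range_succ, add_smul, Finset.sum_add_distrib, Finset.smul_sum, mul_smul]
      rw [this, pow_succ, mul_smul, add_assoc, ← smul_add, ← h1]
      exact ih
  have hlim : ∀ j, ∃ L, ∀ n, ∃ y, s j n - L = f ^ n * y := by
    intro j
    obtain ⟨L, hL⟩ := hS.prec (f := s j) (by
      intro m n hmn
      rw [SModEq.sub_mem, smul_eq_mul, Ideal.mul_top, Ideal.span_singleton_pow, Ideal.mem_span_singleton]
      rw [← dvd_neg, neg_sub]
      simp only [s]
      rw [← Finset.sum_range_add_sum_Ico _ hmn, add_sub_cancel_left]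
      refine Finset.dvd_sum (fun i hi => ?_)
      exact Dvd.dvd.mul_right (pow_dvd_pow _ (Finset.mem_Ico.1 hi).1) _)
    refine ⟨L, fun n => ?_⟩
    have := hL n
    rw [SModEq.sub_mem, smul_eq_mul, Ideal.mul_top, Ideal.span_singleton_pow, Ideal.mem_span_singleton] at this
    exact this
  choose L y hL using hlim
  refine ⟨L, ?_⟩
  symm
  rw [← sub_eq_zero]
  apply hM
  intro n
  refine ⟨∑ j, y j n • v j + sq n, ?_⟩
  conv_lhs => rw [hm n]
  rw [Fintype.linearCombination_apply, smul_add, add_sub_right_comm, ← Finset.sum_sub_distrib, Finset.smul_sum]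
  congr 1
  refine Finset.sum_congr rfl (fun j _ => ?_)
  rw [← sub_smul, hL, mul_smul]

/-- version with a finite quotient -/
lemma complete_nakayama' {f : S} (hS : IsPrecomplete (Ideal.span {f}) S) {M : Type u} [AddCommGroup M]
    [Module S M] (hM : ∀ m : M, (∀ n : ℕ, ∃ m', m = f ^ n • m') → m = 0) {V : Type u} [AddCommGroup V]
    [Module S V] (φ : M →ₗ[S] V) (hφ : ∀ m, φ m = 0 → ∃ m', m = f • m')
    (hV : Module.Finite S (LinearMap.range φ)) : Module.Finite S M := by
  obtain ⟨k, g, hg⟩ := Module.Finite.exists_fin' S (LinearMap.range φ)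
  have : ∀ j : Fin k, ∃ m, φ m = g (Pi.single j 1) := fun j => (g (Pi.single j 1)).2
  choose v hv using this
  refine complete_nakayama hS hM v ?_
  intro m
  obtain ⟨c, hc⟩ := hg ⟨φ m, m, rfl⟩
  have h1 : φ (m - ∑ j, c j • v j) = 0 := by
    rw [map_sub, map_sum, sub_eq_zero]
    have h2 : c = ∑ j, c j • (Pi.single j 1 : Fin k → S) := by
      ext i; simp [Pi.single_apply]
    have h3 : φ m = (g c : V) := by rw [hc]
    rw [h3]
    conv_lhs => rw [h2]
    simp [hv]
  obtain ⟨m', hm'⟩ := hφ _ h1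
  exact ⟨c, m', by rw [← hm']; abel⟩

lemma noeth_of_complete {f : S} (hS : IsAdicComplete (Ideal.span {f}) S)
    (hq : IsNoetherianRing (S ⧸ Ideal.span {f})) : IsNoetherianRing S := by
  have hq' : IsNoetherian S (S ⧸ Ideal.span {f}) := by
    refine ⟨fun N => ?_⟩
    let N' : Submodule (S ⧸ Ideal.span {f}) (S ⧸ Ideal.span {f}) :=
      { N with
        smul_mem' := by
          intro c x hx
          obtain ⟨c, rfl⟩ := Ideal.Quotient.mk_surjective c
          exact N.smul_mem c hx }
    exact Submodule.FG.restrictScalars_of_surjective (S := N') (R := S) (IsNoetherian.noetherian N')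
      Ideal.Quotient.mk_surjective
  refine IsNoetherianRing.of_prime ?_
  intro P hP
  let φ : P →ₗ[S] (S ⧸ Ideal.span {f}) := (Ideal.span {f}).mkQ ∘ₗ P.subtype
  by_cases hf : f ∈ P
  · have h1 : (Ideal.span {f}).FG := ⟨{f}, by simp⟩
    refine Submodule.fg_of_fg_map_of_fg_inf_ker (Ideal.span {f}).mkQ (IsNoetherian.noetherian _) ?_
    rw [Submodule.ker_mkQ, inf_eq_right.2 ((Ideal.span_singleton_le_iff_mem _).2 hf)]
    exact h1
  · refine Module.Finite.iff_fg.1 (complete_nakayama' hS.toIsPrecomplete ?_ φ ?_ inferInstance)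
    · intro m hm
      apply Subtype.ext
      refine hS.toIsHausdorff.haus _ (fun n => ?_)
      obtain ⟨m', hm'⟩ := hm n
      rw [SModEq.zero, smul_eq_mul, Ideal.mul_top, Ideal.span_singleton_pow, Ideal.mem_span_singleton]
      exact ⟨m', congrArg Subtype.val hm'⟩
    · intro m hm
      have h1 : (m : S) ∈ Ideal.span {f} := (Submodule.Quotient.mk_eq_zero _).1 hm
      obtain ⟨y, hy⟩ := Ideal.mem_span_singleton.1 h1
      have h2 : f * y ∈ P := hy ▸ m.2
      exact ⟨⟨y, (hP.mem_or_mem h2).resolve_left hf⟩, Subtype.ext hy⟩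
end CN

section compl
variable {R : Type u} [CommRing R] [IsNoetherianRing R]

theorem exists_completion (f : R) : ∃ (R1 : Type u) (_ : CommRing R1) (_ : Algebra R R1),
    Module.Flat R R1 ∧ IsNoetherianRing R1 ∧ IsPrecomplete (Ideal.span {algebraMap R R1 f}) R1 ∧
    algebraMap R R1 f ∈ (⊥ : Ideal R1).jacobson ∧
    (∀ x : R1, ∃ (r : R) (y : R1), x = algebraMap R R1 r + algebraMap R R1 f * y) ∧
    (∀ I : Ideal R, (∃ n : ℕ, f ^ n ∈ I) → 1 ∈ I.map (algebraMap R R1) → 1 ∈ I) := by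
  let R1 := AdicCompletion (Ideal.span {f}) R
  have hfg : (Ideal.span {f}).FG := ⟨{f}, by simp⟩
  have hc : IsAdicComplete (Ideal.span {algebraMap R R1 f}) R1 := by
    have := AdicCompletion.isAdicComplete_self (Ideal.span {f}) hfg
    rwa [Ideal.map_span, Set.image_singleton] at this
  have hsurj : ∀ x : R1, ∃ (r : R) (y : R1), x = algebraMap R R1 r + algebraMap R R1 f * y := by
    intro x
    obtain ⟨r, hr⟩ := Ideal.Quotient.mk_surjective (AdicCompletion.evalOneₐ (Ideal.span {f}) x)
    have h1 : x - algebraMap R R1 r ∈ Ideal.span {algebraMap R R1 f} := by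
      have h0 := AdicCompletion.ker_evalOneₐ_eq_map (Ideal.span {f}) hfg
      rw [Ideal.map_span, Set.image_singleton] at h0
      rw [← h0, RingHom.mem_ker]
      change AdicCompletion.evalOneₐ (Ideal.span {f}) (x - algebraMap R R1 r) = 0
      rw [map_sub, AlgHom.commutes, sub_eq_zero, ← hr]; rfl
    obtain ⟨y, hy⟩ := Ideal.mem_span_singleton.1 h1
    exact ⟨r, y, by rw [← hy]; ring⟩
  refine ⟨R1, inferInstance, inferInstance, AdicCompletion.flat_of_isNoetherian _, noeth_of_complete hc ?_,
    hc.toIsPrecomplete, ?_, hsurj, ?_⟩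
  · refine isNoetherianRing_of_surjective R _ ((Ideal.Quotient.mk (Ideal.span {algebraMap R R1 f})).comp (algebraMap R R1)) ?_
    intro x
    obtain ⟨x, rfl⟩ := Ideal.Quotient.mk_surjective x
    obtain ⟨r, y, rfl⟩ := hsurj x
    refine ⟨r, ?_⟩
    rw [map_add, RingHom.comp_apply, left_eq_add, Ideal.Quotient.eq_zero_iff_mem]
    exact Ideal.mem_span_singleton.2 ⟨y, rfl⟩
  · exact IsAdicComplete.le_jacobson_bot _ (Ideal.mem_span_singleton_self _)
  · rintro I ⟨n, hn⟩ h1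
    have hle : Ideal.span {f} ^ n ≤ I := by
      rw [Ideal.span_singleton_pow, Ideal.span_singleton_le_iff_mem]; exact hn
    let ev : R1 →ₐ[R] R ⧸ I := (Ideal.Quotient.factorₐ R hle).comp (AdicCompletion.evalₐ (Ideal.span {f}) n)
    have h2 : I.map (algebraMap R R1) ≤ RingHom.ker (ev : R1 →+* R ⧸ I) := by
      rw [Ideal.map_le_iff_le_comap]
      intro r hr
      change ev (algebraMap R R1 r) = 0
      rw [AlgHom.commutes]
      exact Ideal.Quotient.eq_zero_iff_mem.2 hr
    have h3 : ev 1 = 0 := h2 h1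
    rw [map_one] at h3
    exact Ideal.Quotient.eq_zero_iff_mem.1 h3
end compl


section S4a
variable {S : Type u} [CommRing S]

/-- the module of divisible towers -/
def Tow (F : Type u) [AddCommGroup F] [Module S F] (f : S) : Submodule S (ℕ → F) where
  carrier := {τ | (∀ n, f • τ (n+1) = τ n) ∧ f • τ 0 = 0}
  zero_mem' := by simp
  add_mem' := by
    rintro τ σ ⟨h1, h2⟩ ⟨h3, h4⟩
    exact ⟨fun n => by simp [h1, h3], by simp [h2, h4]⟩
  smul_mem' := by
    rintro r τ ⟨h1, h2⟩
    exact ⟨fun n => by rw [Pi.smul_apply, Pi.smul_apply, smul_comm, h1],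
      by rw [Pi.smul_apply, smul_comm, h2, smul_zero]⟩

variable {F : Type u} [AddCommGroup F] [Module S F] {f : S}

lemma Tow.pow_smul {τ : ℕ → F} (hτ : τ ∈ Tow F f) (n m : ℕ) : f ^ n • τ (m + n) = τ m := by
  induction n with
  | zero => simp
  | succ n ih => rw [pow_succ, mul_smul, ← add_assoc, hτ.1, ih]

lemma Tow.pow_zero {τ : ℕ → F} (hτ : τ ∈ Tow F f) (n : ℕ) : f ^ (n+1) • τ n = 0 := by
  have := Tow.pow_smul hτ n 0
  rw [pow_succ', mul_smul]
  rw [zero_add] at this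
  rw [this, hτ.2]

lemma rad_of_le {M : Type u} [AddCommGroup M] [Module S M] [Module.Finite S M] {r : S}
    (h : ∀ m : M, ∃ m' : M, r • m = f • m') : r ∈ (Module.annihilator S M ⊔ Ideal.span {f}).radical := by
  obtain ⟨p, hp, hdeg, hp2, hp3⟩ :=
    LinearMap.exists_monic_and_natDegree_eq_and_coeff_mem_pow_and_aeval_eq_zero S
      (algebraMap S (Module.End S M) r) (Ideal.span {f}) (by
        rintro _ ⟨m, rfl⟩
        obtain ⟨m', h⟩ := h m
        change r • m ∈ _
        rw [h]
        exact Submodule.smul_mem_smul (Ideal.mem_span_singleton_self f) trivial)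
  rw [Polynomial.aeval_algebraMap_apply] at hp3
  have h1 : p.eval r ∈ Module.annihilator S M := by
    rw [Module.mem_annihilator]
    intro m
    exact LinearMap.congr_fun hp3 m
  refine ⟨p.natDegree, ?_⟩
  have h2 : p.eval r - r ^ p.natDegree ∈ Ideal.span {f} := by
    rw [Polynomial.eval_eq_sum_range, Finset.sum_range_succ, hp.coeff_natDegree, one_mul, add_sub_cancel_right]
    refine Ideal.sum_mem _ (fun k hk => Ideal.mul_mem_right _ _ ?_)
    exact Ideal.pow_le_self (by have := Finset.mem_range.1 hk; omega) (hp2 k)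
  have : r ^ p.natDegree = p.eval r - (p.eval r - r ^ p.natDegree) := by ring
  rw [this]
  exact sub_mem (Ideal.mem_sup_left h1) (Ideal.mem_sup_right h2)

lemma tow_zero [IsNoetherianRing S] (hS : IsPrecomplete (Ideal.span {f}) S)
    (hf : f ∈ (⊥ : Ideal S).jacobson) (hF : ∀ x : F, ∃ n : ℕ, f ^ n • x = 0)
    (hV : Module.Finite S (kerM F f)) {J : Ideal S} (hJ : D0 J) (hJV : ∀ r ∈ J, ∀ x ∈ kerM F f, r • x = 0)
    {b : Ideal S} (hb : D2 b)
    (hz : ∀ z : S, D1 (b ⊔ Ideal.span {z}) → Module.Finite S (kerM F z)) :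
    ∀ τ ∈ Tow F f, ∀ n, τ n = 0 := by
  let φ : Tow F f →ₗ[S] F := LinearMap.proj 0 ∘ₗ (Tow F f).subtype
  have hker : ∀ τ : Tow F f, φ τ = 0 → ∃ σ : Tow F f, τ = f • σ := by
    intro τ h
    have h0 : τ.1 0 = 0 := h
    refine ⟨⟨fun n => τ.1 (n+1), fun n => τ.2.1 (n+1), ?_⟩, ?_⟩
    · change f • τ.1 (0 + 1) = 0
      rw [τ.2.1, h0]
    · apply Subtype.ext
      funext n
      exact (τ.2.1 n).symm
  have hfin : Module.Finite S (Tow F f) := by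
    refine complete_nakayama' hS ?_ φ hker ?_
    · intro τ h
      apply Subtype.ext
      funext k
      obtain ⟨σ, hσ⟩ := h (k+1)
      rw [hσ]
      exact Tow.pow_zero σ.2 k
    · have hle : LinearMap.range φ ≤ kerM F f := by
        rintro _ ⟨τ, rfl⟩
        exact τ.2.2
      exact finite_inj hV (Submodule.inclusion_injective hle)
  set I := Module.annihilator S (Tow F f) with hI
  have hJI : J ≤ (I ⊔ Ideal.span {f}).radical := by
    intro r hr
    apply rad_of_le
    intro τ
    obtain ⟨σ, hσ⟩ := hker (r • τ) (hJV r hr _ τ.2.2)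
    exact ⟨σ, hσ⟩
  have hD1 : D1 I := D1_of_jac hf (hJ.of_radical hJI)
  have hfinmin := Ideal.finite_minimalPrimes_of_isNoetherianRing S b
  classical
  obtain ⟨z, hzI, hz2⟩ := exists_mem_avoid I (hfinmin.toFinset.filter (fun p => ¬ I ≤ p))
    (by intro t ht; exact (hfinmin.mem_toFinset.1 (Finset.mem_filter.1 ht).1).1.1)
    (by intro t ht; exact (Finset.mem_filter.1 ht).2)
  have hfk := hz z (D2.sup_span' hb hD1 (fun p hp hn =>
    hz2 p (Finset.mem_filter.2 ⟨hfinmin.mem_toFinset.2 hp, hn⟩)))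
  have ht : Tors (Ideal.span {f}) (kerM F z) := by
    refine tors_of_span _ ?_
    rintro g hg x
    rw [Set.mem_singleton_iff] at hg
    subst hg
    obtain ⟨n, hn⟩ := hF x
    exact ⟨n, Subtype.ext hn⟩
  obtain ⟨N, hN⟩ := ht.exists_pow_finite
  intro τ hτ n
  have h1 : τ (n + N) ∈ kerM F z := congrFun (congrArg Subtype.val (Module.mem_annihilator.1 hzI ⟨τ, hτ⟩)) (n + N)
  have h2 := congrArg Subtype.val (hN (f ^ N) (Ideal.pow_mem_pow (Ideal.mem_span_singleton_self f) N) ⟨_, h1⟩)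
  rw [← Tow.pow_smul hτ N n]
  exact h2

lemma finite_of_tow [IsNoetherianRing S] (hF : ∀ x : F, ∃ n : ℕ, f ^ n • x = 0) (hart : IsArtinian S F)
    (hV : Module.Finite S (kerM F f)) (h : ∀ τ ∈ Tow F f, ∀ n, τ n = 0) : Module.Finite S F := by
  let G : ℕ →o (Submodule S F)ᵒᵈ := ⟨fun n => OrderDual.toDual (ranM F (f ^ n)), by
    intro m n hmn
    change ranM F (f ^ n) ≤ ranM F (f ^ m)
    rintro _ ⟨x, rfl⟩
    refine ⟨f ^ (n - m) • x, ?_⟩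
    change f ^ m • f ^ (n-m) • x = f ^ n • x
    rw [← mul_smul, ← pow_add, Nat.add_sub_cancel' hmn]⟩
  obtain ⟨n, hn⟩ := monotone_stabilizes_iff_artinian.2 hart G
  have hdiv : ∀ x ∈ ranM F (f ^ n), ∃ y ∈ ranM F (f ^ n), f • y = x := by
    intro x hx
    have h1 : ranM F (f ^ n) = ranM F (f ^ (n+1)) := hn (n+1) (Nat.le_succ n)
    rw [h1] at hx
    obtain ⟨y, rfl⟩ := hx
    refine ⟨f ^ n • y, ⟨y, rfl⟩, ?_⟩
    change f • f ^ n • y = f ^ (n+1) • y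
    rw [← mul_smul, pow_succ']
  choose! d hd1 hd2 using hdiv
  have hz : ∀ x ∈ ranM F (f ^ n), f • x = 0 → x = 0 := by
    intro x hx hx0
    let τ : ℕ → F := fun k => d^[k] x
    have hs : ∀ k, τ (k+1) = d (τ k) := fun k => Function.iterate_succ_apply' _ _ _
    have hm : ∀ k, τ k ∈ ranM F (f ^ n) := by
      intro k
      induction k with
      | zero => exact hx
      | succ k ih => rw [hs]; exact hd1 _ ih
    exact h τ ⟨fun k => by rw [hs]; exact hd2 _ (hm k), hx0⟩ 0
  have hz2 : ∀ (k : ℕ) (x), x ∈ ranM F (f ^ n) → f ^ k • x = 0 → x = 0 := by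
    intro k
    induction k with
    | zero => intro x _ hx; simpa using hx
    | succ k ih =>
      intro x hx h0
      apply hz x hx
      apply ih _ (Submodule.smul_mem _ _ hx)
      rw [← mul_smul, ← pow_succ, h0]
  have hk : ∀ x : F, f ^ n • x = 0 := by
    intro x
    obtain ⟨k, hk⟩ := hF (f ^ n • x)
    exact hz2 k _ ⟨x, rfl⟩ hk
  refine finite_of_pow (a := Ideal.span {f}) n ?_ ?_
  · intro r hr x
    rw [Ideal.span_singleton_pow] at hr
    obtain ⟨c, rfl⟩ := Ideal.mem_span_singleton.1 hr
    rw [mul_comm, mul_smul, hk, smul_zero]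
  · refine finite_inj hV (φ := Submodule.inclusion (?_ : K0 (Ideal.span {f}) F ≤ kerM F f))
      (Submodule.inclusion_injective _)
    intro x hx
    exact mem_K0.1 hx f (Ideal.mem_span_singleton_self f)

lemma ker_quot [IsNoetherianRing S] {E : Type u} [AddCommGroup E] [Module S E] (π : E →ₗ[S] F)
    (hπ : Function.Surjective π) (hk : Module.Finite S (LinearMap.ker π)) (y : S)
    (hE : Module.Finite S (kerM E y)) : Module.Finite S (kerM F y) := by
  let P : Submodule S E := (LinearMap.ker π).comap (LinearMap.lsmul S E y)
  have hP : Module.Finite S P := by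
    let φ : kerM E y →ₗ[S] P := Submodule.inclusion (by
      intro x hx
      change π (y • x) = 0
      rw [mem_kerM.1 hx, map_zero])
    let ψ : P →ₗ[S] LinearMap.ker π := (LinearMap.lsmul S E y).restrict (fun x hx => hx)
    refine finite_mid (φ := φ) (ψ := ψ) ?_ hE hk
    intro x
    constructor
    · intro hx
      exact ⟨⟨x.1, congrArg Subtype.val hx⟩, rfl⟩
    · rintro ⟨x, rfl⟩
      exact Subtype.ext x.2
  let χ : P →ₗ[S] kerM F y := π.restrict (fun x hx => by
    change y • π x = 0
    rw [← map_smul]; exact hx)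
  refine Module.Finite.of_surjective χ ?_
  rintro ⟨x, hx⟩
  obtain ⟨e, rfl⟩ := hπ x
  exact ⟨⟨e, by change π (y • e) = 0; rw [map_smul]; exact hx⟩, rfl⟩
end S4a


section C2a
variable {R : Type u} [CommRing R] {a : Ideal R}

lemma killed_sup {X : Type u} [AddCommGroup X] [Module R X] {I J : Ideal R} {x : X}
    (h1 : ∀ r ∈ I, r • x = 0) (h2 : ∀ r ∈ J, r • x = 0) : ∀ r ∈ I ⊔ J, r • x = 0 := by
  intro r hr
  obtain ⟨s, hs, t, ht, rfl⟩ := Submodule.mem_sup.1 hr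
  rw [add_smul, h1 s hs, h2 t ht, add_zero]

lemma killed_span {X : Type u} [AddCommGroup X] [Module R X] {y : R} {x : X}
    (h1 : y • x = 0) : ∀ r ∈ Ideal.span {y}, r • x = 0 := by
  intro r hr
  obtain ⟨s, rfl⟩ := Ideal.mem_span_singleton'.1 hr
  rw [mul_smul, h1, smul_zero]

variable [IsNoetherianRing R]

lemma step1 {X : Type u} [AddCommGroup X] [Module R X] (hX : Tors a X) 
    (h0 : Module.Finite R (EX R (R ⧸ a) X 0)) (h1 : Module.Finite R (EX R (R ⧸ a) X 1))
    (h2 : Module.Finite R (EX R (R ⧸ a) X 2)) {y : R} (hy : D1 (a ⊔ Ideal.span {y})) (i : ℕ) :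
    Module.Finite R (kerM (EX R (R ⧸ a) X i) y) := by
  have hA0 : Module.Finite R (EX R (R ⧸ a) (kerM X y) 0) :=
    finite_inj h0 (EX.map_zero_injective (R := R) (R ⧸ a) (f := (kerM X y).subtype)
      (Submodule.subtype_injective _))
  have hA1 : Module.Finite R (EX R (R ⧸ a) (kerM X y) 1) :=
    (E1_ker (f := 1) (R ⧸ a) y (FF.of_finite 1) (FF.of_finite 1)).finite
  have hA : ∀ i, Module.Finite R (EX R (R ⧸ a) (kerM X y) i) := by
    refine C1_thm hy (hX.inj (Submodule.subtype_injective _)) ?_ hA0 hA1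
    intro r hr x hx
    exact killed_sup (mem_K0.1 hx) (killed_span (Subtype.ext x.2)) r hr
  have hB0 : Module.Finite R (EX R (R ⧸ a) (ranM X y) 0) :=
    finite_mid (EX.exact₃ (R := R) (R ⧸ a) (seqA_inj (X := X) y) (seqA_surj y) (seqA_exact y) 0) h0 (hA 1)
  have hB1 : Module.Finite R (EX R (R ⧸ a) (ranM X y) 1) :=
    finite_mid (EX.exact₃ (R := R) (R ⧸ a) (seqA_inj (X := X) y) (seqA_surj y) (seqA_exact y) 1) h1 (hA 2)
  have hB2 : Module.Finite R (EX R (R ⧸ a) (ranM X y) 2) :=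
    finite_mid (EX.exact₃ (R := R) (R ⧸ a) (seqA_inj (X := X) y) (seqA_surj y) (seqA_exact y) 2) h2 (hA 3)
  have hC0 : Module.Finite R (EX R (R ⧸ a) (X ⧸ ranM X y) 0) :=
    finite_mid (EX.exact₃ (R := R) (R ⧸ a) (Submodule.subtype_injective (ranM X y))
      (Submodule.mkQ_surjective _) (sub_exact _) 0) h0 hB1
  have hC1 : Module.Finite R (EX R (R ⧸ a) (X ⧸ ranM X y) 1) :=
    finite_mid (EX.exact₃ (R := R) (R ⧸ a) (Submodule.subtype_injective (ranM X y))
      (Submodule.mkQ_surjective _) (sub_exact _) 1) h1 hB2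
  have hC : ∀ i, Module.Finite R (EX R (R ⧸ a) (X ⧸ ranM X y) i) := by
    refine C1_thm hy (hX.surj (Submodule.mkQ_surjective _)) ?_ hC0 hC1
    intro r hr x hx
    refine killed_sup (mem_K0.1 hx) (killed_span ?_) r hr
    obtain ⟨x, rfl⟩ := Submodule.mkQ_surjective _ x
    rw [← map_smul]
    exact (Submodule.Quotient.mk_eq_zero _).2 ⟨x, rfl⟩
  exact (ker_smul_FF (f := 1) (R ⧸ a) y i (@FF.of_finite _ _ _ _ _ 1 (hA i))
    (fun j _ => @FF.of_finite _ _ _ _ _ 1 (hC j))).finite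

end C2a

section trans
open TensorProduct
variable {R : Type u} [CommRing R]

/-- generic finiteness up to `S`-torsion from finiteness of the localization -/
lemma exists_fg_loc (S : Submonoid R) (E : Type u) [AddCommGroup E] [Module R E]
    (h : Module.Finite (Localization S) (Localization S ⊗[R] E)) :
    ∃ L : Submodule R E, L.FG ∧ ∀ e : E, ∃ s ∈ S, s • e ∈ L := by
  classical
  let g : E →ₗ[R] Localization S ⊗[R] E := TensorProduct.mk R (Localization S) E 1
  have hloc : IsLocalizedModule S g := (isLocalizedModule_iff_isBaseChange S (Localization S) _).2
    (TensorProduct.isBaseChange R E (Localization S))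
  obtain ⟨t, ht⟩ := h.1
  choose x hx using fun y => IsLocalizedModule.surj S g y
  let L : Submodule R E := Submodule.span R (t.image (fun y => (x y).1))
  refine ⟨L, ⟨_, rfl⟩, fun e => ?_⟩
  have key : ∀ y : Localization S ⊗[R] E, y ∈ Submodule.span (Localization S) (t : Set (Localization S ⊗[R] E)) → 
      ∃ s ∈ S, ∃ l ∈ L, s • y = g l := by
    intro y hy
    induction hy using Submodule.span_induction with
    | mem y hy =>
      exact ⟨(x y).2, (x y).2.2, (x y).1, Submodule.subset_span (by simpa using ⟨y, hy, rfl⟩), hx y⟩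
    | zero => exact ⟨1, S.one_mem, 0, L.zero_mem, by simp⟩
    | add y z _ _ hy hz =>
      obtain ⟨s, hs, l, hl, h1⟩ := hy
      obtain ⟨s', hs', l', hl', h2⟩ := hz
      refine ⟨s * s', S.mul_mem hs hs', s' • l + s • l', L.add_mem (L.smul_mem _ hl) (L.smul_mem _ hl'), ?_⟩
      rw [smul_add, map_add, map_smul, map_smul, ← h1, ← h2, mul_smul, mul_smul, smul_comm s s' y]
    | smul r y _ hy =>
      obtain ⟨s, hs, l, hl, h1⟩ := hy
      obtain ⟨⟨r0, s0⟩, h2⟩ := IsLocalization.surj S r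
      refine ⟨s0 * s, S.mul_mem s0.2 hs, r0 • l, L.smul_mem _ hl, ?_⟩
      rw [map_smul, ← h1, mul_smul, smul_comm s r y, ← smul_assoc, smul_comm r0 s y,
        ← algebraMap_smul (Localization S) r0, ← h2, Algebra.smul_def, mul_comm r]
      rw [smul_comm s]
  obtain ⟨s, hs, l, hl, h1⟩ := key (g e) (ht ▸ trivial)
  rw [← map_smul] at h1
  obtain ⟨c, hc⟩ := (IsLocalizedModule.eq_iff_exists S g).1 h1
  refine ⟨c * s, S.mul_mem c.2 hs, ?_⟩
  rw [mul_smul]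
  have : (c : R) • s • e = (c : R) • l := hc
  rw [this]
  exact L.smul_mem _ hl

end trans

open TensorProduct

section trans2
variable {R R1 : Type u} [CommRing R] [CommRing R1] [Algebra R R1]

lemma inj_one [Module.Flat R R1] {f : R}
    (h1 : ∀ I : Ideal R, (∃ n : ℕ, f ^ n ∈ I) → (1 : R1) ∈ I.map (algebraMap R R1) → (1 : R) ∈ I)
    {F : Type u} [AddCommGroup F] [Module R F] {x : F} (hx : ∃ n : ℕ, f ^ n • x = 0)
    (h : (1 : R1) ⊗ₜ[R] x = 0) : x = 0 := by
  let I : Ideal R := LinearMap.ker (LinearMap.toSpanSingleton R F x)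
  let j : (R ⧸ I) →ₗ[R] F := Submodule.liftQ I (LinearMap.toSpanSingleton R F x) le_rfl
  have hj : Function.Injective j := LinearMap.ker_eq_bot.1 (Submodule.ker_liftQ_eq_bot _ _ _ le_rfl)
  have h2 := Module.Flat.lTensor_preserves_injective_linearMap (M := R1) j hj
  have h3 : (1 : R1) ⊗ₜ[R] (Submodule.Quotient.mk (1 : R) : R ⧸ I) = 0 := by
    apply h2
    rw [LinearMap.lTensor_tmul, map_zero]
    have : j (Submodule.Quotient.mk (1 : R)) = x := by
      change (1 : R) • x = x
      rw [one_smul]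
    rw [this, h]
  have h4 : ∀ w : R1 ⊗[R] (R ⧸ I), w = 0 := by
    intro w
    induction w using TensorProduct.induction_on with
    | zero => rfl
    | add x y hx hy => rw [hx, hy, add_zero]
    | tmul c y =>
      obtain ⟨y, rfl⟩ := Submodule.Quotient.mk_surjective _ y
      have e : c ⊗ₜ[R] (Submodule.Quotient.mk y : R ⧸ I) = y • c • ((1 : R1) ⊗ₜ[R] (Submodule.Quotient.mk (1 : R) : R ⧸ I)) := by
        rw [TensorProduct.smul_tmul', ← TensorProduct.tmul_smul, smul_eq_mul, mul_one, ← Submodule.Quotient.mk_smul,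
          smul_eq_mul, mul_one]
      rw [e, h3, smul_zero, smul_zero]
  have h5 : (1 : R1) ∈ I.map (algebraMap R R1) := by
    rw [← Ideal.Quotient.eq_zero_iff_mem]
    apply (quotBC R1 I).symm.injective
    exact (h4 _).trans (h4 _).symm
  have h6 := h1 I hx h5
  have h7 : (1 : R) • x = 0 := h6
  rwa [one_smul] at h7

lemma comap_lt {f : R} (hs : ∀ x : R1, ∃ (r : R) (y : R1), x = algebraMap R R1 r + algebraMap R R1 f * y)
    {P Q : Ideal R1} (hfP : algebraMap R R1 f ∈ P) (h : P < Q) :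
    P.comap (algebraMap R R1) < Q.comap (algebraMap R R1) := by
  refine lt_of_le_of_ne (Ideal.comap_mono h.le) (fun e => ?_)
  refine not_le_of_gt h (fun x hx => ?_)
  obtain ⟨r, y, rfl⟩ := hs x
  have h1 : algebraMap R R1 f * y ∈ P := Ideal.mul_mem_right _ _ hfP
  have h2 : algebraMap R R1 r ∈ Q := (Ideal.add_mem_iff_left _ (h.le h1)).1 hx
  have h3 : r ∈ P.comap (algebraMap R R1) := by rw [e]; exact h2
  exact P.add_mem h3 h1

lemma D0_trans {f : R} (hs : ∀ x : R1, ∃ (r : R) (y : R1), x = algebraMap R R1 r + algebraMap R R1 f * y)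
    {I : Ideal R} (hf : f ∈ I) (h : D0 I) : D0 (I.map (algebraMap R R1)) := by
  intro P Q hP hQ hle hlt
  exact h _ _ (hP.comap _) (hQ.comap _) (Ideal.map_le_iff_le_comap.1 hle)
    (comap_lt hs (hle (Ideal.mem_map_of_mem _ hf)) hlt)

lemma D1_trans {f : R} (hs : ∀ x : R1, ∃ (r : R) (y : R1), x = algebraMap R R1 r + algebraMap R R1 f * y)
    {I : Ideal R} (hf : f ∈ I) (h : D1 I) : D1 (I.map (algebraMap R R1)) := by
  intro P Q T hP hQ hT hle hlt hlt2
  have h1 := hle (Ideal.mem_map_of_mem _ hf)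
  exact h _ _ _ (hP.comap _) (hQ.comap _) (hT.comap _) (Ideal.map_le_iff_le_comap.1 hle)
    (comap_lt hs h1 hlt) (comap_lt hs (hlt.le h1) hlt2)

lemma killed_bc {V : Type u} [AddCommGroup V] [Module R V] {J : Ideal R}
    (h : ∀ r ∈ J, ∀ x : V, r • x = 0) : ∀ r ∈ J.map (algebraMap R R1), ∀ w : R1 ⊗[R] V, r • w = 0 := by
  have : J.map (algebraMap R R1) ≤ Module.annihilator R1 (R1 ⊗[R] V) := by
    rw [Ideal.map_le_iff_le_comap]
    intro r hr
    rw [Ideal.mem_comap, Module.mem_annihilator]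
    intro w
    rw [algebraMap_smul]
    induction w using TensorProduct.induction_on with
    | zero => simp
    | add x y hx hy => rw [smul_add, hx, hy, add_zero]
    | tmul c y => rw [← TensorProduct.tmul_smul, h r hr, TensorProduct.tmul_zero]
  intro r hr w
  exact Module.mem_annihilator.1 (this hr) w

lemma kerM_bc [Module.Flat R R1] (F : Type u) [AddCommGroup F] [Module R F] (f : R) :
    ∀ z ∈ kerM (R1 ⊗[R] F) (algebraMap R R1 f), ∃ w, (kerM F f).subtype.baseChange R1 w = z := by
  intro z hz
  have h1 : Function.Exact (kerM F f).subtype (LinearMap.lsmul R F f) := by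
    rw [LinearMap.exact_iff, Submodule.range_subtype]
  have h2 := Module.Flat.lTensor_exact R1 h1
  refine (h2 z).1 ?_
  have h3 : (LinearMap.lTensor R1 (LinearMap.lsmul R F f)) z = f • z := by
    clear hz
    induction z using TensorProduct.induction_on with
    | zero => simp
    | add x y hx hy =>
      rw [map_add, smul_add]
      rw [hx, hy]
    | tmul c y => 
      rw [← TensorProduct.tmul_smul]; rfl
  rw [h3, ← algebraMap_smul R1]
  exact hz

lemma kerM_equiv [IsNoetherianRing R] {A B : Type u} [AddCommGroup A] [Module R A] [AddCommGroup B] [Module R B]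
    (e : A ≃ₗ[R] B) (z : R) (h : Module.Finite R (kerM B z)) : Module.Finite R (kerM A z) := by
  refine finite_inj h (φ := (e.toLinearMap ∘ₗ (kerM A z).subtype).codRestrict (kerM B z) ?_) ?_
  · intro x
    rw [mem_kerM]
    change z • e x.1 = 0
    rw [← map_smul, mem_kerM.1 x.2, map_zero]
  · intro x y h
    have h9 : e x.1 = e y.1 := congrArg Subtype.val h
    exact Subtype.ext (e.injective h9)

lemma killed_sup3 {V : Type u} [AddCommGroup V] [Module R V] {I : Ideal R} {f s : R} {x : V}
    (h1 : ∀ r ∈ I, r • x = 0) (h2 : f • x = 0) (h3 : s • x = 0) :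
    ∀ r ∈ I ⊔ Ideal.span {f} ⊔ Ideal.span {s}, r • x = 0 :=
  killed_sup (killed_sup h1 (killed_span h2)) (killed_span h3)

/-- the key finiteness over the completion -/
lemma C2_core [IsNoetherianRing R] {a : Ideal R} {X : Type u} [AddCommGroup X] [Module R X] (hX : Tors a X)
    (h0 : Module.Finite R (EX R (R ⧸ a) X 0)) (h1 : Module.Finite R (EX R (R ⧸ a) X 1))
    (h2 : Module.Finite R (EX R (R ⧸ a) X 2)) (i : ℕ) {f : R} (hf : D1 (a ⊔ Ideal.span {f}))
    (L : Submodule R (EX R (R ⧸ a) X i)) (hL : L.FG)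
    (hFf : ∀ x : EX R (R ⧸ a) X i ⧸ L, ∃ n : ℕ, f ^ n • x = 0)
    (hV : Module.Finite R (kerM (EX R (R ⧸ a) X i ⧸ L) f))
    {J : Ideal R} (hfJ : f ∈ J) (hJ : D0 J) (hJV : ∀ r ∈ J, ∀ x : kerM (EX R (R ⧸ a) X i ⧸ L) f, r • x = 0) :
    ∀ τ ∈ Tow (EX R (R ⧸ a) X i ⧸ L) f, ∀ n, τ n = 0 := by
  obtain ⟨R1, _, _, hflat, hnoeth, hpre, hjac, hs, hone⟩ := exists_completion f
  let E := EX R (R ⧸ a) X i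
  let F := E ⧸ L
  let π : R1 ⊗[R] E →ₗ[R1] R1 ⊗[R] F := L.mkQ.baseChange R1
  have hπ : Function.Surjective π := LinearMap.lTensor_surjective R1 (Submodule.mkQ_surjective L)
  have hex : Function.Exact (L.subtype.baseChange R1) π :=
    lTensor_exact R1 (sub_exact L) (Submodule.mkQ_surjective L)
  have hk : Module.Finite R1 (LinearMap.ker π) := by
    have : Module.Finite R L := Module.Finite.iff_fg.2 hL
    rw [LinearMap.exact_iff.1 hex]
    infer_instance
  have hfinE : ∀ j, Module.Finite R (EX R (R ⧸ a) X j) →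
      Module.Finite R1 (EX R1 (R1 ⧸ a.map (algebraMap R R1)) (R1 ⊗[R] X) j) := by
    intro j hj
    obtain ⟨e⟩ := bcE R1 X a j
    exact Module.Finite.equiv e
  have hD1 : D1 (a.map (algebraMap R R1) ⊔ Ideal.span {algebraMap R R1 f}) := by
    have := D1_trans hs (Ideal.mem_sup_right (Ideal.mem_span_singleton_self f)) hf
    rwa [Ideal.map_sup, Ideal.map_span, Set.image_singleton] at this
  have hD2 : D2 (a.map (algebraMap R R1)) := D2_of_jac hjac hD1
  have hz : ∀ z : R1, D1 (a.map (algebraMap R R1) ⊔ Ideal.span {z}) → Module.Finite R1 (kerM (R1 ⊗[R] F) z) := by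
    intro z hz
    refine ker_quot π hπ hk z ?_
    have h3 := step1 (tors_bc R1 hX) (hfinE 0 h0) (hfinE 1 h1) (hfinE 2 h2) hz i
    obtain ⟨e⟩ := bcE R1 X a i
    exact kerM_equiv e z h3
  have hF1 : ∀ x : R1 ⊗[R] F, ∃ n : ℕ, (algebraMap R R1 f) ^ n • x = 0 := by
    have : Tors (Ideal.span {f}) F := tors_of_span _ (by
      intro g hg x
      rw [Set.mem_singleton_iff] at hg
      subst hg
      exact hFf x)
    exact fun x => tors_bc R1 this _ (Ideal.mem_map_of_mem _ (Ideal.mem_span_singleton_self f)) x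
  have hV1 : Module.Finite R1 (kerM (R1 ⊗[R] F) (algebraMap R R1 f)) :=
    hz _ hD1
  have hJV1 : ∀ r ∈ J.map (algebraMap R R1), ∀ x ∈ kerM (R1 ⊗[R] F) (algebraMap R R1 f), r • x = 0 := by
    intro r hr x hx
    obtain ⟨w, rfl⟩ := kerM_bc F f x hx
    rw [← map_smul, killed_bc hJV r hr, map_zero]
  have key := tow_zero (F := R1 ⊗[R] F) hpre hjac hF1 hV1 (D0_trans hs hfJ hJ) hJV1 hD2 hz
  intro τ hτ n
  have hmem : (fun n => (1 : R1) ⊗ₜ[R] (show F from τ n)) ∈ Tow (R1 ⊗[R] F) (algebraMap R R1 f) := by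
    refine ⟨fun n => ?_, ?_⟩
    · change algebraMap R R1 f • ((1 : R1) ⊗ₜ[R] (show F from τ (n+1))) = _
      rw [algebraMap_smul, ← TensorProduct.tmul_smul]
      exact congrArg (fun z : F => (1 : R1) ⊗ₜ[R] z) (hτ.1 n)
    · change algebraMap R R1 f • ((1 : R1) ⊗ₜ[R] (show F from τ 0)) = _
      rw [algebraMap_smul, ← TensorProduct.tmul_smul]
      exact (congrArg (fun z : F => (1 : R1) ⊗ₜ[R] z) hτ.2).trans (TensorProduct.tmul_zero _ _)
  exact inj_one hone (hFf _) (key _ hmem n)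

theorem C2_thm [IsNoetherianRing R] {a : Ideal R} (ha : D2 a) {X : Type u} [AddCommGroup X] [Module R X] (hX : Tors a X)
    (h0 : Module.Finite R (EX R (R ⧸ a) X 0)) (h1 : Module.Finite R (EX R (R ⧸ a) X 1))
    (h2 : Module.Finite R (EX R (R ⧸ a) X 2)) (i : ℕ) : Module.Finite R (EX R (R ⧸ a) X i) := by
  obtain ⟨f, hfS, hFF⟩ := O_thm hX h0 h1
  have hf : D1 (a ⊔ Ideal.span {f}) := ha.sup_span hfS
  obtain ⟨L1, hL1, hLf⟩ := hFF i
  let S := Sc (a ⊔ Ideal.span {f})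
  let R' := Localization S
  have hfinR' : Module.Finite R' (R' ⊗[R] EX R (R ⧸ a) X i) := by
    have hfl : Module.Flat R R' := IsLocalization.flat R' S
    have hfinE : ∀ j, Module.Finite R (EX R (R ⧸ a) X j) →
        Module.Finite R' (EX R' (R' ⧸ a.map (algebraMap R R')) (R' ⊗[R] X) j) := by
      intro j hj
      obtain ⟨e⟩ := bcE R' X a j
      exact Module.Finite.equiv e
    have h3 := C1_thm (D1_loc a f) (tors_bc R' hX) (fun r hr x hx => mem_K0.1 hx r hr) (hfinE 0 h0) (hfinE 1 h1) i
    obtain ⟨e⟩ := bcE R' X a i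
    exact Module.Finite.equiv e.symm
  obtain ⟨L2, hL2, hLs⟩ := exists_fg_loc S _ hfinR'
  let L := L1 ⊔ L2
  have hL : L.FG := hL1.sup hL2
  have hFf : ∀ x : EX R (R ⧸ a) X i ⧸ L, ∃ n : ℕ, f ^ n • x = 0 := by
    intro x
    obtain ⟨x, rfl⟩ := Submodule.mkQ_surjective _ x
    obtain ⟨n, hn⟩ := hLf x
    refine ⟨n, ?_⟩
    rw [← map_smul]
    exact (Submodule.Quotient.mk_eq_zero _).2 (Submodule.mem_sup_left hn)
  have hFs : ∀ x : EX R (R ⧸ a) X i ⧸ L, ∃ s ∈ S, s • x = 0 := by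
    intro x
    obtain ⟨x, rfl⟩ := Submodule.mkQ_surjective _ x
    obtain ⟨n, hn, hn2⟩ := hLs x
    refine ⟨n, hn, ?_⟩
    rw [← map_smul]
    exact (Submodule.Quotient.mk_eq_zero _).2 (Submodule.mem_sup_right hn2)
  have hV : Module.Finite R (kerM (EX R (R ⧸ a) X i ⧸ L) f) := by
    refine ker_quot L.mkQ (Submodule.mkQ_surjective _) ?_ f (step1 hX h0 h1 h2 hf i)
    rw [Submodule.ker_mkQ]
    exact Module.Finite.iff_fg.2 hL
  obtain ⟨s, hs, hs2⟩ := exists_common (kerM (EX R (R ⧸ a) X i ⧸ L) f) (Module.Finite.iff_fg.1 hV) hFs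
  let J := a ⊔ Ideal.span {f} ⊔ Ideal.span {s}
  have hJ : D0 J := hf.sup_span hs
  have hJV : ∀ r ∈ J, ∀ x : kerM (EX R (R ⧸ a) X i ⧸ L) f, r • x = 0 := by
    intro r hr x
    have e1 : f • x = 0 := Subtype.ext x.2
    have e2 : s • x = 0 := Subtype.ext (hs2 _ x.2)
    suffices e3 : ∀ r ∈ a, r • x = 0 from
      killed_sup3 (V := kerM (EX R (R ⧸ a) X i ⧸ L) f) e3 e1 e2 r hr
    intro r hr
    apply Subtype.ext
    obtain ⟨e, he⟩ := Submodule.mkQ_surjective _ x.1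
    change r • x.1 = 0
    rw [← he, ← map_smul, EX.smul_eq_zero _ (quot_smul hr) i e, map_zero]
  have hfJ : f ∈ J := Ideal.mem_sup_left (Ideal.mem_sup_right (Ideal.mem_span_singleton_self f))
  have hart : IsArtinian R (EX R (R ⧸ a) X i ⧸ L) := artinian_of_ker hFf (artinian_of_D0 hJ hJV)
  have hF := finite_of_tow hFf hart hV (C2_core hX h0 h1 h2 i hf L hL hFf hV hfJ hJ hJV)
  have hLfin : Module.Finite R L := Module.Finite.iff_fg.2 hL
  exact finite_mid (sub_exact L) hLfin hF
end trans2


section LCsec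
variable {R : Type u} [CommRing R]

/-- precomposition -/
noncomputable def EX.pre (X : Type u) [AddCommGroup X] [Module R X] {N N' : Type u} [AddCommGroup N]
    [Module R N] [AddCommGroup N'] [Module R N'] (g : N' →ₗ[R] N) (i : ℕ) : EX R N X i →ₗ[R] EX R N' X i :=
  (Abelian.Ext.mk₀ (ModuleCat.ofHom g)).precompOfLinear R (ModuleCat.of R X) (zero_add i)

section pre
variable {X Y : Type u} [AddCommGroup X] [Module R X] [AddCommGroup Y] [Module R Y] {N N' N'' : Type u}
    [AddCommGroup N] [Module R N] [AddCommGroup N'] [Module R N'] [AddCommGroup N''] [Module R N'']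

lemma EX.pre_apply (g : N' →ₗ[R] N) (i : ℕ) (x : EX R N X i) :
    EX.pre X g i x = (Abelian.Ext.mk₀ (ModuleCat.ofHom g)).comp x (zero_add i) := rfl

lemma EX.pre_pre (g : N' →ₗ[R] N) (h : N'' →ₗ[R] N') (i : ℕ) (x : EX R N X i) :
    EX.pre X h i (EX.pre X g i x) = EX.pre X (g ∘ₗ h) i x := by
  rw [EX.pre_apply, EX.pre_apply, EX.pre_apply, ModuleCat.ofHom_comp, ← Abelian.Ext.mk₀_comp_mk₀]
  rw [Abelian.Ext.comp_assoc _ _ _ (add_zero 0) (zero_add i) (by omega)]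

lemma EX.pre_id (i : ℕ) (x : EX R N X i) : EX.pre X (LinearMap.id : N →ₗ[R] N) i x = x := by
  rw [EX.pre_apply]
  exact Abelian.Ext.mk₀_id_comp x

lemma EX.pre_map (g : N' →ₗ[R] N) (f : X →ₗ[R] Y) (i : ℕ) (x : EX R N X i) :
    EX.pre Y g i (EX.map N f i x) = EX.map N' f i (EX.pre X g i x) := by
  rw [EX.pre_apply, EX.pre_apply, EX.map_apply, EX.map_apply]
  rw [Abelian.Ext.comp_assoc _ _ _ (zero_add i) (add_zero i) (by omega)]

lemma EX.pre_δ {A X B : Type u} [AddCommGroup A] [Module R A] [AddCommGroup X] [Module R X]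
    [AddCommGroup B] [Module R B] {f : A →ₗ[R] X} {g : X →ₗ[R] B} (hf : Function.Injective f)
    (hg : Function.Surjective g) (hfg : Function.Exact f g) (p : N' →ₗ[R] N) (i : ℕ) (x : EX R N B i) :
    EX.pre A p (i+1) (EX.δ N hf hg hfg i x) = EX.δ N' hf hg hfg i (EX.pre B p i x) := by
  rw [EX.pre_apply, EX.pre_apply]
  change (Abelian.Ext.mk₀ (ModuleCat.ofHom p)).comp (x.comp (EX.shortExact hf hg hfg).extClass rfl) _ =
    ((Abelian.Ext.mk₀ (ModuleCat.ofHom p)).comp x _).comp (EX.shortExact hf hg hfg).extClass rfl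
  rw [Abelian.Ext.comp_assoc _ _ _ (zero_add i) rfl (by omega)]

lemma EX.zeroEquiv_pre (g : N' →ₗ[R] N) (x : EX R N X 0) :
    EX.zeroEquiv N' (EX.pre X g 0 x) = (EX.zeroEquiv N x) ∘ₗ g := by
  obtain ⟨h, rfl⟩ := (EX.zeroEquiv N).symm.surjective x
  rw [LinearEquiv.apply_symm_apply, ← LinearEquiv.eq_symm_apply, EX.pre_apply]
  change (Abelian.Ext.mk₀ (ModuleCat.ofHom g)).comp (Abelian.Ext.mk₀ (ModuleCat.ofHom h)) _ =
    Abelian.Ext.mk₀ (ModuleCat.ofHom (h ∘ₗ g))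
  rw [Abelian.Ext.mk₀_comp_mk₀]
  rfl
end pre

abbrev qmap (a : Ideal R) {t t' : ℕ} (h : t ≤ t') : (R ⧸ a ^ t') →ₗ[R] (R ⧸ a ^ t) :=
  Submodule.mapQ _ _ LinearMap.id (Ideal.pow_le_pow_right h)

lemma qmap_comp (a : Ideal R) {t t' t'' : ℕ} (h : t ≤ t') (h' : t' ≤ t'') :
    qmap a h ∘ₗ qmap a h' = qmap a (h.trans h') := by
  ext; rfl

lemma qmap_self (a : Ideal R) (t : ℕ) : qmap a (le_refl t) = LinearMap.id := by
  ext; rfl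

abbrev LCsys (a : Ideal R) (i : ℕ) (X : Type u) [AddCommGroup X] [Module R X] (t : ℕ) : Type u :=
  EX R (R ⧸ a ^ t) X i

noncomputable abbrev LCres (a : Ideal R) (i : ℕ) (X : Type u) [AddCommGroup X] [Module R X] (t t' : ℕ) (h : t ≤ t') :
   LCsys a i X t →ₗ[R] LCsys a i X t' := EX.pre X (qmap a h) i

instance LCdir (a : Ideal R) (i : ℕ) (X : Type u) [AddCommGroup X] [Module R X] :
    DirectedSystem (LCsys a i X) (fun t t' h => LCres a i X t t' h) where
  map_self t x := by
    change EX.pre X (qmap a (le_refl t)) i x = x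
    rw [qmap_self, EX.pre_id]
  map_map t t' t'' h h' x := by
    change EX.pre X (qmap a h') i (EX.pre X (qmap a h) i x) = EX.pre X (qmap a _) i x
    rw [EX.pre_pre, qmap_comp]

/-- local cohomology as a concrete direct limit -/
abbrev LC (a : Ideal R) (i : ℕ) (X : Type u) [AddCommGroup X] [Module R X] : Type u :=
  Module.DirectLimit (LCsys a i X) (LCres a i X)

/-- a map of direct systems which is an eventual isomorphism induces an isomorphism -/
lemma dl_equiv {A B : ℕ → Type u} [∀ t, AddCommGroup (A t)] [∀ t, Module R (A t)]
    [∀ t, AddCommGroup (B t)] [∀ t, Module R (B t)]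
    (fA : ∀ t t', t ≤ t' → A t →ₗ[R] A t') (fB : ∀ t t', t ≤ t' → B t →ₗ[R] B t')
    [DirectedSystem A (fun t t' h => fA t t' h)] [DirectedSystem B (fun t t' h => fB t t' h)]
    (g : ∀ t, A t →ₗ[R] B t) (hg : ∀ t t' h x, g t' (fA t t' h x) = fB t t' h (g t x))
    (hinj : ∀ t x, g t x = 0 → ∃ t' h, fA t t' h x = 0)
    (hsurj : ∀ t y, ∃ t' h x, g t' x = fB t t' h y) :
    Nonempty (Module.DirectLimit A fA ≃ₗ[R] Module.DirectLimit B fB) := by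
  let φ : Module.DirectLimit A fA →ₗ[R] Module.DirectLimit B fB :=
    Module.DirectLimit.map g (fun t t' h => LinearMap.ext (hg t t' h))
  have hφ : ∀ t x, φ (Module.DirectLimit.of R ℕ A fA t x) = Module.DirectLimit.of R ℕ B fB t (g t x) :=
    fun t x => Module.DirectLimit.map_apply_of _ _ _
  refine ⟨LinearEquiv.ofBijective φ ⟨?_, ?_⟩⟩
  · rw [injective_iff_map_eq_zero]
    intro z hz
    obtain ⟨t, x, rfl⟩ := Module.DirectLimit.exists_of z
    rw [hφ] at hz
    obtain ⟨t', h, h1⟩ := Module.DirectLimit.of.zero_exact hz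
    rw [← hg] at h1
    obtain ⟨t'', h', h2⟩ := hinj _ _ h1
    rw [← Module.DirectLimit.of_f (hij := h), ← Module.DirectLimit.of_f (hij := h'), h2, map_zero]
  · intro z
    obtain ⟨t, y, rfl⟩ := Module.DirectLimit.exists_of z
    obtain ⟨t', h, x, hx⟩ := hsurj t y
    exact ⟨Module.DirectLimit.of R ℕ A fA t' x, by rw [hφ, hx, Module.DirectLimit.of_f]⟩

lemma lc_equiv (a : Ideal R) (i : ℕ) (M : ModuleCat.{u} R) :
    Nonempty (LC a i M ≃ₗ[R] (localCohomology a i).obj M) := by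
  let F : ℕᵒᵖᵒᵖ ⥤ ModuleCat.{u} R ⥤ ModuleCat.{u} R :=
    localCohomology.diagram (localCohomology.idealPowersDiagram a) i
  have hF : Limits.HasColimit F := localCohomology.hasColimitDiagram _ i
  let G : ℕᵒᵖᵒᵖ ⥤ ModuleCat.{u} R := F ⋙ (evaluation _ _).obj M
  let c : Limits.Cocone G := ((evaluation _ _).obj M).mapCocone (Limits.colimit.cocone F)
  have hc : Limits.IsColimit c := Limits.isColimitOfPreserves _ (Limits.colimit.isColimit F)
  let e : ∀ t, LCsys a i M t ≃ₗ[R] G.obj (Opposite.op (Opposite.op t)) := fun t =>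
    (Bridge.equiv (ModuleCat.of R (R ⧸ a ^ t)) M i).symm
  have he : ∀ t t' (h : t ≤ t') (x : LCsys a i M t),
      e t' (LCres a i M t t' h x) = G.map (homOfLE h).op.op (e t x) := by
    intro t t' h x
    change (Bridge.equiv (ModuleCat.of R (R ⧸ a ^ t')) M i).symm _ = _
    refine (LinearEquiv.symm_apply_eq (Bridge.equiv (ModuleCat.of R (R ⧸ a ^ t')) M i)).2 ?_
    have := Bridge.equiv_naturality (ModuleCat.ofHom (qmap a h)) M i (e t x)
    refine Eq.trans ?_ this.symm
    rw [show Bridge.equiv (ModuleCat.of R (R ⧸ a ^ t)) M i (e t x) = x from LinearEquiv.apply_symm_apply _ _]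
    rfl
  let φ : LC a i M →ₗ[R] c.pt := Module.DirectLimit.lift R ℕ _ _
    (fun t => (c.ι.app (Opposite.op (Opposite.op t))).hom ∘ₗ (e t).toLinearMap) (by
      intro t t' h x
      change c.ι.app _ (e t' (LCres a i M t t' h x)) = _
      rw [he]
      exact congrArg (fun f => f (e t x)) (c.w (homOfLE h).op.op))
  have hφ : ∀ t x, φ (Module.DirectLimit.of R ℕ _ _ t x) = c.ι.app (Opposite.op (Opposite.op t)) (e t x) :=
    fun t x => Module.DirectLimit.lift_of _ _ _
  have hp1 : Limits.PreservesFilteredColimitsOfSize.{0, 0} (forget (ModuleCat.{u} R)) :=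
    Limits.preservesFilteredColimitsOfSize_shrink.{0, u, 0, u} _
  have hp : Limits.PreservesColimit G (forget (ModuleCat.{u} R)) :=
    (hp1.preserves_filtered_colimits ℕᵒᵖᵒᵖ).preservesColimit
  refine ⟨LinearEquiv.ofBijective φ ⟨?_, ?_⟩⟩
  · rw [injective_iff_map_eq_zero]
    intro z hz
    obtain ⟨t, x, rfl⟩ := Module.DirectLimit.exists_of z
    rw [hφ] at hz
    obtain ⟨k, f, g, hk⟩ := Limits.Concrete.isColimit_exists_of_rep_eq G hc (e t x) (0 : G.obj (Opposite.op (Opposite.op t))) (by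
      rw [hz]; exact (map_zero (c.ι.app (Opposite.op (Opposite.op t))).hom).symm)
    obtain ⟨⟨t'⟩⟩ := k
    have h : t ≤ t' := leOfHom f.unop.unop
    have h0 : G.map g (0 : G.obj (Opposite.op (Opposite.op t))) = 0 := map_zero (G.map g).hom
    rw [h0] at hk
    have h1 := he t t' h x
    rw [Subsingleton.elim (homOfLE h).op.op f] at h1
    rw [← Module.DirectLimit.of_f (hij := h)]
    have h2 : LCres a i M t t' h x = 0 := (e t').injective (by rw [h1, map_zero]; exact hk)
    rw [h2, map_zero]
  · intro z
    obtain ⟨⟨⟨t⟩⟩, x, hx⟩ := Limits.Concrete.isColimit_exists_rep G hc z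
    exact ⟨Module.DirectLimit.of R ℕ _ _ t ((e t).symm x), by
      rw [hφ, LinearEquiv.apply_symm_apply]; exact hx⟩
end LCsec


section Gam
variable {R : Type u} [CommRing R]

/-- the torsion submodule -/
def Gam (a : Ideal R) (X : Type u) [AddCommGroup X] [Module R X] : Submodule R X where
  carrier := {x | ∃ t : ℕ, ∀ r ∈ a ^ t, r • x = 0}
  zero_mem' := ⟨0, by simp⟩
  add_mem' := by
    rintro x y ⟨t, ht⟩ ⟨s, hs⟩
    refine ⟨t + s, fun r hr => ?_⟩
    rw [smul_add, ht r (Ideal.pow_le_pow_right (Nat.le_add_right _ _) hr),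
      hs r (Ideal.pow_le_pow_right (Nat.le_add_left _ _) hr), add_zero]
  smul_mem' := by
    rintro c x ⟨t, ht⟩
    exact ⟨t, fun r hr => by rw [smul_comm, ht r hr, smul_zero]⟩

variable {a : Ideal R} {X : Type u} [AddCommGroup X] [Module R X]

lemma mem_Gam {x : X} : x ∈ Gam a X ↔ ∃ t : ℕ, ∀ r ∈ a ^ t, r • x = 0 := Iff.rfl

lemma Gam_tors : Tors a (Gam a X) := by
  refine Tors.of_exists_pow ?_
  rintro ⟨x, t, ht⟩
  exact ⟨t, fun r hr => Subtype.ext (ht r hr)⟩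

variable [IsNoetherianRing R]

lemma Gam_quot (x : X ⧸ Gam a X) (h : ∃ t : ℕ, ∀ r ∈ a ^ t, r • x = 0) : x = 0 := by
  obtain ⟨x, rfl⟩ := Submodule.mkQ_surjective _ x
  obtain ⟨t, ht⟩ := h
  rw [Submodule.mkQ_apply, Submodule.Quotient.mk_eq_zero]
  have h1 : ∀ r ∈ a ^ t, r • x ∈ Gam a X := fun r hr => by
    have := ht r hr
    rw [← map_smul] at this
    exact (Submodule.Quotient.mk_eq_zero _).1 this
  let P : Submodule R (Gam a X) := (Submodule.map (LinearMap.toSpanSingleton R X x) (a ^ t)).comap (Gam a X).subtype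
  have hP : Module.Finite R P := by
    have h2 : Module.Finite R (Submodule.map (LinearMap.toSpanSingleton R X x) (a ^ t)) :=
      Module.Finite.iff_fg.2 ((IsNoetherian.noetherian (a ^ t)).map _)
    refine finite_inj h2 (φ := ((Gam a X).subtype ∘ₗ P.subtype).codRestrict _ (fun c => c.2)) ?_
    intro c d h
    have h9 := congrArg Subtype.val h
    exact Subtype.ext (Subtype.ext h9)
  have hPt : Tors a P := (Gam_tors (a := a) (X := X)).inj (Submodule.subtype_injective P)
  obtain ⟨n, hn⟩ := hPt.exists_pow_finite
  refine ⟨n + t, ?_⟩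
  rw [pow_add]
  intro r hr
  induction hr using Submodule.mul_induction_on' with
  | mem_mul_mem u hu v hv =>
    have := hn u hu ⟨⟨v • x, h1 v hv⟩, ⟨v, hv, rfl⟩⟩
    rw [mul_smul]
    exact congrArg (fun z => z.1.1) this
  | add u _ v _ hu hv => rw [add_smul, hu, hv, add_zero]

lemma Gam_injective [Module.Injective R X] : Module.Injective R (Gam a X) := by
  refine Module.Baer.injective ?_
  intro J φ
  have h1 : ∃ t : ℕ, ∀ r ∈ a ^ t, ∀ x : LinearMap.range φ, r • x = 0 :=
    ((Gam_tors (a := a) (X := X)).inj (Submodule.subtype_injective (LinearMap.range φ))).exists_pow_finite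
  obtain ⟨t, ht⟩ := h1
  obtain ⟨k, hk⟩ := Ideal.exists_pow_inf_eq_pow_smul a (J : Submodule R R)
  have hs := hk (t + k) (Nat.le_add_left _ _)
  let s := t + k
  have hker : ∀ j : J, j.1 ∈ a ^ s → φ j = 0 := by
    intro j hj
    have h2 : j.1 ∈ a ^ (t + k) • (⊤ : Submodule R R) ⊓ J := ⟨by simpa using hj, j.2⟩
    rw [hs, Nat.add_sub_cancel] at h2
    have h3 : j.1 ∈ a ^ t • (J : Submodule R R) := Submodule.smul_mono le_rfl inf_le_right h2
    have h4 : ∀ y ∈ a ^ t • (J : Submodule R R), ∀ hy : y ∈ J, φ ⟨y, hy⟩ = 0 := by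
      intro y hy
      induction hy using Submodule.smul_induction_on' with
      | smul r hr n hn =>
        intro hy
        have : (⟨r • n, hy⟩ : J) = r • ⟨n, hn⟩ := rfl
        rw [this, map_smul]
        exact congrArg Subtype.val (ht r hr ⟨φ ⟨n, hn⟩, ⟨_, rfl⟩⟩)
      | add x hx y hy h5 h6 =>
        intro hxy
        have hxJ : x ∈ J := Submodule.smul_le_right hx
        have hyJ : y ∈ J := Submodule.smul_le_right hy
        have : (⟨x + y, hxy⟩ : J) = ⟨x, hxJ⟩ + ⟨y, hyJ⟩ := rfl
        rw [this, map_add, h5, h6, add_zero]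
    exact h4 _ h3 j.2
  let q : J →ₗ[R] (R ⧸ a ^ s) := (a ^ s).mkQ ∘ₗ J.subtype
  let f : (J ⧸ LinearMap.ker q) →ₗ[R] (R ⧸ a ^ s) := Submodule.liftQ _ q le_rfl
  have hf : Function.Injective f := LinearMap.ker_eq_bot.1 (Submodule.ker_liftQ_eq_bot _ _ _ le_rfl)
  let g : (J ⧸ LinearMap.ker q) →ₗ[R] X := Submodule.liftQ _ ((Gam a X).subtype ∘ₗ φ) (by
    intro j hj
    have h2 : j.1 ∈ a ^ s := (Submodule.Quotient.mk_eq_zero _).1 hj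
    rw [LinearMap.mem_ker, LinearMap.comp_apply, hker j h2, map_zero])
  obtain ⟨h, hh⟩ := Module.Injective.out f hf g
  let y : X := h (Submodule.Quotient.mk 1)
  have hy : y ∈ Gam a X := ⟨s, fun r hr => by
    change r • h _ = 0
    rw [← map_smul, ← Submodule.Quotient.mk_smul, smul_eq_mul, mul_one,
      (Submodule.Quotient.mk_eq_zero _).2 hr, map_zero]⟩
  refine ⟨LinearMap.toSpanSingleton R (Gam a X) ⟨y, hy⟩, ?_⟩
  intro x hx
  apply Subtype.ext
  change x • y = (φ ⟨x, hx⟩ : X)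
  have h5 := hh (Submodule.Quotient.mk ⟨x, hx⟩)
  have h6 : g (Submodule.Quotient.mk ⟨x, hx⟩) = (φ ⟨x, hx⟩ : X) := rfl
  rw [← h6, ← h5]
  change x • h _ = _
  rw [← map_smul, ← Submodule.Quotient.mk_smul, smul_eq_mul, mul_one]
  rfl

lemma quot_Gam_injective [hX : Module.Injective R X] : Module.Injective R (X ⧸ Gam a X) := by
  have hG : Module.Injective R (Gam a X) := Gam_injective
  obtain ⟨ρ, hρ⟩ := hG.out (Gam a X).subtype (Submodule.subtype_injective _) LinearMap.id
  let σ : (X ⧸ Gam a X) →ₗ[R] X := Submodule.liftQ _ (LinearMap.id - (Gam a X).subtype ∘ₗ ρ) (by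
    intro x hx
    have := hρ ⟨x, hx⟩
    change x - (ρ x : X) = 0
    rw [show ρ x = ⟨x, hx⟩ from this, sub_self])
  have hσ : ∀ z, (Gam a X).mkQ (σ z) = z := by
    intro z
    obtain ⟨x, rfl⟩ := Submodule.mkQ_surjective _ z
    change (Gam a X).mkQ (x - (ρ x : X)) = _
    rw [map_sub, sub_eq_self]
    exact (Submodule.Quotient.mk_eq_zero _).2 (ρ x).2
  constructor
  intro A B _ _ _ _ f hf g
  obtain ⟨h, hh⟩ := hX.out f hf (σ ∘ₗ g)
  refine ⟨(Gam a X).mkQ ∘ₗ h, fun x => ?_⟩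
  rw [LinearMap.comp_apply, hh, LinearMap.comp_apply, hσ]

/-- enough injectives -/
lemma exists_inj (X : Type u) [AddCommGroup X] [Module R X] : ∃ (I : Type u) (_ : AddCommGroup I) (_ : Module R I)
    (j : X →ₗ[R] I), Module.Injective R I ∧ Function.Injective j := by
  let I : ModuleCat.{u} R := CategoryTheory.Injective.under (ModuleCat.of R X)
  let j : ModuleCat.of R X ⟶ I := CategoryTheory.Injective.ι (ModuleCat.of R X)
  have hI : CategoryTheory.Injective (ModuleCat.of R I) :=
    (inferInstance : CategoryTheory.Injective (CategoryTheory.Injective.under (ModuleCat.of R X)))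
  have hj : Mono j := (inferInstance : Mono (CategoryTheory.Injective.ι (ModuleCat.of R X)))
  refine ⟨I, inferInstance, inferInstance, j.hom, ?_, ?_⟩
  · exact Module.injective_module_of_injective_object R I
  · exact (ModuleCat.mono_iff_injective j).1 hj

lemma EX.zero_of_injective [Module.Injective R X] {N : Type u} [AddCommGroup N] [Module R N] (i : ℕ)
    (x : EX R N X (i+1)) : x = 0 := by
  have : Injective (ModuleCat.of R X) := Module.injective_object_of_injective_module R X
  exact Abelian.Ext.eq_zero_of_injective x

end Gam


section LCtwo
variable {R : Type u} [CommRing R]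

lemma EX.zeroEquiv_map {X Y N : Type u} [AddCommGroup X] [Module R X] [AddCommGroup Y] [Module R Y]
    [AddCommGroup N] [Module R N] (f : X →ₗ[R] Y) (x : EX R N X 0) :
    EX.zeroEquiv N (EX.map N f 0 x) = f ∘ₗ (EX.zeroEquiv N x) := by
  obtain ⟨h, rfl⟩ := (EX.zeroEquiv N).symm.surjective x
  rw [LinearEquiv.apply_symm_apply, ← LinearEquiv.eq_symm_apply, EX.map_apply]
  change (Abelian.Ext.mk₀ (ModuleCat.ofHom h)).comp (Abelian.Ext.mk₀ (ModuleCat.ofHom f)) _ =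
    Abelian.Ext.mk₀ (ModuleCat.ofHom (f ∘ₗ h))
  rw [Abelian.Ext.mk₀_comp_mk₀]
  rfl

/-- evaluation at one -/
noncomputable def ev (a : Ideal R) (X : Type u) [AddCommGroup X] [Module R X] (t : ℕ) :
    LCsys a 0 X t →ₗ[R] X :=
  LinearMap.applyₗ (Submodule.Quotient.mk (1 : R) : R ⧸ a ^ t) ∘ₗ (EX.zeroEquiv (R := R) (X := X) (R ⧸ a ^ t)).toLinearMap

lemma ev_apply (a : Ideal R) (X : Type u) [AddCommGroup X] [Module R X] (t : ℕ) (x : LCsys a 0 X t) :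
    ev a X t x = EX.zeroEquiv (R ⧸ a ^ t) x (Submodule.Quotient.mk (1 : R)) := rfl

lemma ev_res (a : Ideal R) (X : Type u) [AddCommGroup X] [Module R X] (t t' : ℕ) (h : t ≤ t')
    (x : LCsys a 0 X t) : ev a X t' (LCres a 0 X t t' h x) = ev a X t x := by
  rw [ev_apply, ev_apply, EX.zeroEquiv_pre]
  rfl

lemma hom_quot_ext {I : Ideal R} {X : Type u} [AddCommGroup X] [Module R X] {f g : (R ⧸ I) →ₗ[R] X}
    (h : f (Submodule.Quotient.mk (1 : R)) = g (Submodule.Quotient.mk (1 : R))) : f = g := by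
  ext
  exact h

lemma ev_inj (a : Ideal R) (X : Type u) [AddCommGroup X] [Module R X] (t : ℕ) :
    Function.Injective (ev a X t) := by
  intro x y h
  apply (EX.zeroEquiv (R := R) (X := X) (R ⧸ a ^ t)).injective
  exact hom_quot_ext h

lemma ev_smul (a : Ideal R) (X : Type u) [AddCommGroup X] [Module R X] (t : ℕ) (x : LCsys a 0 X t)
    (r : R) (hr : r ∈ a ^ t) : r • ev a X t x = 0 := by
  rw [← map_smul, EX.smul_eq_zero (R := R) _ (quot_smul hr), map_zero]

lemma ev_lift (a : Ideal R) {X : Type u} [AddCommGroup X] [Module R X] (t : ℕ) (x : X)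
    (h : ∀ r ∈ a ^ t, r • x = 0) : ∃ ξ : LCsys a 0 X t, ev a X t ξ = x := by
  let φ : (R ⧸ a ^ t) →ₗ[R] X := Submodule.liftQ _ (LinearMap.toSpanSingleton R X x) (fun r hr => h r hr)
  refine ⟨(EX.zeroEquiv (R ⧸ a ^ t)).symm φ, ?_⟩
  rw [ev_apply, LinearEquiv.apply_symm_apply]
  exact one_smul R x

lemma ev_map (a : Ideal R) {X Y : Type u} [AddCommGroup X] [Module R X] [AddCommGroup Y] [Module R Y]
    (f : X →ₗ[R] Y) (t : ℕ) (x : LCsys a 0 X t) :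
    ev a Y t (EX.map (R ⧸ a ^ t) f 0 x) = f (ev a X t x) := by
  rw [ev_apply, EX.zeroEquiv_map]
  rfl

lemma LC0_equiv (a : Ideal R) (X : Type u) [AddCommGroup X] [Module R X] :
    Nonempty (LC a 0 X ≃ₗ[R] Gam a X) := by
  let φ : LC a 0 X →ₗ[R] Gam a X := Module.DirectLimit.lift R ℕ _ _
    (fun t => (ev a X t).codRestrict (Gam a X) (fun x => ⟨t, ev_smul a X t x⟩))
    (fun t t' h x => Subtype.ext (ev_res a X t t' h x))
  have hφ : ∀ t x, (φ (Module.DirectLimit.of R ℕ _ _ t x)).1 = ev a X t x :=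
    fun t x => congrArg Subtype.val (Module.DirectLimit.lift_of _ _ _)
  refine ⟨LinearEquiv.ofBijective φ ⟨?_, ?_⟩⟩
  · rw [injective_iff_map_eq_zero]
    intro z hz
    obtain ⟨t, x, rfl⟩ := Module.DirectLimit.exists_of z
    have h1 := hφ t x
    rw [hz] at h1
    have h2 : x = 0 := ev_inj a X t (by rw [← h1, map_zero]; rfl)
    rw [h2, map_zero]
  · rintro ⟨x, t, ht⟩
    obtain ⟨ξ, hξ⟩ := ev_lift a t x ht
    exact ⟨Module.DirectLimit.of R ℕ _ _ t ξ, Subtype.ext (by rw [hφ, hξ])⟩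

variable [IsNoetherianRing R]

lemma tors_embed {a : Ideal R} {T : Type u} [AddCommGroup T] [Module R T] (hT : Tors a T) :
    ∃ (I : Type u) (_ : AddCommGroup I) (_ : Module R I) (f : T →ₗ[R] I),
      Module.Injective R I ∧ Tors a I ∧ Function.Injective f := by
  obtain ⟨J, _, _, j, hJ, hj⟩ := exists_inj (R := R) T
  refine ⟨Gam a J, inferInstance, inferInstance, j.codRestrict (Gam a J) (fun x => ?_), Gam_injective, Gam_tors, ?_⟩
  · obtain ⟨n, hn⟩ := hT.exists_pow x
    exact ⟨n, fun r hr => by rw [← map_smul, hn r hr, map_zero]⟩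
  · intro x y h
    exact hj (congrArg Subtype.val h)

lemma range_exact {T I : Type u} [AddCommGroup T] [Module R T] [AddCommGroup I] [Module R I] (f : T →ₗ[R] I) :
    Function.Exact f (LinearMap.range f).mkQ := by
  rw [LinearMap.exact_iff, Submodule.ker_mkQ]

lemma tors_dies {a : Ideal R} (n : ℕ) : ∀ {T : Type u} [AddCommGroup T] [Module R T] (_ : Tors a T) (t : ℕ)
    (ξ : EX R (R ⧸ a ^ t) T (n+1)), ∃ (t' : ℕ) (h : t ≤ t'), EX.pre T (qmap a h) (n+1) ξ = 0 := by
  induction n with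
  | zero =>
    intro T _ _ hT t ξ
    obtain ⟨I, _, _, f, hI, hIt, hf⟩ := tors_embed hT
    have hg := Submodule.mkQ_surjective (LinearMap.range f)
    obtain ⟨η, rfl⟩ := (EX.exact₁ (R := R) (R ⧸ a ^ t) hf hg (range_exact f) 0 ξ).1
      (EX.zero_of_injective 0 _)
    obtain ⟨y, hy⟩ := hg (ev a _ t η)
    obtain ⟨m, hm⟩ := hIt.exists_pow y
    refine ⟨t + m, Nat.le_add_right _ _, ?_⟩
    obtain ⟨ζ, hζ⟩ := ev_lift a (t + m) y
      (fun r hr => hm r (Ideal.pow_le_pow_right (Nat.le_add_left _ _) hr))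
    rw [EX.pre_δ]
    have h1 : EX.pre _ (qmap a (Nat.le_add_right t m)) 0 η = EX.map _ (LinearMap.range f).mkQ 0 ζ := by
      apply ev_inj a _ (t + m)
      rw [ev_map, hζ, hy]
      exact ev_res a _ t (t+m) _ η
    rw [h1]
    exact (EX.exact₃ (R := R) _ hf hg (range_exact f) 0).apply_apply_eq_zero ζ
  | succ n ih =>
    intro T _ _ hT t ξ
    obtain ⟨I, _, _, f, hI, hIt, hf⟩ := tors_embed hT
    have hg := Submodule.mkQ_surjective (LinearMap.range f)
    obtain ⟨η, rfl⟩ := (EX.exact₁ (R := R) (R ⧸ a ^ t) hf hg (range_exact f) (n+1) ξ).1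
      (EX.zero_of_injective (n+1) _)
    obtain ⟨t', h, h1⟩ := ih (hIt.surj hg) t η
    refine ⟨t', h, ?_⟩
    rw [EX.pre_δ, h1, map_zero]

lemma LC_quot (a : Ideal R) (n : ℕ) (D : Type u) [AddCommGroup D] [Module R D] :
    Nonempty (LC a (n+1) D ≃ₗ[R] LC a (n+1) (D ⧸ Gam a D)) := by
  have hf := Submodule.subtype_injective (Gam a D)
  have hg := Submodule.mkQ_surjective (Gam a D)
  have hfg := sub_exact (Gam a D)
  refine dl_equiv _ _ (fun t => EX.map (R ⧸ a ^ t) (Gam a D).mkQ (n+1)) ?_ ?_ ?_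
  · intro t t' h x
    exact (EX.pre_map _ _ _ _).symm
  · intro t x hx
    obtain ⟨y, rfl⟩ := (EX.exact₂ (R := R) _ hf hg hfg (n+1) x).1 hx
    obtain ⟨t', h, h1⟩ := tors_dies n Gam_tors t y
    refine ⟨t', h, ?_⟩
    change EX.pre _ _ _ _ = _
    rw [EX.pre_map, h1, map_zero]
  · intro t y
    obtain ⟨t', h, h1⟩ := tors_dies (n+1) Gam_tors t (EX.δ (R := R) _ hf hg hfg (n+1) y)
    rw [EX.pre_δ] at h1
    obtain ⟨x, hx⟩ := (EX.exact₃ (R := R) _ hf hg hfg (n+1) _).1 h1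
    exact ⟨t', h, x, hx⟩

/-- no `a`-torsion -/
def TF (a : Ideal R) (X : Type u) [AddCommGroup X] [Module R X] : Prop :=
  ∀ x : X, (∃ t : ℕ, ∀ r ∈ a ^ t, r • x = 0) → x = 0

lemma TF.embed {a : Ideal R} {X : Type u} [AddCommGroup X] [Module R X] (hX : TF a X) :
    ∃ (I : Type u) (_ : AddCommGroup I) (_ : Module R I) (f : X →ₗ[R] I),
      Module.Injective R I ∧ TF a I ∧ Function.Injective f := by
  obtain ⟨J, _, _, j, hJ, hj⟩ := exists_inj (R := R) X
  refine ⟨J ⧸ Gam a J, inferInstance, inferInstance, (Gam a J).mkQ ∘ₗ j, quot_Gam_injective, Gam_quot, ?_⟩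
  rw [injective_iff_map_eq_zero]
  intro x hx
  obtain ⟨t, ht⟩ := (Submodule.Quotient.mk_eq_zero _).1 hx
  exact hX x ⟨t, fun r hr => hj (by rw [map_smul, ht r hr, map_zero])⟩

lemma TF.ex0 {a : Ideal R} {X : Type u} [AddCommGroup X] [Module R X] (hX : TF a X) (t : ℕ)
    (x : EX R (R ⧸ a ^ t) X 0) : x = 0 := by
  apply ev_inj a X t
  rw [map_zero]
  exact hX _ ⟨t, ev_smul a X t x⟩

lemma TF.exI {a : Ideal R} {X : Type u} [AddCommGroup X] [Module R X] [Module.Injective R X] (hX : TF a X) (t n : ℕ)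
    (x : EX R (R ⧸ a ^ t) X n) : x = 0 := by
  cases n with
  | zero => exact hX.ex0 t x
  | succ n => exact EX.zero_of_injective n x

/-- dimension shift -/
lemma shift (a : Ideal R) (D : Type u) [AddCommGroup D] [Module R D] :
    ∃ (D' : Type u) (_ : AddCommGroup D') (_ : Module R D'),
      (∀ n, Nonempty (LC a n D' ≃ₗ[R] LC a (n+1) D)) ∧
      (∀ t n, Nonempty (EX R (R ⧸ a ^ t) D' n ≃ₗ[R] EX R (R ⧸ a ^ t) (D ⧸ Gam a D) (n+1))) := by
  have hD : TF a (D ⧸ Gam a D) := Gam_quot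
  obtain ⟨I, _, _, f, hI, hIt, hf⟩ := hD.embed
  have hg := Submodule.mkQ_surjective (LinearMap.range f)
  have hfg := range_exact f
  have hδi : ∀ t n, Function.Injective (EX.δ (R := R) (R ⧸ a ^ t) hf hg hfg n) := by
    intro t n
    rw [injective_iff_map_eq_zero]
    intro x hx
    obtain ⟨y, rfl⟩ := (EX.exact₃ (R := R) (R ⧸ a ^ t) hf hg hfg n x).1 hx
    rw [hIt.exI t n y, map_zero]
  have hδs : ∀ t n, Function.Surjective (EX.δ (R := R) (R ⧸ a ^ t) hf hg hfg n) := by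
    intro t n x
    exact (EX.exact₁ (R := R) (R ⧸ a ^ t) hf hg hfg n x).1 (hIt.exI t (n+1) _)
  refine ⟨I ⧸ LinearMap.range f, inferInstance, inferInstance, fun n => ?_, fun t n =>
    ⟨LinearEquiv.ofBijective _ ⟨hδi t n, hδs t n⟩⟩⟩
  obtain ⟨e1⟩ := LC_quot a n D
  have h2 : Nonempty (LC a n (I ⧸ LinearMap.range f) ≃ₗ[R] LC a (n+1) (D ⧸ Gam a D)) := by
    refine dl_equiv _ _ (fun t => EX.δ (R := R) (R ⧸ a ^ t) hf hg hfg n) ?_ ?_ ?_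
    · intro t t' h x
      exact (EX.pre_δ hf hg hfg _ n x).symm
    · intro t x hx
      exact ⟨t, le_rfl, by rw [hδi t n (hx.trans (map_zero _).symm), map_zero]⟩
    · intro t y
      obtain ⟨x, hx⟩ := hδs t n (LCres a (n+1) (D ⧸ Gam a D) t t le_rfl y)
      exact ⟨t, le_rfl, x, hx⟩
  obtain ⟨e2⟩ := h2
  exact ⟨e2.trans e1.symm⟩
end LCtwo


section fin
variable {R : Type u} [CommRing R] [IsNoetherianRing R]

lemma fin_congr {a : Ideal R} {X Y : Type u} [AddCommGroup X] [Module R X] [AddCommGroup Y] [Module R Y]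
    (e : X ≃ₗ[R] Y) {n : ℕ} (h : Module.Finite R (EX R (R ⧸ a) X n)) : Module.Finite R (EX R (R ⧸ a) Y n) :=
  Module.Finite.equiv (EX.congr (R := R) (R ⧸ a) e n)

lemma shift' (a : Ideal R) (D : Type u) [AddCommGroup D] [Module R D] :
    ∃ (D' : Type u) (_ : AddCommGroup D') (_ : Module R D'),
      (∀ n, Nonempty (LC a n D' ≃ₗ[R] LC a (n+1) D)) ∧
      (∀ n, Nonempty (EX R (R ⧸ a) D' n ≃ₗ[R] EX R (R ⧸ a) (D ⧸ Gam a D) (n+1))) := by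
  obtain ⟨D', i1, i2, h1, h2⟩ := shift a D
  refine ⟨D', i1, i2, h1, ?_⟩
  have h3 := h2 1
  rwa [pow_one] at h3

lemma ex0_Gam {a : Ideal R} {D : Type u} [AddCommGroup D] [Module R D]
    (h : Module.Finite R (EX R (R ⧸ a) (Gam a D) 0)) : Module.Finite R (EX R (R ⧸ a) D 0) := by
  have h1 : Module.Finite R (K0 a (Gam a D)) := Module.Finite.equiv (ex0 a (Gam a D))
  have h2 : Module.Finite R (K0 a D) := by
    refine Module.Finite.of_surjective (((Gam a D).subtype ∘ₗ (K0 a (Gam a D)).subtype).codRestrict (K0 a D) ?_) ?_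
    · intro x
      rw [mem_K0]
      intro r hr
      exact congrArg Subtype.val (mem_K0.1 x.2 r hr)
    · intro x
      have hx := mem_K0.1 x.2
      exact ⟨⟨⟨x.1, 1, by simpa using hx⟩, mem_K0.2 fun r hr => Subtype.ext (hx r hr)⟩, rfl⟩
  exact Module.Finite.equiv (ex0 a D).symm

lemma ex0_TF {a : Ideal R} {X : Type u} [AddCommGroup X] [Module R X] (hX : TF a X)
    (x : EX R (R ⧸ a) X 0) : x = 0 := by
  apply (ex0 a X).injective
  rw [map_zero]
  apply Subtype.ext
  exact hX _ ⟨1, by simpa using mem_K0.1 (ex0 a X x).2⟩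

lemma Gam_fin {a : Ideal R} (ha : D2 a) {D : Type u} [AddCommGroup D] [Module R D]
    (hD : ∀ n, Module.Finite R (EX R (R ⧸ a) D n))
    (h1 : Module.Finite R (EX R (R ⧸ a) (LC a 1 D) 0)) (n : ℕ) : Module.Finite R (EX R (R ⧸ a) (Gam a D) n) := by
  have hf := Submodule.subtype_injective (Gam a D)
  have hg := Submodule.mkQ_surjective (Gam a D)
  have hfg := sub_exact (Gam a D)
  obtain ⟨D', _, _, e1, e2⟩ := shift' a D
  have hTF : TF a (D ⧸ Gam a D) := Gam_quot
  refine C2_thm ha Gam_tors ?_ ?_ ?_ n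
  · exact finite_inj (hD 0) (EX.map_zero_injective (R := R) (R ⧸ a) hf)
  · refine finite_inj (hD 1) (φ := EX.map (R ⧸ a) (Gam a D).subtype 1) ?_
    rw [injective_iff_map_eq_zero]
    intro x hx
    obtain ⟨y, rfl⟩ := (EX.exact₁ (R := R) (R ⧸ a) hf hg hfg 0 x).1 hx
    rw [ex0_TF hTF y, map_zero]
  · obtain ⟨e⟩ := e1 0
    obtain ⟨e'⟩ := LC0_equiv a D'
    obtain ⟨e''⟩ := e2 0
    have h2 : Module.Finite R (EX R (R ⧸ a) D' 0) := ex0_Gam (fin_congr (e.symm.trans e') h1)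
    have h3 : Module.Finite R (EX R (R ⧸ a) (D ⧸ Gam a D) 1) := Module.Finite.equiv e''
    exact finite_mid (EX.exact₁ (R := R) (R ⧸ a) hf hg hfg 1) h3 (hD 2)

lemma LC_fin {a : Ideal R} (ha : D2 a) (k : ℕ) : ∀ {D : Type u} [AddCommGroup D] [Module R D]
    (_ : ∀ n, Module.Finite R (EX R (R ⧸ a) D n))
    (_ : ∀ i, Module.Finite R (EX R (R ⧸ a) (LC a i D) 0)) (n : ℕ),
    Module.Finite R (EX R (R ⧸ a) (LC a k D) n) := by
  induction k with
  | zero =>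
    intro D _ _ hD hL n
    obtain ⟨e⟩ := LC0_equiv a D
    exact fin_congr e.symm (Gam_fin ha hD (hL 1) n)
  | succ k ih =>
    intro D _ _ hD hL n
    have hG := Gam_fin ha hD (hL 1)
    obtain ⟨D', _, _, e1, e2⟩ := shift' a D
    have hf := Submodule.subtype_injective (Gam a D)
    have hg := Submodule.mkQ_surjective (Gam a D)
    have hfg := sub_exact (Gam a D)
    have hq : ∀ n, Module.Finite R (EX R (R ⧸ a) (D ⧸ Gam a D) n) := fun n =>
      finite_mid (EX.exact₃ (R := R) (R ⧸ a) hf hg hfg n) (hD n) (hG (n+1))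
    refine fin_congr (e1 k).some (ih (D := D') ?_ ?_ n)
    · intro m
      have := hq (m+1)
      exact Module.Finite.equiv (e2 m).some.symm
    · intro i
      exact fin_congr (e1 i).some.symm (hL (i+1))

lemma LC_pow {a : Ideal R} {i : ℕ} {X : Type u} [AddCommGroup X] [Module R X] (z : LC a i X) :
    ∃ t : ℕ, ∀ r ∈ a ^ t, r • z = 0 := by
  obtain ⟨t, x, rfl⟩ := Module.DirectLimit.exists_of z
  refine ⟨t, fun r hr => ?_⟩
  rw [← map_smul, EX.smul_eq_zero (R := R) _ (quot_smul hr), map_zero]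

lemma supp_of_pow {a : Ideal R} {X : Type u} [AddCommGroup X] [Module R X]
    (h : ∀ x : X, ∃ t : ℕ, ∀ r ∈ a ^ t, r • x = 0) :
    Module.support R X ⊆ PrimeSpectrum.zeroLocus (a : Set R) := by
  intro p hp
  rw [Module.mem_support_iff'] at hp
  obtain ⟨m, hm⟩ := hp
  obtain ⟨t, ht⟩ := h m
  rw [PrimeSpectrum.mem_zeroLocus]
  intro r hr
  by_contra hrp
  exact hm (r ^ t) (fun h => hrp (p.2.mem_of_pow_mem t h)) (ht _ (Ideal.pow_mem_pow hr t))
end fin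


theorem stmt2 {R : Type u} [CommRing R] [IsNoetherianRing R] (a : Ideal R) (ha : a ≠ ⊤)
    (hdim : ringKrullDim (R ⧸ a) = 2) (M : ModuleCat.{u} R) (hfg : Module.Finite R M) :
    (∀ i : ℕ, IsCofinite a ((localCohomology a i).obj M)) ↔
      (∀ i : ℕ, Module.Finite R (extQuot a 0 ((localCohomology a i).obj M))) := by
  constructor
  · intro h i
    exact (h i).2 0
  · intro h i
    have hL : ∀ j, Module.Finite R (EX R (R ⧸ a) (LC a j M) 0) := fun j => by
      have h1 : Module.Finite R (((Ext R (ModuleCat.{u} R) 0).obj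
        (Opposite.op (ModuleCat.of R (R ⧸ a)))).obj ((localCohomology a j).obj M)) := h j
      have h2 : Module.Finite R (EX R (R ⧸ a) ((localCohomology a j).obj M) 0) :=
        Module.Finite.equiv (Bridge.equiv (ModuleCat.of R (R ⧸ a)) ((localCohomology a j).obj M) 0)
      exact fin_congr (lc_equiv a j M).some.symm h2
    obtain ⟨e⟩ := lc_equiv a i M
    refine ⟨supp_of_pow fun x => ?_, fun n => ?_⟩
    · obtain ⟨t, ht⟩ := LC_pow (e.symm x)
      exact ⟨t, fun r hr => e.symm.injective (by rw [map_smul, ht r hr, map_zero])⟩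
    · have h3 : Module.Finite R (EX R (R ⧸ a) (LC a i M) n) :=
        LC_fin (D2_of_krullDim hdim) i (fun m => EX.finite (R ⧸ a) m) hL n
      have h4 : Module.Finite R (EX R (R ⧸ a) ((localCohomology a i).obj M) n) := fin_congr e h3
      exact Module.Finite.equiv
        (Bridge.equiv (ModuleCat.of R (R ⧸ a)) ((localCohomology a i).obj M) n).symm
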